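/- Lemma 2.3 (Angenent-type zero number lemma): Let v be a classical (smooth) solution, not identically zero, of the one-dimensional parabolic equation v_t = a(x,t) v_xx + b(x,t) v_x + c(x,t) v on [α,β] × (t0,t1), where a, b, c are smooth and bounded, a(x,t) ≥ λ for some constant λ > 0, and the boundary condition holds: at each endpoint x ∈ {α, β}, either v(x,t) = 0 for all t ∈ (t0,t1) or v(x,t) ≠ 0 for all t ∈ (t0,t1). Then Z(v(·,t)) := #{x ∈ [α,β] : v(x,t) = 0} is finite and monotone non-increasing in t on (t0,t1). Moreover, if v(x0,t*) = 0 and ∂_x v(x0,t*) = 0 at some interior point x0 ∈ (α,β) and t* ∈ (t0,t1), then Z(v(·,t)) < Z(v(·,s)) for all t0 < s < t* < t < t1. -/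

import Mathlib

open Set Filter


namespace ZN

/-- directional derivative within a set -/
noncomputable def dd (Q : Set (ℝ × ℝ)) (e : ℝ × ℝ) (f : ℝ × ℝ → ℝ) : ℝ × ℝ → ℝ :=
  fun p => fderivWithin ℝ f Q p e

noncomputable abbrev dX (Q : Set (ℝ × ℝ)) := dd Q (1, 0)
noncomputable abbrev dT (Q : Set (ℝ × ℝ)) := dd Q (0, 1)

abbrev Sm (Q : Set (ℝ × ℝ)) (f : ℝ × ℝ → ℝ) : Prop := ContDiffOn ℝ (⊤ : ℕ∞) f Q

/-- good sets -/
structure Good (Q : Set (ℝ × ℝ)) : Prop where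
  u : UniqueDiffOn ℝ Q
  i : Q ⊆ closure (interior Q)

variable {Q : Set (ℝ × ℝ)} {p e e₁ e₂ : ℝ × ℝ} {f g u v w : ℝ × ℝ → ℝ}

theorem Sm.dd (hQ : Good Q) (hf : Sm Q f) : Sm Q (dd Q e f) := by
  have h := hf.fderivWithin (m := ((⊤ : ℕ∞) : WithTop ℕ∞)) hQ.u (by exact le_refl _)
  exact h.clm_apply contDiffOn_const

theorem Sm.diff (hf : Sm Q f) (hp : p ∈ Q) : DifferentiableWithinAt ℝ f Q p :=
  (hf.differentiableOn (by simp)) p hp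

theorem Sm.iter (hQ : Good Q) (hf : Sm Q f) (n : ℕ) : Sm Q ((ZN.dd Q e)^[n] f) := by
  induction n generalizing f with
  | zero => exact hf
  | succ n ih => exact ih (hf.dd hQ)

theorem dd_congr (h : EqOn f g Q) : EqOn (dd Q e f) (dd Q e g) Q := by
  intro p hp
  simp only [dd, fderivWithin_congr h (h hp)]

theorem dd_add (hQ : Good Q) (hf : Sm Q f) (hg : Sm Q g) :
    EqOn (dd Q e (f + g)) (dd Q e f + dd Q e g) Q := by
  intro p hp
  simp only [dd, fderivWithin_add (hQ.u p hp) (hf.diff hp) (hg.diff hp), Pi.add_apply,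
    _root_.add_apply]

theorem dd_mul (hQ : Good Q) (hf : Sm Q f) (hg : Sm Q g) :
    EqOn (dd Q e (f * g)) (f * dd Q e g + dd Q e f * g) Q := by
  intro p hp
  simp only [dd, fderivWithin_mul (hQ.u p hp) (hf.diff hp) (hg.diff hp), Pi.add_apply, Pi.mul_apply]
  simp [mul_comm]

theorem dd_comm (hQ : Good Q) (hf : Sm Q f) :
    EqOn (dd Q e₁ (dd Q e₂ f)) (dd Q e₂ (dd Q e₁ f)) Q := by
  intro p hp
  have hs := (hf p hp).isSymmSndFDerivWithinAt
    (by rw [minSmoothness_of_isRCLikeNormedField]; exact WithTop.coe_le_coe.2 le_top) hQ.u (hQ.i hp) hp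
  have hd : DifferentiableWithinAt ℝ (fderivWithin ℝ f Q) Q p :=
    ((hf.fderivWithin (m := ((⊤ : ℕ∞) : WithTop ℕ∞)) hQ.u (by exact le_refl _)).differentiableOn
      (by simp)) p hp
  have key : ∀ e e' : ℝ × ℝ, dd Q e (dd Q e' f) p = fderivWithin ℝ (fderivWithin ℝ f Q) Q p e e' := by
    intro e e'
    have := fderivWithin_clm_apply (u := fun _ => e') (hQ.u p hp) hd (differentiableWithinAt_const _)
    show fderivWithin ℝ (fun y => (fderivWithin ℝ f Q y) e') Q p e = _
    rw [this]
    simp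
  rw [key, key]
  exact hs e₁ e₂

theorem dd_iter_congr (h : EqOn f g Q) (n : ℕ) : EqOn ((dd Q e)^[n] f) ((dd Q e)^[n] g) Q := by
  induction n generalizing f g with
  | zero => exact h
  | succ n ih => exact ih (dd_congr h)

theorem dd_iter_add (hQ : Good Q) (hf : Sm Q f) (hg : Sm Q g) (n : ℕ) :
    EqOn ((dd Q e)^[n] (f + g)) ((dd Q e)^[n] f + (dd Q e)^[n] g) Q := by
  induction n generalizing f g with
  | zero => intro p hp; rfl
  | succ n ih =>
    exact (dd_iter_congr (dd_add hQ hf hg) n).trans (ih (hf.dd hQ) (hg.dd hQ))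

theorem dd_const (c : ℝ) : EqOn (dd Q e (fun _ => c)) (fun _ => 0) Q := by
  intro p hp
  simp [dd]

theorem dd_cmul (hQ : Good Q) (c : ℝ) (hf : Sm Q f) :
    EqOn (dd Q e ((fun _ => c) * f)) ((fun _ => c) * dd Q e f) Q := by
  intro p hp
  rw [dd_mul hQ contDiffOn_const hf hp]
  simp [dd]

theorem dd_iter_cmul (hQ : Good Q) (c : ℝ) (hf : Sm Q f) (n : ℕ) :
    EqOn ((dd Q e)^[n] ((fun _ => c) * f)) ((fun _ => c) * (dd Q e)^[n] f) Q := by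
  induction n generalizing f with
  | zero => intro p hp; rfl
  | succ n ih =>
    exact (dd_iter_congr (dd_cmul hQ c hf) n).trans (ih (hf.dd hQ))

/-- parabolic order of vanishing at least m -/
def Ord (Q : Set (ℝ × ℝ)) (p : ℝ × ℝ) : ℕ → (ℝ × ℝ → ℝ) → Prop
  | 0, _ => True
  | 1, f => f p = 0
  | (m + 2), f => f p = 0 ∧ Ord Q p (m + 1) (dX Q f) ∧ Ord Q p m (dT Q f)

theorem Ord.val {m : ℕ} (h : Ord Q p (m + 1) f) : f p = 0 := by
  cases m with
  | zero => exact h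
  | succ m => exact h.1

theorem Ord.dx {m : ℕ} (h : Ord Q p (m + 1) f) : Ord Q p m (dX Q f) := by
  cases m with
  | zero => trivial
  | succ m => exact h.2.1

theorem Ord.dt {m : ℕ} (h : Ord Q p (m + 2) f) : Ord Q p m (dT Q f) := h.2.2

theorem Ord.congr (hp : p ∈ Q) {m : ℕ} (h : EqOn f g Q) (hf : Ord Q p m f) : Ord Q p m g := by
  induction m using Nat.strong_induction_on generalizing f g with
  | _ m ih =>
    match m, hf with
    | 0, _ => trivial
    | 1, hf => exact (h hp).symm.trans hf
    | (m + 2), hf =>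
      exact ⟨(h hp).symm.trans hf.1, ih (m + 1) (by omega) (dd_congr h) hf.2.1,
        ih m (by omega) (dd_congr h) hf.2.2⟩

theorem Ord.add (hQ : Good Q) (hp : p ∈ Q) {m : ℕ} (sf : Sm Q f) (sg : Sm Q g)
    (hf : Ord Q p m f) (hg : Ord Q p m g) : Ord Q p m (f + g) := by
  induction m using Nat.strong_induction_on generalizing f g with
  | _ m ih =>
    match m, hf, hg with
    | 0, _, _ => trivial
    | 1, hf, hg => 
      have hf : f p = 0 := hf
      have hg : g p = 0 := hg
      show f p + g p = 0
      rw [hf, hg, add_zero]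
    | (m + 2), hf, hg =>
      refine ⟨by simp [hf.1, hg.1], ?_, ?_⟩
      · exact (ih (m + 1) (by omega) (sf.dd hQ) (sg.dd hQ) hf.2.1 hg.2.1).congr hp
          (dd_add hQ sf sg).symm
      · exact (ih m (by omega) (sf.dd hQ) (sg.dd hQ) hf.2.2 hg.2.2).congr hp
          (dd_add hQ sf sg).symm

theorem Ord.mono {m : ℕ} (hf : Ord Q p (m + 1) f) : Ord Q p m f := by
  induction m using Nat.strong_induction_on generalizing f with
  | _ m ih =>
    match m, hf with
    | 0, _ => trivial
    | 1, hf => exact hf.1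
    | (m + 2), hf =>
      exact ⟨hf.1, ih (m + 1) (by omega) hf.2.1, ih m (by omega) hf.2.2⟩

theorem Ord.pred {m : ℕ} (hf : Ord Q p m f) : Ord Q p (m - 1) f := by
  cases m with
  | zero => trivial
  | succ m => exact hf.mono

theorem Ord.mul (hQ : Good Q) (hp : p ∈ Q) {m : ℕ} (sf : Sm Q f) (sg : Sm Q g)
    (hg : Ord Q p m g) : Ord Q p m (f * g) := by
  induction m using Nat.strong_induction_on generalizing f g with
  | _ m ih =>
    match m, hg with
    | 0, _ => trivial
    | 1, hg =>
      have hg : g p = 0 := hg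
      show f p * g p = 0
      rw [hg, mul_zero]
    | (m + 2), hg =>
      refine ⟨by simp [hg.1], ?_, ?_⟩
      · refine Ord.congr hp (dd_mul hQ sf sg).symm (Ord.add hQ hp (sf.mul (sg.dd hQ))
          ((sf.dd hQ).mul sg) ?_ ?_)
        · exact ih (m + 1) (by omega) sf (sg.dd hQ) hg.2.1
        · exact ih (m + 1) (by omega) (sf.dd hQ) sg hg.mono
      · refine Ord.congr hp (dd_mul hQ sf sg).symm (Ord.add hQ hp (sf.mul (sg.dd hQ))
          ((sf.dd hQ).mul sg) ?_ ?_)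
        · exact ih m (by omega) sf (sg.dd hQ) hg.2.2
        · exact ih m (by omega) (sf.dd hQ) sg hg.mono.mono

theorem Ord.mul_one (hQ : Good Q) (hp : p ∈ Q) {m : ℕ} (sf : Sm Q f) (sg : Sm Q g)
    (hf : f p = 0) (hg : Ord Q p m g) : Ord Q p (m + 1) (f * g) := by
  induction m using Nat.strong_induction_on generalizing f g with
  | _ m ih =>
    match m, hg with
    | 0, _ =>
      show f p * g p = 0
      rw [hf, zero_mul]
    | (m + 1), hg =>
      refine ⟨by simp [hf], ?_, ?_⟩
      · refine Ord.congr hp (dd_mul hQ sf sg).symm (Ord.add hQ hp (sf.mul (sg.dd hQ))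
          ((sf.dd hQ).mul sg) ?_ ?_)
        · exact ih m (by omega) sf (sg.dd hQ) hf hg.dx
        · exact Ord.mul hQ hp (sf.dd hQ) sg hg
      · refine Ord.congr hp (dd_mul hQ sf sg).symm (Ord.add hQ hp (sf.mul (sg.dd hQ))
          ((sf.dd hQ).mul sg) ?_ ?_)
        · match m, hg with
          | 0, _ => trivial
          | (m + 1), hg => exact ih m (by omega) sf (sg.dd hQ) hf hg.2.2
        · exact Ord.mul hQ hp (sf.dd hQ) sg hg.mono

/-- key lemma for the heat equation with a right hand side -/
theorem Ord.heat (hQ : Good Q) (hp : p ∈ Q) {m : ℕ} (a0 : ℝ) (su : Sm Q u) (sg : Sm Q g)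
    (hpde : EqOn (dT Q u) ((fun _ => a0) * dX Q (dX Q u) + g) Q)
    (hu : Ord Q p m u) (hg : Ord Q p (m - 1) g) (h0 : (dX Q)^[m] u p = 0) :
    Ord Q p (m + 1) u := by
  induction m generalizing u g with
  | zero => exact h0
  | succ m ih =>
    have hx : Ord Q p (m + 1) (dX Q u) := by
      refine ih (g := dX Q g) (su.dd hQ) (sg.dd hQ) ?_ hu.dx ?_ h0
      · refine (dd_comm hQ su).trans ((dd_congr hpde).trans ?_)
        refine (dd_add hQ (contDiffOn_const.mul ((su.dd hQ).dd hQ)) sg).trans ?_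
        intro q hq
        exact congrArg (· + dX Q g q) (dd_cmul hQ a0 ((su.dd hQ).dd hQ) hq)
      · simp only [Nat.add_sub_cancel] at hg
        cases m with
        | zero => trivial
        | succ m => exact hg.dx
    refine ⟨hu.val, hx, ?_⟩
    refine Ord.congr hp hpde.symm (Ord.add hQ hp (contDiffOn_const.mul ((su.dd hQ).dd hQ)) sg ?_ hg)
    exact Ord.mul hQ hp contDiffOn_const ((su.dd hQ).dd hQ) hx.dx

section pde
variable {a b c : ℝ × ℝ → ℝ}

/-- forcing term -/
noncomputable def rhs (Q : Set (ℝ × ℝ)) (a0 : ℝ) (a b c v : ℝ × ℝ → ℝ) : ℝ × ℝ → ℝ :=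
  (a + fun _ => -a0) * dX Q (dX Q v) + (b * dX Q v + c * v)

theorem rhs_sm (hQ : Good Q) (a0 : ℝ) (sa : Sm Q a) (sb : Sm Q b) (sc : Sm Q c) (sv : Sm Q v) :
    Sm Q (rhs Q a0 a b c v) :=
  ((sa.add contDiffOn_const).mul ((sv.dd hQ).dd hQ)).add ((sb.mul (sv.dd hQ)).add (sc.mul sv))

theorem rhs_ord (hQ : Good Q) (hp : p ∈ Q) {m : ℕ}
    (sa : Sm Q a) (sb : Sm Q b) (sc : Sm Q c) (sv : Sm Q v)
    (hv : Ord Q p m v) : Ord Q p (m - 1) (rhs Q (a p) a b c v) := by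
  refine Ord.add hQ hp ((sa.add contDiffOn_const).mul ((sv.dd hQ).dd hQ))
    ((sb.mul (sv.dd hQ)).add (sc.mul sv)) ?_
    (Ord.add hQ hp (sb.mul (sv.dd hQ)) (sc.mul sv) ?_ (Ord.mul hQ hp sc sv hv.pred))
  · match m, hv with
    | 0, _ => trivial
    | 1, _ => trivial
    | m + 2, hv =>
      exact Ord.mul_one hQ hp (sa.add contDiffOn_const) ((sv.dd hQ).dd hQ) (by simp) hv.dx.dx
  · match m, hv with
    | 0, _ => trivial
    | m + 1, hv => exact Ord.mul hQ hp sb (sv.dd hQ) hv.dx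

def PDE (Q : Set (ℝ × ℝ)) (a b c v : ℝ × ℝ → ℝ) : Prop :=
  EqOn (dT Q v) (a * dX Q (dX Q v) + b * dX Q v + c * v) Q

theorem PDE.heat (h : PDE Q a b c v) (a0 : ℝ) :
    EqOn (dT Q v) ((fun _ => a0) * dX Q (dX Q v) + rhs Q a0 a b c v) Q := by
  intro q hq
  rw [h hq]
  simp only [rhs, Pi.add_apply, Pi.mul_apply]
  ring

theorem PDE.ord (hQ : Good Q) (hp : p ∈ Q) (sa : Sm Q a) (sb : Sm Q b) (sc : Sm Q c) (sv : Sm Q v)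
    (h : PDE Q a b c v) (k : ℕ) (h0 : ∀ i < k, (dX Q)^[i] v p = 0) : Ord Q p k v := by
  induction k with
  | zero => trivial
  | succ k ih =>
    have := ih (fun i hi => h0 i (by omega))
    exact Ord.heat hQ hp (a p) sv (rhs_sm hQ _ sa sb sc sv) (h.heat _) this
      (rhs_ord hQ hp sa sb sc sv this) (h0 k (by omega))

end pde

end ZN


namespace ZN

/-- the strip -/
abbrev Qs (x1 x2 t0 t1 : ℝ) : Set (ℝ × ℝ) := Icc x1 x2 ×ˢ Ioo t0 t1

theorem good_Qs {x1 x2 t0 t1 : ℝ} (hx : x1 < x2) : Good (Qs x1 x2 t0 t1) := by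
  refine ⟨(uniqueDiffOn_Icc hx).prod isOpen_Ioo.uniqueDiffOn, ?_⟩
  rw [interior_prod_eq, closure_prod_eq, interior_Icc, closure_Ioo hx.ne, isOpen_Ioo.interior_eq]
  exact prod_mono le_rfl subset_closure

section slices
variable {x1 x2 t0 t1 x t : ℝ} {f : ℝ × ℝ → ℝ}

theorem slice_x (sf : Sm (Qs x1 x2 t0 t1) f) (hx : x ∈ Icc x1 x2) (ht : t ∈ Ioo t0 t1) :
    HasDerivWithinAt (fun y => f (y, t)) (dX (Qs x1 x2 t0 t1) f (x, t)) (Icc x1 x2) x := by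
  have h1 := (sf.diff (p := (x, t)) ⟨hx, ht⟩).hasFDerivWithinAt
  have h2 : HasDerivWithinAt (fun y : ℝ => (y, t)) ((1 : ℝ), (0 : ℝ)) (Icc x1 x2) x :=
    (hasDerivWithinAt_id x _).prodMk (hasDerivWithinAt_const x _ t)
  exact h1.comp_hasDerivWithinAt (f := fun y : ℝ => (y, t)) x h2 (fun y hy => ⟨hy, ht⟩)

theorem slice_x_at (sf : Sm (Qs x1 x2 t0 t1) f) (hx : x ∈ Ioo x1 x2) (ht : t ∈ Ioo t0 t1) :
    HasDerivAt (fun y => f (y, t)) (dX (Qs x1 x2 t0 t1) f (x, t)) x :=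
  (slice_x sf (Ioo_subset_Icc_self hx) ht).hasDerivAt (Icc_mem_nhds hx.1 hx.2)

theorem slice_t (sf : Sm (Qs x1 x2 t0 t1) f) (hx : x ∈ Icc x1 x2) (ht : t ∈ Ioo t0 t1) :
    HasDerivAt (fun s => f (x, s)) (dT (Qs x1 x2 t0 t1) f (x, t)) t := by
  have h1 := (sf.diff (p := (x, t)) ⟨hx, ht⟩).hasFDerivWithinAt
  have h2 : HasDerivWithinAt (fun y : ℝ => (x, y)) ((0 : ℝ), (1 : ℝ)) (Ioo t0 t1) t :=
    (hasDerivWithinAt_const t _ x).prodMk (hasDerivWithinAt_id t _)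
  exact (h1.comp_hasDerivWithinAt (f := fun y : ℝ => (x, y)) t h2 (fun y hy => ⟨hx, hy⟩)).hasDerivAt
    (Ioo_mem_nhds ht.1 ht.2)

theorem dX_eq (h12 : x1 < x2) (sf : Sm (Qs x1 x2 t0 t1) f) (hx : x ∈ Icc x1 x2) (ht : t ∈ Ioo t0 t1)
    {d : ℝ} (h : HasDerivWithinAt (fun y => f (y, t)) d (Icc x1 x2) x) :
    dX (Qs x1 x2 t0 t1) f (x, t) = d :=
  (uniqueDiffOn_Icc h12 x hx).eq_deriv _ (slice_x sf hx ht) h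

theorem dT_eq (sf : Sm (Qs x1 x2 t0 t1) f) (hx : x ∈ Icc x1 x2) (ht : t ∈ Ioo t0 t1)
    {d : ℝ} (h : HasDerivAt (fun s => f (x, s)) d t) :
    dT (Qs x1 x2 t0 t1) f (x, t) = d :=
  (slice_t sf hx ht).unique h

end slices

/-- parabolic distance -/
noncomputable def om (p q : ℝ × ℝ) : ℝ := |q.1 - p.1| + √|q.2 - p.2|

theorem om_nonneg (p q : ℝ × ℝ) : 0 ≤ om p q := by unfold om; positivity

theorem Ord.bound {x1 x2 t0 t1 : ℝ} (h12 : x1 < x2) {p : ℝ × ℝ} (hp : p ∈ Qs x1 x2 t0 t1)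
    {m : ℕ} {f : ℝ × ℝ → ℝ} (sf : Sm (Qs x1 x2 t0 t1) f) (hf : Ord (Qs x1 x2 t0 t1) p m f) :
    ∃ C r : ℝ, 0 ≤ C ∧ 0 < r ∧ ∀ q ∈ Qs x1 x2 t0 t1, |q.1 - p.1| < r → |q.2 - p.2| < r →
      |f q| ≤ C * om p q ^ m := by
  induction m using Nat.strong_induction_on generalizing f with
  | _ m ih =>
    match m, hf with
    | 0, _ =>
      have hc := sf.continuousOn p hp
      have h1 : ∀ᶠ q in nhdsWithin p (Qs x1 x2 t0 t1), |f q| < |f p| + 1 :=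
        hc.abs.eventually_lt_const (by linarith)
      obtain ⟨r, hr, h⟩ := Metric.mem_nhdsWithin_iff.1 h1
      refine ⟨|f p| + 1, r, by positivity, hr, fun q hq h1 h2 => ?_⟩
      rw [pow_zero, _root_.mul_one]
      refine le_of_lt (h ⟨?_, hq⟩)
      rw [Metric.mem_ball, Prod.dist_eq]
      exact max_lt h1 h2
    | (m + 1), hf =>
      have hg := good_Qs (t0 := t0) (t1 := t1) h12
      obtain ⟨C1, r1, hC1, hr1, h1⟩ := ih m (by omega) (sf.dd hg) hf.dx
      obtain ⟨C2, r2, hC2, hr2, h2⟩ := ih (m - 1) (by omega) (sf.dd hg (e := (0, 1)))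
        (show Ord (Qs x1 x2 t0 t1) p (m - 1) _ by
          match m, hf with
          | 0, _ => trivial
          | m + 1, hf => exact hf.dt)
      refine ⟨C1 + 2 * C2, min (min r1 r2) 1, by positivity, by positivity, ?_⟩
      rintro ⟨x, t⟩ ⟨hx, ht⟩ hxr htr
      obtain ⟨x0, ts⟩ := p
      simp only at hx ht hxr htr
      have hp1 : x0 ∈ Icc x1 x2 := hp.1
      have hp2 : ts ∈ Ioo t0 t1 := hp.2
      have hxr1 : |x - x0| < r1 := lt_of_lt_of_le hxr ((min_le_left _ _).trans (min_le_left _ _))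
      have htr1 : |t - ts| < r1 := lt_of_lt_of_le htr ((min_le_left _ _).trans (min_le_left _ _))
      have htr2 : |t - ts| < r2 := lt_of_lt_of_le htr ((min_le_left _ _).trans (min_le_right _ _))
      have hx1 : |x - x0| < 1 := lt_of_lt_of_le hxr (min_le_right _ _)
      have ht1 : |t - ts| < 1 := lt_of_lt_of_le htr (min_le_right _ _)
      set w := om (x0, ts) (x, t) with hw
      have hw0 : 0 ≤ w := om_nonneg _ _
      have hs1 : √|t - ts| ≤ 1 := by
        rw [Real.sqrt_le_left (by norm_num)]; simpa using ht1.le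
      have hw2 : w ≤ 2 := by
        simp only [hw, om]; linarith
      have hsq : √|t - ts| ^ 2 = |t - ts| := Real.sq_sqrt (abs_nonneg _)
      have hsw : √|t - ts| ≤ w := by
        simp only [hw, om]; linarith [abs_nonneg (x - x0)]
      have hxw : |x - x0| ≤ w := by
        simp only [hw, om]; linarith [Real.sqrt_nonneg |t - ts|]
      have A : |f (x, t) - f (x0, t)| ≤ C1 * w ^ m * |x - x0| := by
        have hsub : uIcc x0 x ⊆ Icc x1 x2 := uIcc_subset_Icc hp1 hx
        refine Convex.norm_image_sub_le_of_norm_hasDerivWithin_le (s := uIcc x0 x)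
          (f := fun y => f (y, t)) (f' := fun y => dX (Qs x1 x2 t0 t1) f (y, t))
          (fun y hy => (slice_x sf (hsub hy) ht).mono hsub) ?_ (convex_uIcc _ _)
          left_mem_uIcc right_mem_uIcc
        intro y hy
        have hyx : |y - x0| ≤ |x - x0| := abs_sub_left_of_mem_uIcc hy
        refine (h1 (y, t) ⟨hsub hy, ht⟩ (lt_of_le_of_lt hyx hxr1) htr1).trans ?_
        gcongr
        · exact om_nonneg _ _
        · simp only [hw, om]; linarith
      have B : |f (x0, t) - f (x0, ts)| ≤ C2 * w ^ (m - 1) * |t - ts| := by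
        have hsub : uIcc ts t ⊆ Ioo t0 t1 := ordConnected_Ioo.uIcc_subset hp2 ht
        refine Convex.norm_image_sub_le_of_norm_hasDerivWithin_le (s := uIcc ts t)
          (f := fun y => f (x0, y)) (f' := fun y => dT (Qs x1 x2 t0 t1) f (x0, y))
          (fun y hy => (slice_t sf hp1 (hsub hy)).hasDerivWithinAt) ?_ (convex_uIcc _ _)
          left_mem_uIcc right_mem_uIcc
        intro y hy
        have hyx : |y - ts| ≤ |t - ts| := abs_sub_left_of_mem_uIcc hy
        refine (h2 (x0, y) ⟨hp1, hsub hy⟩ (by simpa using hr2) (lt_of_le_of_lt hyx htr2)).trans ?_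
        gcongr
        · exact om_nonneg _ _
        · simp only [hw, om]
          have := Real.sqrt_le_sqrt hyx
          simp only [sub_self, abs_zero, zero_add]
          linarith [abs_nonneg (x - x0)]
      have h0 : f (x0, ts) = 0 := hf.val
      have e1 : C1 * w ^ m * |x - x0| ≤ C1 * w ^ (m + 1) := by
        rw [pow_succ, ← mul_assoc]; gcongr
      have e2 : C2 * w ^ (m - 1) * |t - ts| ≤ 2 * C2 * w ^ (m + 1) := by
        have : w ^ (m - 1) * |t - ts| ≤ 2 * w ^ (m + 1) := by
          have h3 : |t - ts| ≤ w ^ 2 := by rw [← hsq]; gcongr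
          have h4 : w ^ (m - 1) * |t - ts| ≤ w ^ (m - 1) * w ^ 2 := by gcongr
          refine h4.trans ?_
          cases m with
          | zero => simp only [Nat.zero_sub, pow_zero, zero_add, pow_one]; nlinarith
          | succ m =>
            rw [← pow_add, show m + 1 - 1 + 2 = m + 1 + 1 by omega]
            have : 0 ≤ w ^ (m + 1 + 1) := by positivity
            linarith
        calc C2 * w ^ (m - 1) * |t - ts| = C2 * (w ^ (m - 1) * |t - ts|) := by ring
          _ ≤ C2 * (2 * w ^ (m + 1)) := by gcongr
          _ = _ := by ring
      calc |f (x, t)| = |(f (x, t) - f (x0, t)) + (f (x0, t) - f (x0, ts))| := by rw [h0]; ring_nf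
        _ ≤ _ := abs_add_le _ _
        _ ≤ C1 * w ^ (m + 1) + 2 * C2 * w ^ (m + 1) := by linarith
        _ = _ := by ring

/-- heat polynomials -/
noncomputable def hp : ℕ → ℝ → ℝ → ℝ
  | 0, _, _ => 1
  | 1, x, _ => x
  | (k + 2), x, s => (x * hp (k + 1) x s + 2 * s * hp k x s) / (k + 2)

theorem hp_rec (k : ℕ) (x s : ℝ) : (k + 2 : ℝ) * hp (k + 2) x s = x * hp (k + 1) x s + 2 * s * hp k x s := by
  rw [hp]; field_simp

theorem hp_dx (k : ℕ) (x s : ℝ) : HasDerivAt (fun y => hp (k + 1) y s) (hp k x s) x := by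
  induction k using Nat.strong_induction_on with
  | _ k ih =>
    match k with
    | 0 => exact hasDerivAt_id x
    | 1 =>
      have h1 := (((hasDerivAt_id x).mul (ih 0 (by omega))).add
        (hasDerivAt_const x (2 * s * 1))).div_const (((0 : ℕ) : ℝ) + 2)
      refine HasDerivAt.congr_deriv (f := fun y => hp (1 + 1) y s) h1 ?_
      simp [hp]
    | (k + 2) =>
      have h1 := (((hasDerivAt_id x).mul (ih (k + 1) (by omega))).add
        ((ih k (by omega)).const_mul (2 * s))).div_const (((k + 1 : ℕ) : ℝ) + 2)
      refine HasDerivAt.congr_deriv (f := fun y => hp (k + 2 + 1) y s) h1 ?_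
      have := hp_rec k x s
      simp only [id]
      push_cast
      field_simp
      linarith

theorem hp_ds (k : ℕ) (x s : ℝ) : HasDerivAt (fun y => hp (k + 2) x y) (hp k x s) s := by
  induction k using Nat.strong_induction_on with
  | _ k ih =>
    match k with
    | 0 =>
      have h1 := ((hasDerivAt_const s (x * x)).add
        (((hasDerivAt_id s).const_mul 2).mul (hasDerivAt_const s (1:ℝ)))).div_const (((0 : ℕ) : ℝ) + 2)
      refine HasDerivAt.congr_deriv (f := fun y => hp (0 + 2) x y) h1 ?_
      simp [hp]
    | 1 =>
      have h1 := (((ih 0 (by omega)).const_mul x).add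
        (((hasDerivAt_id s).const_mul 2).mul (hasDerivAt_const s x))).div_const (((1 : ℕ) : ℝ) + 2)
      refine HasDerivAt.congr_deriv (f := fun y => hp (1 + 2) x y) h1 ?_
      simp [hp]
      ring
    | (k + 2) =>
      have h1 := (((ih (k + 1) (by omega)).const_mul x).add
        (((hasDerivAt_id s).const_mul 2).mul (ih k (by omega)))).div_const (((k + 2 : ℕ) : ℝ) + 2)
      refine HasDerivAt.congr_deriv (f := fun y => hp (k + 2 + 2) x y) h1 ?_
      have := hp_rec k x s
      simp only [id]
      push_cast
      field_simp
      linarith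

theorem hp_smooth (k : ℕ) : ContDiff ℝ (⊤ : ℕ∞) (fun q : ℝ × ℝ => hp k q.1 q.2) := by
  induction k using Nat.strong_induction_on with
  | _ k ih =>
    match k with
    | 0 => exact contDiff_const
    | 1 => exact contDiff_fst
    | (k + 2) =>
      exact ((contDiff_fst.mul (ih (k + 1) (by omega))).add
        ((contDiff_const.mul contDiff_snd).mul (ih k (by omega)))).div_const _

theorem hp_scale (k : ℕ) (r x s : ℝ) : hp k (r * x) (r ^ 2 * s) = r ^ k * hp k x s := by
  induction k using Nat.strong_induction_on with
  | _ k ih =>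
    match k with
    | 0 => simp [hp]
    | 1 => simp [hp]
    | (k + 2) =>
      rw [hp, ih (k + 1) (by omega), ih k (by omega), hp]
      ring

theorem hp_zero (k : ℕ) : hp (k + 1) 0 0 = 0 := by
  have := hp_scale (k + 1) 0 0 0
  simpa using this

theorem hp_parity (k : ℕ) (x s : ℝ) : hp k (-x) s = (-1) ^ k * hp k x s := by
  have := hp_scale k (-1) x s
  simpa using this

theorem hp_pos (m : ℕ) : ∃ c : ℝ, 0 < c ∧ ∀ x s : ℝ, 0 ≤ s →
    c * (x ^ (2 * m) + s ^ m) ≤ hp (2 * m) x s ∧ c * x ^ (2 * m + 2) ≤ x * hp (2 * m + 1) x s := by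
  induction m with
  | zero =>
    refine ⟨1 / 2, by norm_num, fun x s hs => ?_⟩
    simp only [hp, mul_zero, pow_zero, zero_add]
    constructor
    · norm_num
    · nlinarith [sq_nonneg x]
  | succ m ih =>
    obtain ⟨c, hc, h⟩ := ih
    refine ⟨c / ((2 * m + 2) * (2 * m + 3)), by positivity, fun x s hs => ?_⟩
    obtain ⟨h1, h2⟩ := h x s hs
    have r1 := hp_rec (2 * m) x s
    have r2 := hp_rec (2 * m + 1) x s
    have hx : 0 ≤ x ^ (2 * m) := by rw [pow_mul]; positivity
    have hsm : 0 ≤ s ^ m := by positivity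
    have hx2 : 0 ≤ x ^ (2 * m + 2) := by rw [show 2 * m + 2 = 2 * (m + 1) by ring, pow_mul]; positivity
    push_cast at r1 r2
    have e1 : c * (x ^ (2 * m + 2) + s ^ (m + 1)) ≤ (2 * m + 2 : ℝ) * hp (2 * m + 2) x s := by
      rw [r1]
      have a1 : s * (c * (x ^ (2 * m) + s ^ m)) ≤ s * hp (2 * m) x s := by gcongr
      have a2 : 0 ≤ s * c * x ^ (2 * m) := by positivity
      have a3 : 0 ≤ s * c * s ^ m := by positivity
      rw [pow_succ s m]
      nlinarith
    have p1 : 0 ≤ hp (2 * m + 2) x s := by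
      have : 0 ≤ (2 * m + 2 : ℝ) * hp (2 * m + 2) x s := le_trans (by positivity) e1
      exact nonneg_of_mul_nonneg_right this (by positivity)
    have hm : (0 : ℝ) ≤ m := by positivity
    constructor
    · rw [show 2 * (m + 1) = 2 * m + 2 by ring]
      have : c / ((2 * m + 2) * (2 * m + 3)) * (x ^ (2 * m + 2) + s ^ (m + 1)) =
        (c * (x ^ (2 * m + 2) + s ^ (m + 1))) / ((2 * m + 2) * (2 * m + 3)) := by ring
      rw [this, div_le_iff₀ (by positivity)]
      have e4 : 0 ≤ (2 * m + 2 : ℝ) * hp (2 * m + 2) x s * (2 * m + 2) := by positivity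
      nlinarith
    · rw [show 2 * (m + 1) = 2 * m + 2 by ring]
      have e3 : c * x ^ (2 * m + 2 + 2) ≤ (2 * m + 2 : ℝ) * (2 * m + 3) * (x * hp (2 * m + 3) x s) := by
        have b1 : (2 * m + 3 : ℝ) * (x * hp (2 * m + 3) x s) =
            x ^ 2 * hp (2 * m + 2) x s + 2 * s * (x * hp (2 * m + 1) x s) := by
          rw [show (2 * m + 3 : ℝ) = 2 * m + 1 + 2 by ring]
          linear_combination x * r2
        have b2 : x ^ 2 * (c * (x ^ (2 * m + 2) + s ^ (m + 1))) ≤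
            x ^ 2 * ((2 * m + 2 : ℝ) * hp (2 * m + 2) x s) := by gcongr
        have b3 : 0 ≤ s * (x * hp (2 * m + 1) x s) := mul_nonneg hs (le_trans (by positivity) h2)
        have b4 : 0 ≤ x ^ 2 * (c * s ^ (m + 1)) := by positivity
        have b5 : c * x ^ (2 * m + 2 + 2) = x ^ 2 * (c * x ^ (2 * m + 2)) := by ring
        calc c * x ^ (2 * m + 2 + 2) ≤ x ^ 2 * ((2 * m + 2 : ℝ) * hp (2 * m + 2) x s) := by
              nlinarith
          _ ≤ (2 * m + 2 : ℝ) * ((2 * m + 3 : ℝ) * (x * hp (2 * m + 3) x s)) := by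
              rw [b1]
              have : 0 ≤ (2 * m + 2 : ℝ) * (2 * (s * (x * hp (2 * m + 1) x s))) := by positivity
              nlinarith
          _ = _ := by ring
      have : c / ((2 * m + 2) * (2 * m + 3)) * x ^ (2 * m + 2 + 2) =
        (c * x ^ (2 * m + 2 + 2)) / ((2 * m + 2) * (2 * m + 3)) := by ring
      rw [this, div_le_iff₀ (by positivity)]
      linarith

theorem hp_tendsto (k : ℕ) : ∃ c : ℝ, 0 < c ∧
    Tendsto (fun y : ℝ => hp k y (-1) / y ^ k) atTop (nhds c) := by
  induction k using Nat.strong_induction_on with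
  | _ k ih =>
    match k with
    | 0 => exact ⟨1, one_pos, by simp [hp]⟩
    | 1 =>
      refine ⟨1, one_pos, tendsto_const_nhds.congr' ?_⟩
      filter_upwards [eventually_gt_atTop 0] with y hy
      simp [hp, hy.ne']
    | (k + 2) =>
      obtain ⟨c1, h1, t1⟩ := ih (k + 1) (by omega)
      obtain ⟨c0, h0, t0⟩ := ih k (by omega)
      refine ⟨(c1 - 2 * (c0 * 0)) / (k + 2), by simp; positivity, ?_⟩
      have hz : Tendsto (fun y : ℝ => (y ^ 2)⁻¹) atTop (nhds 0) :=
        (tendsto_pow_atTop (by norm_num : (2:ℕ) ≠ 0)).inv_tendsto_atTop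
      refine ((t1.sub ((t0.mul hz).const_mul 2)).div_const (k + 2 : ℝ)).congr' ?_
      filter_upwards [eventually_gt_atTop 0] with y hy
      rw [hp]
      field_simp
      ring

theorem hp_large (k : ℕ) : ∃ c Y : ℝ, 0 < c ∧ 0 < Y ∧ ∀ y, Y ≤ y → c * y ^ k ≤ hp k y (-1) := by
  obtain ⟨c, hc, h⟩ := hp_tendsto k
  have := (h.eventually_const_le (show c / 2 < c by linarith)).and (eventually_gt_atTop 0)
  obtain ⟨Y, hY⟩ := (eventually_atTop.1 this)
  refine ⟨c / 2, max Y 1, by positivity, by positivity, fun y hy => ?_⟩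
  obtain ⟨h1, h2⟩ := hY y (le_trans (le_max_left _ _) hy)
  rwa [le_div_iff₀ (by positivity)] at h1

theorem anti_of_deriv {f f' : ℝ → ℝ} {a : ℝ} (h : ∀ x, HasDerivAt f (f' x) x)
    (h0 : ∀ x, a < x → f' x ≤ 0) : AntitoneOn f (Ici a) := by
  refine antitoneOn_of_deriv_nonpos (convex_Ici a) (fun x _ => (h x).continuousAt.continuousWithinAt)
    (fun x _ => (h x).differentiableAt.differentiableWithinAt) ?_
  intro x hx
  rw [interior_Ici] at hx
  rw [(h x).deriv]
  exact h0 x hx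

theorem hp_neg (n : ℕ) : ∃ y : ℝ, 0 < y ∧ hp (n + 2) y (-1) < 0 := by
  by_contra hcon
  push Not at hcon
  set h : ℕ → ℝ → ℝ := fun k y => hp k y (-1) with hh
  have hd : ∀ k y, HasDerivAt (h (k + 1)) (h k y) y := fun k y => hp_dx k y (-1)
  have hr : ∀ (k : ℕ) (y : ℝ), (k + 2 : ℝ) * h (k + 2) y = y * h (k + 1) y - 2 * h k y := by
    intro k y; have := hp_rec k y (-1); simp only [hh]; linarith
  have hn : (0 : ℝ) ≤ n := by positivity
  have he : ∀ y : ℝ, HasDerivAt (fun y : ℝ => Real.exp (-y ^ 2 / 4))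
      (Real.exp (-y ^ 2 / 4) * (-y / 2)) y := by
    intro y
    have := (((hasDerivAt_pow 2 y).neg).div_const 4).exp
    refine HasDerivAt.congr_deriv (f := fun y : ℝ => Real.exp (-y ^ 2 / 4)) this ?_
    simp only [Pi.neg_apply]
    push_cast
    ring
  have hz : ∀ k, Odd k → h k 0 = 0 := by
    intro k hk
    have := hp_parity k 0 (-1)
    rw [hk.neg_one_pow, neg_zero] at this
    simp only [hh]; linarith
  have lin : ∃ C : ℝ, ∀ y, 1 ≤ y → h (n + 2) y ≤ C * y := by
    rcases Nat.even_or_odd n with hev | hod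
    · have a1 : AntitoneOn (fun y => Real.exp (-y ^ 2 / 4) * h (n + 1) y) (Ici 0) := by
        refine anti_of_deriv (fun y => (he y).mul (hd n y)) ?_
        intro y hy
        have := hr n y
        have h3 := hcon y hy
        have : Real.exp (-y ^ 2 / 4) * (-y / 2) * h (n + 1) y + Real.exp (-y ^ 2 / 4) * h n y =
          - (Real.exp (-y ^ 2 / 4) * ((n + 2) / 2 * h (n + 2) y)) := by
            linear_combination (Real.exp (-y ^ 2 / 4) / 2) * this
        rw [this, neg_nonpos]
        have : 0 ≤ h (n + 2) y := h3
        positivity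
      have a2 : ∀ y, 0 < y → h (n + 1) y ≤ 0 := by
        intro y hy
        have := a1 (self_mem_Ici) hy.le hy.le
        simp only [hz (n + 1) hev.add_one, mul_zero] at this
        exact nonpos_of_mul_nonpos_right this (Real.exp_pos _)
      have a3 := anti_of_deriv (a := 1) (hd (n + 1)) (fun y hy => a2 y (by linarith))
      refine ⟨|h (n + 2) 1|, fun y hy => ?_⟩
      have := a3 self_mem_Ici hy hy
      nlinarith [le_abs_self (h (n + 2) 1), abs_nonneg (h (n + 2) 1)]
    · have a1 : AntitoneOn (fun y => Real.exp (-y ^ 2 / 4) * (h (n + 1) y * y - h (n + 2) y)) (Ici 0) := by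
        refine anti_of_deriv (fun y => (he y).mul (((hd n y).mul (hasDerivAt_id y)).sub (hd (n + 1) y))) ?_
        intro y hy
        have := hr n y
        have h3 : 0 ≤ h (n + 2) y := hcon y hy
        simp only [id]
        have : Real.exp (-y ^ 2 / 4) * (-y / 2) * (h (n + 1) y * y - h (n + 2) y) +
          Real.exp (-y ^ 2 / 4) * (h n y * y + h (n + 1) y * 1 - h (n + 1) y) =
          - (Real.exp (-y ^ 2 / 4) * y * ((n + 1) / 2 * h (n + 2) y)) := by
            linear_combination (y * Real.exp (-y ^ 2 / 4) / 2) * this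
        rw [this, neg_nonpos]
        positivity
      have a2 : ∀ y, 0 < y → h (n + 1) y * y - h (n + 2) y ≤ 0 := by
        intro y hy
        have := a1 (self_mem_Ici) hy.le hy.le
        simp only [hz (n + 2) (by simpa [parity_simps] using hod), mul_zero, sub_zero] at this
        exact nonpos_of_mul_nonpos_right this (Real.exp_pos _)
      have a3 : AntitoneOn (fun y => h (n + 2) y / y) (Ici 1) := by
        refine antitoneOn_of_deriv_nonpos (convex_Ici 1) ?_ ?_ ?_
        · intro y hy
          have hy : (1:ℝ) ≤ y := hy
          exact ((hd (n + 1) y).continuousAt.div continuousAt_id (by simp; linarith)).continuousWithinAt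
        · intro y hy
          rw [interior_Ici] at hy
          have hy : (1:ℝ) < y := hy
          exact ((hd (n + 1) y).div (hasDerivAt_id y) (by simp; linarith)).differentiableAt.differentiableWithinAt
        · intro y hy
          rw [interior_Ici] at hy
          have hy : (1:ℝ) < y := hy
          have := ((hd (n + 1) y).div (hasDerivAt_id y) (by simp; linarith)).deriv
          have e : (fun y => h (n + 2) y / y) = h (n + 1 + 1) / id := rfl
          rw [e, this]
          have := a2 y (by linarith)
          simp only [id, mul_one]
          exact div_nonpos_of_nonpos_of_nonneg this (by positivity)
      refine ⟨h (n + 2) 1, fun y hy => ?_⟩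
      have := a3 self_mem_Ici hy hy
      simp only [div_one] at this
      rwa [div_le_iff₀ (by linarith)] at this
  obtain ⟨C, hC⟩ := lin
  obtain ⟨c, Y, hc, hY, hl⟩ := hp_large (n + 2)
  set y := max (max Y 1) ((C + 1) / c) with hy
  have y1 : 1 ≤ y := (le_max_right _ _).trans (le_max_left _ _)
  have y2 : Y ≤ y := (le_max_left _ _).trans (le_max_left _ _)
  have y3 : C + 1 ≤ c * y := by
    have : (C + 1) / c ≤ y := le_max_right _ _
    rw [div_le_iff₀ hc] at this; linarith
  have e1 := (hl y y2).trans (hC y y1)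
  have e2 : y ^ 2 ≤ y ^ (n + 2) := pow_le_pow_right₀ y1 (by omega)
  have e3 : c * y ^ 2 ≤ C * y := le_trans (by gcongr) e1
  nlinarith

theorem hp_alt (n : ℕ) : ∃ y1 y2 y3 : ℝ, y1 < y2 ∧ y2 < y3 ∧
    hp (n + 2) y1 (-1) * hp (n + 2) y2 (-1) < 0 ∧ hp (n + 2) y2 (-1) * hp (n + 2) y3 (-1) < 0 := by
  obtain ⟨y, hy, hn⟩ := hp_neg n
  obtain ⟨c, Y, hc, hY, hl⟩ := hp_large (n + 2)
  set Z := max Y (y + 1)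
  have hZ : 0 < hp (n + 2) Z (-1) := by
    refine lt_of_lt_of_le ?_ (hl Z (le_max_left _ _))
    have : 0 < Z := lt_of_lt_of_le hY (le_max_left _ _)
    positivity
  have hyZ : y < Z := lt_of_lt_of_le (by linarith) (le_max_right _ _)
  rcases Nat.even_or_odd (n + 2) with h | h
  · refine ⟨-Z, y, Z, by linarith, hyZ, ?_, by nlinarith⟩
    rw [hp_parity, h.neg_one_pow]; nlinarith
  · refine ⟨-Z, -y, y, by linarith, by linarith, ?_, ?_⟩
    · rw [hp_parity, hp_parity, h.neg_one_pow]; nlinarith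
    · rw [hp_parity, h.neg_one_pow]; nlinarith

end ZN


namespace ZN

section aliases
variable {Q : Set (ℝ × ℝ)} {f g : ℝ × ℝ → ℝ}
theorem dX_congr (h : EqOn f g Q) : EqOn (dX Q f) (dX Q g) Q := dd_congr h
theorem dT_congr (h : EqOn f g Q) : EqOn (dT Q f) (dT Q g) Q := dd_congr h
theorem dX_add (hQ : Good Q) (hf : Sm Q f) (hg : Sm Q g) :
    EqOn (dX Q (f + g)) (dX Q f + dX Q g) Q := dd_add hQ hf hg
theorem dT_add (hQ : Good Q) (hf : Sm Q f) (hg : Sm Q g) :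
    EqOn (dT Q (f + g)) (dT Q f + dT Q g) Q := dd_add hQ hf hg
theorem dX_mul (hQ : Good Q) (hf : Sm Q f) (hg : Sm Q g) :
    EqOn (dX Q (f * g)) (f * dX Q g + dX Q f * g) Q := dd_mul hQ hf hg
theorem dT_mul (hQ : Good Q) (hf : Sm Q f) (hg : Sm Q g) :
    EqOn (dT Q (f * g)) (f * dT Q g + dT Q f * g) Q := dd_mul hQ hf hg
theorem dX_cmul (hQ : Good Q) (c : ℝ) (hf : Sm Q f) :
    EqOn (dX Q ((fun _ => c) * f)) ((fun _ => c) * dX Q f) Q := dd_cmul hQ c hf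
theorem dT_cmul (hQ : Good Q) (c : ℝ) (hf : Sm Q f) :
    EqOn (dT Q ((fun _ => c) * f)) ((fun _ => c) * dT Q f) Q := dd_cmul hQ c hf
theorem dX_const (c : ℝ) : EqOn (dX Q (fun _ => c)) (fun _ => 0) Q := dd_const c
theorem dT_const (c : ℝ) : EqOn (dT Q (fun _ => c)) (fun _ => 0) Q := dd_const c
theorem Sm.dX (hQ : Good Q) (hf : Sm Q f) : Sm Q (dX Q f) := hf.dd hQ
theorem Sm.dT (hQ : Good Q) (hf : Sm Q f) : Sm Q (dT Q f) := hf.dd hQ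
theorem Sm.plus (hf : Sm Q f) (hg : Sm Q g) : Sm Q (f + g) := ContDiffOn.add hf hg
theorem Sm.times (hf : Sm Q f) (hg : Sm Q g) : Sm Q (f * g) := ContDiffOn.mul hf hg
end aliases

section loc
variable {x1 x2 t0 t1 a0 : ℝ} {p : ℝ × ℝ}

noncomputable def HP (p : ℝ × ℝ) (a0 : ℝ) (k : ℕ) : ℝ × ℝ → ℝ :=
  fun q => hp k (q.1 - p.1) (a0 * (q.2 - p.2))

theorem HP_sm {Q : Set (ℝ × ℝ)} (k : ℕ) : Sm Q (HP p a0 k) := by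
  have h : ContDiff ℝ (⊤ : ℕ∞) (fun q : ℝ × ℝ => (q.1 - p.1, a0 * (q.2 - p.2))) := by fun_prop
  exact ((hp_smooth k).comp h).contDiffOn

theorem HP_dX (h12 : x1 < x2) (k : ℕ) :
    EqOn (dX (Qs x1 x2 t0 t1) (HP p a0 (k + 1))) (HP p a0 k) (Qs x1 x2 t0 t1) := by
  rintro ⟨x, t⟩ ⟨hx, ht⟩
  refine dX_eq h12 (HP_sm _) hx ht ?_
  have h := (hp_dx k (x - p.1) (a0 * (t - p.2))).comp x ((hasDerivAt_id x).sub_const p.1)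
  rw [mul_one] at h
  exact h.hasDerivWithinAt

theorem HP_dT (k : ℕ) :
    EqOn (dT (Qs x1 x2 t0 t1) (HP p a0 (k + 2))) ((fun _ => a0) * HP p a0 k) (Qs x1 x2 t0 t1) := by
  rintro ⟨x, t⟩ ⟨hx, ht⟩
  refine dT_eq (HP_sm _) hx ht ?_
  have h := (hp_ds k (x - p.1) (a0 * (t - p.2))).comp t
    (((hasDerivAt_id t).sub_const p.2).const_mul a0)
  rw [mul_one, mul_comm] at h
  exact h

theorem HP_heat (h12 : x1 < x2) (k : ℕ) :
    EqOn (dT (Qs x1 x2 t0 t1) (HP p a0 k))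
      ((fun _ => a0) * dX (Qs x1 x2 t0 t1) (dX (Qs x1 x2 t0 t1) (HP p a0 k))) (Qs x1 x2 t0 t1) := by
  have h0 : EqOn (dX (Qs x1 x2 t0 t1) (HP p a0 0)) (fun _ => 0) (Qs x1 x2 t0 t1) := dd_const 1
  match k with
  | 0 =>
    intro q hq
    have h1 : dT (Qs x1 x2 t0 t1) (HP p a0 0) q = 0 := dd_const 1 hq
    rw [h1, Pi.mul_apply, dX_congr h0 hq, dX_const 0 hq, mul_zero]
  | 1 =>
    rintro ⟨x, t⟩ ⟨hx, ht⟩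
    have h1 : dT (Qs x1 x2 t0 t1) (HP p a0 1) (x, t) = 0 :=
      dT_eq (HP_sm _) hx ht (hasDerivAt_const t (x - p.1))
    rw [h1, Pi.mul_apply, dX_congr (HP_dX h12 0) ⟨hx, ht⟩, h0 ⟨hx, ht⟩, mul_zero]
  | (k + 2) =>
    intro q hq
    rw [HP_dT k hq, Pi.mul_apply, Pi.mul_apply, dX_congr (HP_dX h12 (k + 1)) hq, HP_dX h12 k hq]

theorem HP_iter (h12 : x1 < x2) (k : ℕ) :
    EqOn ((dX (Qs x1 x2 t0 t1))^[k] (HP p a0 k)) (fun _ => 1) (Qs x1 x2 t0 t1) := by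
  induction k with
  | zero => intro q hq; rfl
  | succ k ih => exact (dd_iter_congr (HP_dX h12 k) k).trans ih

theorem HP_ord (h12 : x1 < x2) (hp : p ∈ Qs x1 x2 t0 t1) (k : ℕ) :
    Ord (Qs x1 x2 t0 t1) p k (HP p a0 k) := by
  have h0 : ∀ k, HP p a0 (k + 1) p = 0 := by
    intro k; simp [HP, hp_zero]
  induction k using Nat.strong_induction_on with
  | _ k ih =>
    match k with
    | 0 => trivial
    | 1 => exact h0 0
    | (k + 2) =>
      refine ⟨h0 (k + 1), (ih (k + 1) (by omega)).congr hp (HP_dX h12 _).symm, ?_⟩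
      exact (Ord.mul (good_Qs h12) hp contDiffOn_const (HP_sm _) (ih k (by omega))).congr hp
        (HP_dT k).symm

variable {a b c v : ℝ × ℝ → ℝ}

theorem expand (h12 : x1 < x2) (hp : p ∈ Qs x1 x2 t0 t1)
    (sa : Sm (Qs x1 x2 t0 t1) a) (sb : Sm (Qs x1 x2 t0 t1) b) (sc : Sm (Qs x1 x2 t0 t1) c)
    (sv : Sm (Qs x1 x2 t0 t1) v) (h : PDE (Qs x1 x2 t0 t1) a b c v) (k : ℕ)
    (h0 : ∀ i < k, (dX (Qs x1 x2 t0 t1))^[i] v p = 0) :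
    Ord (Qs x1 x2 t0 t1) p (k + 1)
      (v + (fun _ => -(dX (Qs x1 x2 t0 t1))^[k] v p) * HP p (a p) k) := by
  set A := (dX (Qs x1 x2 t0 t1))^[k] v p with hA
  have hQ := good_Qs (t0 := t0) (t1 := t1) h12
  have hv := h.ord hQ hp sa sb sc sv k h0
  have sH : Sm (Qs x1 x2 t0 t1) (HP p (a p) k) := HP_sm k
  have sAH : Sm (Qs x1 x2 t0 t1) ((fun _ => -A) * HP p (a p) k) := contDiffOn_const.mul sH
  refine Ord.heat hQ hp (a p) (sv.plus sAH) (rhs_sm hQ (a p) sa sb sc sv) ?_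
    (Ord.add hQ hp sv sAH hv (Ord.mul hQ hp contDiffOn_const sH (HP_ord h12 hp k)))
    (rhs_ord hQ hp sa sb sc sv hv) ?_
  · intro q hq
    rw [dT_add hQ sv sAH hq, Pi.add_apply, h.heat (a p) hq, dT_cmul hQ (-A) sH hq, Pi.mul_apply,
      HP_heat h12 k hq]
    simp only [Pi.add_apply, Pi.mul_apply]
    rw [dX_congr (dX_add hQ sv sAH) hq, dX_add hQ (sv.dd hQ) (sAH.dd hQ) hq, Pi.add_apply,
      dX_congr (dX_cmul hQ (-A) sH) hq, dX_cmul hQ (-A) (sH.dd hQ) hq]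
    simp only [Pi.mul_apply]
    ring
  · rw [dd_iter_add hQ sv sAH k hp, Pi.add_apply, dd_iter_cmul hQ (-A) sH k hp, Pi.mul_apply,
      HP_iter h12 k hp, ← hA]
    ring

theorem dominate (ha : 0 < a0) {A C r : ℝ} (hA : A ≠ 0) (hC : 0 ≤ C) (hr : 0 < r) (m : ℕ)
    {S : Set (ℝ × ℝ)} {F : ℝ × ℝ → ℝ}
    (hF : ∀ q ∈ S, |q.1 - p.1| < r → |q.2 - p.2| < r →
      |F q - A * HP p a0 (2 * m) q| ≤ C * om p q ^ (2 * m + 1)) :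
    ∃ δ > 0, ∀ q ∈ S, |q.1 - p.1| < δ → |q.2 - p.2| < δ → p.2 ≤ q.2 → F q = 0 → q = p := by
  obtain ⟨c, hc, hpos⟩ := hp_pos m
  set c' := |A| * c * min 1 (a0 ^ m) / 2 ^ (2 * m) with hc'
  have hA' : 0 < |A| := abs_pos.2 hA
  have hc'0 : 0 < c' := by positivity
  set η := c' / (C + 1)
  have hη : 0 < η := by positivity
  refine ⟨min r (min (η / 2) ((η / 2) ^ 2)), by positivity, ?_⟩
  rintro q hq h1 h2 h3 h4
  have hx1 : |q.1 - p.1| < η / 2 := lt_of_lt_of_le h1 ((min_le_right _ _).trans (min_le_left _ _))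
  have hx2 : |q.2 - p.2| < (η / 2) ^ 2 :=
    lt_of_lt_of_le h2 ((min_le_right _ _).trans (min_le_right _ _))
  have hF' := hF q hq (lt_of_lt_of_le h1 (min_le_left _ _)) (lt_of_lt_of_le h2 (min_le_left _ _))
  have hs : √|q.2 - p.2| < η / 2 := by
    rw [Real.sqrt_lt' (by positivity)]; exact hx2
  have hom : om p q < η := by unfold om; linarith
  have hom0 := om_nonneg p q
  have hlow : c' * om p q ^ (2 * m) ≤ |A| * HP p a0 (2 * m) q := by
    have e1 := (hpos (q.1 - p.1) (a0 * (q.2 - p.2)) (mul_nonneg ha.le (by linarith))).1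
    have e2 : om p q ^ (2 * m) ≤ 2 ^ (2 * m) * ((q.1 - p.1) ^ (2 * m) + (q.2 - p.2) ^ m) := by
      have e3 := add_pow_le (abs_nonneg (q.1 - p.1)) (Real.sqrt_nonneg |q.2 - p.2|) (2 * m)
      have e4 : |q.1 - p.1| ^ (2 * m) = (q.1 - p.1) ^ (2 * m) := by
        rw [pow_mul, sq_abs, ← pow_mul]
      have e5 : √|q.2 - p.2| ^ (2 * m) = (q.2 - p.2) ^ m := by
        rw [pow_mul, Real.sq_sqrt (abs_nonneg _), abs_of_nonneg (by linarith)]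
      rw [e4, e5] at e3
      refine e3.trans (mul_le_mul_of_nonneg_right (pow_le_pow_right₀ one_le_two (by omega)) ?_)
      rw [← e4, ← e5]; positivity
    have e6 : min 1 (a0 ^ m) * ((q.1 - p.1) ^ (2 * m) + (q.2 - p.2) ^ m)
        ≤ (q.1 - p.1) ^ (2 * m) + (a0 * (q.2 - p.2)) ^ m := by
      have n1 : 0 ≤ (q.1 - p.1) ^ (2 * m) := by rw [pow_mul]; positivity
      have n2 : 0 ≤ (q.2 - p.2) ^ m := pow_nonneg (by linarith) m
      rw [mul_pow, mul_add]
      have := mul_le_mul_of_nonneg_right (min_le_left 1 (a0 ^ m)) n1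
      have := mul_le_mul_of_nonneg_right (min_le_right 1 (a0 ^ m)) n2
      linarith
    calc c' * om p q ^ (2 * m) ≤ c' * (2 ^ (2 * m) * ((q.1 - p.1) ^ (2 * m) + (q.2 - p.2) ^ m)) := by
          gcongr
      _ = |A| * (c * (min 1 (a0 ^ m) * ((q.1 - p.1) ^ (2 * m) + (q.2 - p.2) ^ m))) := by
          rw [hc']; field_simp
      _ ≤ |A| * (c * ((q.1 - p.1) ^ (2 * m) + (a0 * (q.2 - p.2)) ^ m)) := by gcongr
      _ ≤ |A| * HP p a0 (2 * m) q := by unfold HP; gcongr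
  rw [h4, zero_sub, abs_neg, abs_mul] at hF'
  have h5 : |A| * HP p a0 (2 * m) q ≤ |A| * |HP p a0 (2 * m) q| := by
    gcongr; exact le_abs_self _
  have h6 : c' * om p q ^ (2 * m) ≤ C * om p q * om p q ^ (2 * m) := by
    calc _ ≤ _ := hlow.trans (h5.trans hF')
      _ = _ := by ring
  have h7 : om p q = 0 := by
    by_contra hne
    have hp0 : 0 < om p q := lt_of_le_of_ne hom0 (Ne.symm hne)
    have h8 := le_of_mul_le_mul_right h6 (by positivity)
    have h9 : (C + 1) * η = c' := by simp only [η]; field_simp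
    nlinarith
  unfold om at h7
  have n1 := abs_nonneg (q.1 - p.1)
  have n2 := Real.sqrt_nonneg |q.2 - p.2|
  have z1 : |q.1 - p.1| = 0 := by linarith
  have z2 : √|q.2 - p.2| = 0 := by linarith
  rw [Real.sqrt_eq_zero (abs_nonneg _), abs_eq_zero] at z2
  rw [abs_eq_zero] at z1
  exact Prod.ext (by linarith) (by linarith)

theorem rolle_slice (sv : Sm (Qs x1 x2 t0 t1) v) {x y t : ℝ} (hx : x ∈ Icc x1 x2)
    (hy : y ∈ Icc x1 x2) (ht : t ∈ Ioo t0 t1) (hxy : x < y) (h1 : v (x, t) = 0) (h2 : v (y, t) = 0) :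
    ∃ z ∈ Ioo x y, dX (Qs x1 x2 t0 t1) v (z, t) = 0 := by
  refine exists_hasDerivAt_eq_zero (f := fun x => v (x, t)) hxy ?_ (h1.trans h2.symm) ?_
  · intro z hz
    exact ((slice_x sv (⟨hx.1.trans hz.1, hz.2.trans hy.2⟩) ht).continuousWithinAt).mono
      (Icc_subset_Icc hx.1 hy.2)
  · intro z hz
    exact slice_x_at sv ⟨hx.1.trans_lt hz.1, hz.2.trans_le hy.2⟩ ht

theorem right_lemma (h12 : x1 < x2) (hp : p ∈ Qs x1 x2 t0 t1)
    (sa : Sm (Qs x1 x2 t0 t1) a) (sb : Sm (Qs x1 x2 t0 t1) b) (sc : Sm (Qs x1 x2 t0 t1) c)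
    (sv : Sm (Qs x1 x2 t0 t1) v) (h : PDE (Qs x1 x2 t0 t1) a b c v) (ha : 0 < a p) (k : ℕ)
    (h0 : ∀ i < k, (dX (Qs x1 x2 t0 t1))^[i] v p = 0) (hA : (dX (Qs x1 x2 t0 t1))^[k] v p ≠ 0) :
    ∃ δ > 0, ∀ t ∈ Ioo t0 t1, p.2 ≤ t → t < p.2 + δ → ∀ x ∈ Icc x1 x2, ∀ y ∈ Icc x1 x2,
      |x - p.1| < δ → |y - p.1| < δ → v (x, t) = 0 → v (y, t) = 0 → x = y := by
  have hQ := good_Qs (t0 := t0) (t1 := t1) h12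
  have hO := expand h12 hp sa sb sc sv h k h0
  set A := (dX (Qs x1 x2 t0 t1))^[k] v p
  have sH : ∀ k, Sm (Qs x1 x2 t0 t1) (HP p (a p) k) := fun k => HP_sm k
  have sAH : ∀ k, Sm (Qs x1 x2 t0 t1) ((fun _ => -A) * HP p (a p) k) := fun k =>
    contDiffOn_const.mul (sH k)
  rcases Nat.even_or_odd' k with ⟨m, rfl | rfl⟩
  · obtain ⟨C, r, hC, hr, hb⟩ := hO.bound h12 hp (sv.plus (sAH _))
    obtain ⟨δ, hδ, hd⟩ := dominate (F := v) (S := Qs x1 x2 t0 t1) ha hA hC hr m (by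
      intro q hq h1 h2
      have := hb q hq h1 h2
      simp only [Pi.add_apply, Pi.mul_apply, neg_mul, ← sub_eq_add_neg] at this
      exact this)
    refine ⟨δ, hδ, fun t ht h1 h2 x hx y hy hxd hyd hvx hvy => ?_⟩
    have ht' : |t - p.2| < δ := by rw [abs_of_nonneg] <;> linarith
    have e1 := hd (x, t) ⟨hx, ht⟩ hxd ht' h1 hvx
    have e2 := hd (y, t) ⟨hy, ht⟩ hyd ht' h1 hvy
    exact congrArg Prod.fst (e1.trans e2.symm)
  · have hO' := hO.dx
    obtain ⟨C, r, hC, hr, hb⟩ := hO'.bound h12 hp ((sv.plus (sAH _)).dX hQ)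
    obtain ⟨δ, hδ, hd⟩ := dominate (F := dX (Qs x1 x2 t0 t1) v) (S := Qs x1 x2 t0 t1) ha hA hC hr m (by
      intro q hq h1 h2
      have := hb q hq h1 h2
      rw [dX_add hQ sv (sAH _) hq, Pi.add_apply, dX_cmul hQ (-A) (sH _) hq, Pi.mul_apply,
        HP_dX h12 _ hq, neg_mul, ← sub_eq_add_neg] at this
      exact this)
    have hv0 : v p = 0 := h0 0 (by omega)
    have key : ∀ t ∈ Ioo t0 t1, p.2 ≤ t → t < p.2 + δ → ∀ x ∈ Icc x1 x2, ∀ y ∈ Icc x1 x2,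
      |x - p.1| < δ → |y - p.1| < δ → v (x, t) = 0 → v (y, t) = 0 → x < y → False := by
      intro t ht h1 h2 x hx y hy hxd hyd hvx hvy hxy
      have ht' : |t - p.2| < δ := by rw [abs_of_nonneg] <;> linarith
      have hz : ∀ z ∈ Ioo x y, |z - p.1| < δ := by
        intro z hz
        rw [abs_lt] at *
        constructor <;> linarith [hz.1, hz.2]
      have hzI : ∀ z ∈ Ioo x y, z ∈ Icc x1 x2 := fun z hz => ⟨by linarith [hz.1, hx.1], by linarith [hz.2, hy.2]⟩
      obtain ⟨z, hzz, hz0⟩ := rolle_slice sv hx hy ht hxy hvx hvy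
      have e1 := hd (z, t) ⟨hzI z hzz, ht⟩ (hz z hzz) ht' h1 hz0
      have e2 : t = p.2 := congrArg Prod.snd e1
      have e3 : z = p.1 := congrArg Prod.fst e1
      obtain ⟨w, hw, hw0⟩ := rolle_slice sv hx (hzI z hzz) ht hzz.1 hvx (by rw [e1]; exact hv0)
      have hw' : w ∈ Ioo x y := ⟨hw.1, hw.2.trans hzz.2⟩
      have e4 := hd (w, t) ⟨hzI w hw', ht⟩ (hz w hw') ht' h1 hw0
      have e5 : w = p.1 := congrArg Prod.fst e4
      linarith [hw.2]
    refine ⟨δ, hδ, fun t ht h1 h2 x hx y hy hxd hyd hvx hvy => ?_⟩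
    rcases lt_trichotomy x y with hlt | heq | hgt
    · exact (key t ht h1 h2 x hx y hy hxd hyd hvx hvy hlt).elim
    · exact heq
    · exact (key t ht h1 h2 y hy x hx hyd hxd hvy hvx hgt).elim

theorem left_sign (h12 : x1 < x2) (hp : p ∈ Qs x1 x2 t0 t1) (hpi : p.1 ∈ Ioo x1 x2)
    (sa : Sm (Qs x1 x2 t0 t1) a) (sb : Sm (Qs x1 x2 t0 t1) b) (sc : Sm (Qs x1 x2 t0 t1) c)
    (sv : Sm (Qs x1 x2 t0 t1) v) (h : PDE (Qs x1 x2 t0 t1) a b c v) (ha : 0 < a p) (k : ℕ)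
    (h0 : ∀ i < k, (dX (Qs x1 x2 t0 t1))^[i] v p = 0) (y : ℝ)
    (hA : (dX (Qs x1 x2 t0 t1))^[k] v p * ZN.hp k y (-1) ≠ 0) :
    ∀ᶠ r in nhdsWithin (0:ℝ) (Ioi 0), (p.1 + r * y, p.2 - r ^ 2 / a p) ∈ Qs x1 x2 t0 t1 ∧
      0 < v (p.1 + r * y, p.2 - r ^ 2 / a p) * ((dX (Qs x1 x2 t0 t1))^[k] v p * ZN.hp k y (-1)) := by
  have hO := expand h12 hp sa sb sc sv h k h0
  set A := (dX (Qs x1 x2 t0 t1))^[k] v p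
  have sAH : Sm (Qs x1 x2 t0 t1) ((fun _ => -A) * HP p (a p) k) :=
    contDiffOn_const.mul (HP_sm k)
  obtain ⟨C, ρ, hC, hρ, hb⟩ := hO.bound h12 hp (sv.plus sAH)
  set B := A * ZN.hp k y (-1) with hB
  set D := |y| + √(1 / a p) with hD
  have hD0 : 0 ≤ D := by positivity
  have hB0 : 0 < |B| := abs_pos.2 hA
  have c1 : Tendsto (fun r : ℝ => p.1 + r * y) (nhdsWithin 0 (Ioi 0)) (nhds p.1) := by
    have : Continuous (fun r : ℝ => p.1 + r * y) := by fun_prop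
    have := this.tendsto 0
    simp only [zero_mul, add_zero] at this
    exact this.mono_left nhdsWithin_le_nhds
  have c2 : Tendsto (fun r : ℝ => p.2 - r ^ 2 / a p) (nhdsWithin 0 (Ioi 0)) (nhds p.2) := by
    have : Continuous (fun r : ℝ => p.2 - r ^ 2 / a p) := by fun_prop
    have := this.tendsto 0
    simp only [ne_eq, OfNat.ofNat_ne_zero, not_false_eq_true, zero_pow, zero_div, sub_zero] at this
    exact this.mono_left nhdsWithin_le_nhds
  have c3 : Tendsto (fun r : ℝ => C * D ^ (k + 1) * r) (nhdsWithin 0 (Ioi 0)) (nhds 0) := by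
    have : Continuous (fun r : ℝ => C * D ^ (k + 1) * r) := by fun_prop
    have := this.tendsto 0
    simp only [mul_zero] at this
    exact this.mono_left nhdsWithin_le_nhds
  filter_upwards [c1 (Ioo_mem_nhds hpi.1 hpi.2), c2 (Ioo_mem_nhds hp.2.1 hp.2.2),
    c1 (Metric.ball_mem_nhds _ hρ), c2 (Metric.ball_mem_nhds _ hρ), c3 (Iio_mem_nhds hB0),
    self_mem_nhdsWithin] with r m1 m2 m3 m4 m5 m6
  have hr : 0 < r := m6
  have m5 : C * D ^ (k + 1) * r < |B| := m5
  have hq : (p.1 + r * y, p.2 - r ^ 2 / a p) ∈ Qs x1 x2 t0 t1 := ⟨Ioo_subset_Icc_self m1, m2⟩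
  refine ⟨hq, ?_⟩
  have hb' := hb _ hq m3 m4
  have e1 : HP p (a p) k (p.1 + r * y, p.2 - r ^ 2 / a p) = r ^ k * ZN.hp k y (-1) := by
    rw [← hp_scale]
    simp only [HP]
    congr 1
    · ring
    · field_simp; ring
  have e2 : om p (p.1 + r * y, p.2 - r ^ 2 / a p) = r * D := by
    simp only [om, hD]
    have : |p.2 - r ^ 2 / a p - p.2| = r ^ 2 * (1 / a p) := by
      rw [show p.2 - r ^ 2 / a p - p.2 = -(r ^ 2 * (1 / a p)) by ring, abs_neg]
      exact abs_of_nonneg (by positivity)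
    rw [this, Real.sqrt_mul (by positivity), Real.sqrt_sq hr.le, add_sub_cancel_left, abs_mul,
      abs_of_pos hr]
    ring
  rw [e2, Pi.add_apply, Pi.mul_apply, e1] at hb'
  set V := v (p.1 + r * y, p.2 - r ^ 2 / a p)
  have e3 : V + -A * (r ^ k * ZN.hp k y (-1)) = V - r ^ k * B := by rw [hB]; ring
  rw [e3, mul_pow] at hb'
  have hrk : 0 < r ^ k := by positivity
  have e4 : |V - r ^ k * B| < r ^ k * |B| := by
    refine hb'.trans_lt ?_
    calc C * (r ^ (k + 1) * D ^ (k + 1)) = r ^ k * (C * D ^ (k + 1) * r) := by ring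
      _ < r ^ k * |B| := by gcongr
  have e5 : |V * B - r ^ k * (B * B)| < r ^ k * (B * B) := by
    have : V * B - r ^ k * (B * B) = (V - r ^ k * B) * B := by ring
    rw [this, abs_mul]
    calc |V - r ^ k * B| * |B| < r ^ k * |B| * |B| := by gcongr
      _ = r ^ k * (B * B) := by rw [mul_assoc, abs_mul_abs_self]
  linarith [(abs_lt.1 e5).1]

theorem left_zero (h12 : x1 < x2) (hp : p ∈ Qs x1 x2 t0 t1) (hpi : p.1 ∈ Ioo x1 x2)
    (sa : Sm (Qs x1 x2 t0 t1) a) (sb : Sm (Qs x1 x2 t0 t1) b) (sc : Sm (Qs x1 x2 t0 t1) c)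
    (sv : Sm (Qs x1 x2 t0 t1) v) (h : PDE (Qs x1 x2 t0 t1) a b c v) (ha : 0 < a p) (k : ℕ)
    (h0 : ∀ i < k, (dX (Qs x1 x2 t0 t1))^[i] v p = 0) (hA : (dX (Qs x1 x2 t0 t1))^[k] v p ≠ 0)
    {y z : ℝ} (hyz : y < z) (hs : ZN.hp k y (-1) * ZN.hp k z (-1) < 0) :
    ∀ᶠ r in nhdsWithin (0:ℝ) (Ioi 0), ∃ w ∈ Ioo y z, p.1 + r * w ∈ Icc x1 x2 ∧
      v (p.1 + r * w, p.2 - r ^ 2 / a p) = 0 := by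
  have hy : ZN.hp k y (-1) ≠ 0 := fun h => by rw [h, zero_mul] at hs; exact lt_irrefl _ hs
  have hz : ZN.hp k z (-1) ≠ 0 := fun h => by rw [h, mul_zero] at hs; exact lt_irrefl _ hs
  filter_upwards [left_sign h12 hp hpi sa sb sc sv h ha k h0 y (mul_ne_zero hA hy),
    left_sign h12 hp hpi sa sb sc sv h ha k h0 z (mul_ne_zero hA hz), self_mem_nhdsWithin] with r h1 h2 h3
  have hr : 0 < r := h3
  set A := (dX (Qs x1 x2 t0 t1))^[k] v p
  set t := p.2 - r ^ 2 / a p with ht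
  have hI : ∀ w ∈ Icc y z, p.1 + r * w ∈ Icc x1 x2 := by
    intro w hw
    have i1 := h1.1.1.1
    have i2 := h2.1.1.2
    simp only at i1 i2
    constructor
    · have := mul_le_mul_of_nonneg_left hw.1 hr.le; linarith
    · have := mul_le_mul_of_nonneg_left hw.2 hr.le; linarith
  have hc : ContinuousOn (fun w => v (p.1 + r * w, t)) (Icc y z) := by
    refine sv.continuousOn.comp (f := fun w : ℝ => (p.1 + r * w, t)) (by fun_prop) ?_
    exact fun w hw => ⟨hI w hw, h1.1.2⟩
  have hneg : v (p.1 + r * y, t) * v (p.1 + r * z, t) < 0 := by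
    have e := mul_pos h1.2 h2.2
    have hA2 : 0 < A ^ 2 := by positivity
    have e2 : 0 < v (p.1 + r * y, t) * v (p.1 + r * z, t) * (A ^ 2 * (ZN.hp k y (-1) * ZN.hp k z (-1))) := by
      calc (0:ℝ) < _ := e
        _ = _ := by ring
    have e3 : A ^ 2 * (ZN.hp k y (-1) * ZN.hp k z (-1)) < 0 := mul_neg_of_pos_of_neg hA2 hs
    by_contra hcon
    push Not at hcon
    have := mul_nonpos_of_nonneg_of_nonpos hcon e3.le
    linarith
  have : ∃ w ∈ Ioo y z, v (p.1 + r * w, t) = 0 := by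
    rcases mul_neg_iff.1 hneg with ⟨q1, q2⟩ | ⟨q1, q2⟩
    · obtain ⟨w, hw, hw0⟩ := intermediate_value_Ioo' hyz.le hc ⟨q2, q1⟩
      exact ⟨w, hw, hw0⟩
    · obtain ⟨w, hw, hw0⟩ := intermediate_value_Ioo hyz.le hc ⟨q1, q2⟩
      exact ⟨w, hw, hw0⟩
  obtain ⟨w, hw, hw0⟩ := this
  exact ⟨w, hw, hI w (Ioo_subset_Icc_self hw), hw0⟩

theorem left_lemma (h12 : x1 < x2) (hp : p ∈ Qs x1 x2 t0 t1) (hpi : p.1 ∈ Ioo x1 x2)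
    (sa : Sm (Qs x1 x2 t0 t1) a) (sb : Sm (Qs x1 x2 t0 t1) b) (sc : Sm (Qs x1 x2 t0 t1) c)
    (sv : Sm (Qs x1 x2 t0 t1) v) (h : PDE (Qs x1 x2 t0 t1) a b c v) (ha : 0 < a p) (k : ℕ)
    (h0 : ∀ i < k, (dX (Qs x1 x2 t0 t1))^[i] v p = 0) (hA : (dX (Qs x1 x2 t0 t1))^[k] v p ≠ 0)
    (hk : k ≠ 0) {ε : ℝ} (hε : 0 < ε) :
    ∀ᶠ t in nhdsWithin p.2 (Iio p.2), ∃ x ∈ Icc x1 x2, ∃ y ∈ Icc x1 x2, |x - p.1| < ε ∧ |y - p.1| < ε ∧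
      v (x, t) = 0 ∧ v (y, t) = 0 ∧ (k ≠ 1 → x ≠ y) := by
  have key : ∀ᶠ r in nhdsWithin (0:ℝ) (Ioi 0), ∃ x ∈ Icc x1 x2, ∃ y ∈ Icc x1 x2,
      |x - p.1| < ε ∧ |y - p.1| < ε ∧ v (x, p.2 - r ^ 2 / a p) = 0 ∧ v (y, p.2 - r ^ 2 / a p) = 0
        ∧ (k ≠ 1 → x ≠ y) := by
    have hsmall : ∀ M : ℝ, 0 < M → ∀ᶠ r in nhdsWithin (0:ℝ) (Ioi 0), r * M < ε := by
      intro M hM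
      filter_upwards [Ioo_mem_nhdsGT (show (0:ℝ) < ε / M by positivity)] with r hr
      exact (lt_div_iff₀ hM).1 hr.2
    have habs : ∀ w y z r : ℝ, 0 < r → w ∈ Ioo y z → r * (|y| + |z| + 1) < ε → |p.1 + r * w - p.1| < ε := by
      intro w y z r hr hw hM
      rw [add_sub_cancel_left, abs_mul, abs_of_pos hr]
      refine lt_of_le_of_lt (mul_le_mul_of_nonneg_left ?_ hr.le) hM
      rw [abs_le]
      constructor
      · linarith [hw.1, neg_abs_le y, abs_nonneg z]
      · linarith [hw.2, le_abs_self z, abs_nonneg y]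
    by_cases hk1 : k = 1
    · subst hk1
      have hs : ZN.hp 1 (-1) (-1) * ZN.hp 1 1 (-1) < 0 := by simp [ZN.hp]
      filter_upwards [left_zero h12 hp hpi sa sb sc sv h ha 1 h0 hA (by norm_num) hs,
        hsmall (|(-1:ℝ)| + |(1:ℝ)| + 1) (by positivity), self_mem_nhdsWithin] with r h1 h2 h3
      obtain ⟨w, hw, hwI, hw0⟩ := h1
      exact ⟨_, hwI, _, hwI, habs w _ _ r h3 hw h2, habs w _ _ r h3 hw h2, hw0, hw0, fun h => (h rfl).elim⟩
    · obtain ⟨n, rfl⟩ : ∃ n, k = n + 2 := ⟨k - 2, by omega⟩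
      obtain ⟨y1, y2, y3, h12', h23, s1, s2⟩ := hp_alt n
      filter_upwards [left_zero h12 hp hpi sa sb sc sv h ha _ h0 hA h12' s1,
        left_zero h12 hp hpi sa sb sc sv h ha _ h0 hA h23 s2,
        hsmall (|y1| + |y2| + 1) (by positivity), hsmall (|y2| + |y3| + 1) (by positivity),
        self_mem_nhdsWithin] with r h1 h2 h3 h4 h5
      obtain ⟨w, hw, hwI, hw0⟩ := h1
      obtain ⟨u, hu, huI, hu0⟩ := h2
      refine ⟨_, hwI, _, huI, habs w _ _ r h5 hw h3, habs u _ _ r h5 hu h4, hw0, hu0, fun _ he => ?_⟩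
      have hr : (0:ℝ) < r := h5
      have : r * w < r * u := mul_lt_mul_of_pos_left (hw.2.trans hu.1) hr
      linarith
  have htend : Tendsto (fun t => √(a p * (p.2 - t))) (nhdsWithin p.2 (Iio p.2)) (nhdsWithin 0 (Ioi 0)) := by
    refine tendsto_nhdsWithin_iff.2 ⟨?_, ?_⟩
    · have : Continuous (fun t => √(a p * (p.2 - t))) := by fun_prop
      have := this.tendsto p.2
      simp only [sub_self, mul_zero, Real.sqrt_zero] at this
      exact this.mono_left nhdsWithin_le_nhds
    · filter_upwards [self_mem_nhdsWithin] with t ht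
      have ht : t < p.2 := ht
      exact Real.sqrt_pos.2 (mul_pos ha (by linarith))
  filter_upwards [htend.eventually key, self_mem_nhdsWithin] with t ht htt
  have htt : t < p.2 := htt
  have : p.2 - √(a p * (p.2 - t)) ^ 2 / a p = t := by
    rw [Real.sq_sqrt (mul_nonneg ha.le (by linarith))]
    field_simp; ring
  rw [this] at ht
  exact ht

end loc

end ZN


namespace ZN

theorem mono_Ico {f f' : ℝ → ℝ} {s T : ℝ} (h : ∀ t ∈ Ico s T, HasDerivAt f (f' t) t)
    (h0 : ∀ t ∈ Ico s T, 0 ≤ f' t) : ∀ t ∈ Ico s T, f s ≤ f t := by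
  have hm : MonotoneOn f (Ico s T) := by
    refine monotoneOn_of_deriv_nonneg (convex_Ico s T)
      (fun t ht => (h t ht).continuousAt.continuousWithinAt) ?_ ?_
    · intro t ht
      exact (h t (interior_subset ht)).differentiableAt.differentiableWithinAt
    · intro t ht
      rw [(h t (interior_subset ht)).deriv]
      exact h0 t (interior_subset ht)
  intro t ht
  exact hm ⟨le_refl _, ht.1.trans_lt ht.2⟩ ht ht.1

set_option maxHeartbeats 800000 in
theorem ode_lower {s0 T C : ℝ} (hs : s0 < T) (h1 : T - s0 ≤ 1) (hC : 0 ≤ C) {H I H' I' : ℝ → ℝ}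
    (hH : ∀ t ∈ Ico s0 T, HasDerivAt H (H' t) t) (hI : ∀ t ∈ Ico s0 T, HasDerivAt I (I' t) t)
    (hH0 : ∀ t ∈ Ico s0 T, 0 ≤ H t) (hI0 : ∀ t ∈ Ico s0 T, 0 ≤ I t)
    (key : ∀ t ∈ Ico s0 T, ∃ KK FF p q : ℝ, p ^ 2 ≤ H t * KK ∧ 0 ≤ KK ∧ H' t = 2 * p + 2 * q ∧
      I t = -p + q ∧ I' t ≤ I t / (T - t) - 2 * (KK - FF / 4) ∧ FF ≤ C * (H t + I t) ∧
      |q| ≤ C * (H t + I t)) (hpos : 0 < H s0) :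
    ∃ n : ℕ, ∃ c > 0, ∀ t ∈ Ico s0 T, c * (T - t) ^ n ≤ H t := by
  have hs0 : s0 ∈ Ico s0 T := ⟨le_refl _, hs⟩
  set B := (1 + (T - s0) * I s0 / H s0) * Real.exp C with hB
  have hNs : 0 ≤ (T - s0) * I s0 / H s0 :=
    div_nonneg (mul_nonneg (by linarith) (hI0 s0 hs0)) hpos.le
  have hB0 : 0 ≤ B := by positivity
  obtain ⟨n, hn⟩ := exists_nat_ge ((2 + 4 * C) * B + 4 * C)
  have main : ∀ ε > 0, ∀ t ∈ Ico s0 T, (H s0 / (T - s0) ^ n) * (T - t) ^ n ≤ H t + ε := by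
    intro ε hε
    have hG : ∀ t ∈ Ico s0 T, 0 < H t + ε := fun t ht => by linarith [hH0 t ht]
    have hτ : ∀ t ∈ Ico s0 T, 0 < T - t ∧ T - t ≤ 1 := fun t ht =>
      ⟨by linarith [ht.2], by linarith [ht.1]⟩
    set N : ℝ → ℝ := fun t => (T - t) * I t / (H t + ε) with hN
    have dN : ∀ t ∈ Ico s0 T, HasDerivAt N
        ((((-1) * I t + (T - t) * I' t) * (H t + ε) - (T - t) * I t * H' t) / (H t + ε) ^ 2) t := by
      intro t ht
      have hτd : HasDerivAt (fun t => T - t) (-1) t := by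
        simpa using (hasDerivAt_id t).const_sub T
      exact (hτd.mul (hI t ht)).div ((hH t ht).add_const ε) (hG t ht).ne'
    have bN : ∀ t ∈ Ico s0 T,
        (((-1) * I t + (T - t) * I' t) * (H t + ε) - (T - t) * I t * H' t) / (H t + ε) ^ 2
          ≤ C * (1 + N t) := by
      intro t ht
      obtain ⟨KK, FF, p, q, c1, c0, c2, c3, c4, c5, c6⟩ := key t ht
      have hg := hG t ht
      obtain ⟨hτ0, hτ1⟩ := hτ t ht
      have hh := hH0 t ht
      have hi := hI0 t ht
      rw [div_le_iff₀ (by positivity)]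
      have e1 : C * (1 + N t) * (H t + ε) ^ 2 = C * (H t + ε + (T - t) * I t) * (H t + ε) := by
        simp only [hN]; field_simp
      rw [e1]
      have e2 : (T - t) * I' t ≤ I t - 2 * (T - t) * (KK - FF / 4) := by
        have := mul_le_mul_of_nonneg_left c4 hτ0.le
        have e : (T - t) * (I t / (T - t) - 2 * (KK - FF / 4)) = I t - 2 * (T - t) * (KK - FF / 4) := by
          field_simp
        linarith
      have e3 : ((-1) * I t + (T - t) * I' t) * (H t + ε) ≤ (- 2 * (T - t) * (KK - FF / 4)) * (H t + ε) := by
        gcongr; linarith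
      have e4 : (T - t) * I t * H' t = 2 * (T - t) * (q ^ 2 - p ^ 2) := by
        rw [c2, c3]; ring
      rw [e4]
      have e5 : 2 * (T - t) * p ^ 2 ≤ 2 * (T - t) * (KK * (H t + ε)) := by
        gcongr
        nlinarith
      have e6 : 0 ≤ 2 * (T - t) * q ^ 2 := by positivity
      have e7 : (T - t) * FF / 2 * (H t + ε) ≤ C * (H t + ε + (T - t) * I t) * (H t + ε) := by
        gcongr
        have f1 : (T - t) * FF ≤ (T - t) * (C * (H t + I t)) := by gcongr
        have f2 : (T - t) * (C * H t) ≤ 1 * (C * H t) := by gcongr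
        have f3 : 0 ≤ (T - t) * (C * I t) := by positivity
        have f4 : 0 ≤ C * H t := by positivity
        have f5 : 0 ≤ C * ε := by positivity
        linarith
      linarith
    have hNB : ∀ t ∈ Ico s0 T, 1 + N t ≤ B := by
      intro t ht
      have hd : ∀ t ∈ Ico s0 T, HasDerivAt (fun t => -((1 + N t) * Real.exp (-C * t)))
          (-(((((-1) * I t + (T - t) * I' t) * (H t + ε) - (T - t) * I t * H' t) / (H t + ε) ^ 2)
            * Real.exp (-C * t) + (1 + N t) * (Real.exp (-C * t) * (-C)))) t := by
        intro t ht
        have h2 : HasDerivAt (fun t : ℝ => Real.exp (-C * t)) (Real.exp (-C * t) * (-C)) t := by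
          simpa using ((hasDerivAt_id t).const_mul (-C)).exp
        exact (((dN t ht).const_add 1).mul h2).neg
      have := mono_Ico hd (by
        intro t ht
        have := bN t ht
        have e := Real.exp_pos (-C * t)
        nlinarith [mul_le_mul_of_nonneg_right this e.le]) t ht
      have h2 : (1 + N t) * Real.exp (-C * t) ≤ (1 + N s0) * Real.exp (-C * s0) := by linarith
      have h3 : 1 + N t ≤ (1 + N s0) * Real.exp (C * (t - s0)) := by
        have e := Real.exp_pos (C * t)
        have := mul_le_mul_of_nonneg_right h2 e.le
        rw [mul_assoc, mul_assoc, ← Real.exp_add, ← Real.exp_add] at this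
        have z : -C * t + C * t = 0 := by ring
        have z2 : -C * s0 + C * t = C * (t - s0) := by ring
        rw [z, z2, Real.exp_zero, mul_one] at this
        exact this
      refine h3.trans ?_
      have h4 : N s0 ≤ (T - s0) * I s0 / H s0 := by
        simp only [hN]
        have := hI0 s0 hs0
        gcongr
        linarith
      have h5 : Real.exp (C * (t - s0)) ≤ Real.exp C := by
        apply Real.exp_le_exp.2
        have : t - s0 ≤ 1 := by linarith [ht.2]
        nlinarith
      have h6 : 0 ≤ N s0 := div_nonneg (mul_nonneg (by linarith) (hI0 s0 hs0)) (hG s0 hs0).le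
      rw [hB]
      gcongr
    intro t ht
    have hd : ∀ t ∈ Ico s0 T, HasDerivAt (fun t => Real.log (H t + ε) - n * Real.log (T - t))
        (H' t / (H t + ε) - n * (-1 / (T - t))) t := by
      intro t ht
      have hτd : HasDerivAt (fun t => T - t) (-1) t := by
        simpa using (hasDerivAt_id t).const_sub T
      exact (((hH t ht).add_const ε).log (hG t ht).ne').sub ((hτd.log (hτ t ht).1.ne').const_mul _)
    have := mono_Ico hd (by
      intro t ht
      obtain ⟨KK, FF, p, q, c1, c0, c2, c3, c4, c5, c6⟩ := key t ht
      have hg := hG t ht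
      obtain ⟨hτ0, hτ1⟩ := hτ t ht
      have hh := hH0 t ht
      have hi := hI0 t ht
      have e1 : (T - t) * I t ≤ B * (H t + ε) := by
        have : N t ≤ B := by linarith [hNB t ht]
        simp only [hN] at this
        rwa [div_le_iff₀ hg] at this
      have e2 : H' t = -2 * I t + 4 * q := by rw [c2, c3]; ring
      have e3 := neg_le_of_abs_le c6
      have e4 : -((2 + 4 * C) * ((T - t) * I t)) - 4 * C * (H t + ε) ≤ (T - t) * H' t := by
        rw [e2]
        have f1 : (T - t) * (-(C * (H t + I t))) ≤ (T - t) * q := by gcongr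
        have f2 : (T - t) * (C * H t) ≤ 1 * (C * H t) := by gcongr
        have f5 : 0 ≤ C * ε := by positivity
        linarith
      have e5 : (2 + 4 * C) * ((T - t) * I t) ≤ (2 + 4 * C) * (B * (H t + ε)) := by gcongr
      have e6 : ((2 + 4 * C) * B + 4 * C) * (H t + ε) ≤ n * (H t + ε) := by gcongr
      have e7 : -(n * (H t + ε)) ≤ (T - t) * H' t := by linarith
      have e8 : H' t / (H t + ε) - n * (-1 / (T - t)) =
          ((T - t) * H' t + n * (H t + ε)) / ((H t + ε) * (T - t)) := by
        field_simp; ring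
      rw [e8]
      apply div_nonneg (by linarith) (by positivity)) t ht
    have hg := hG t ht
    have hg0 := hG s0 hs0
    obtain ⟨hτ0, hτ1⟩ := hτ t ht
    obtain ⟨hσ0, hσ1⟩ := hτ s0 hs0
    have e1 : Real.log ((H s0 + ε) / (T - s0) ^ n * (T - t) ^ n) ≤ Real.log (H t + ε) := by
      rw [Real.log_mul (by positivity) (by positivity), Real.log_div (by positivity) (by positivity),
        Real.log_pow, Real.log_pow]
      linarith
    rw [Real.log_le_log_iff (by positivity) hg] at e1
    refine le_trans ?_ e1
    gcongr
    linarith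
  refine ⟨n, H s0 / (T - s0) ^ n, ?_, fun t ht => ?_⟩
  · have : 0 < T - s0 := by linarith
    positivity
  · exact le_of_forall_pos_le_add (fun ε hε => main ε hε t ht)

open MeasureTheory in
theorem leib {x1 x2 t0 T α β t : ℝ} {F F' : ℝ × ℝ → ℝ}
    (hF : ContinuousOn F (Icc x1 x2 ×ˢ Ioo t0 T)) (hF' : ContinuousOn F' (Icc x1 x2 ×ˢ Ioo t0 T))
    (hd : ∀ x ∈ Icc x1 x2, ∀ t ∈ Ioo t0 T, HasDerivAt (fun s => F (x, s)) (F' (x, t)) t)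
    (ht : t ∈ Ioo t0 T) (hα : α ∈ Icc x1 x2) (hβ : β ∈ Icc x1 x2) :
    HasDerivAt (fun s => ∫ x in α..β, F (x, s)) (∫ x in α..β, F' (x, t)) t := by
  obtain ⟨δ, hδ, hball⟩ := Metric.isOpen_iff.1 (isOpen_Ioo (a := t0) (b := T)) t ht
  have hsub : Icc (t - δ / 2) (t + δ / 2) ⊆ Ioo t0 T := by
    intro s hs
    apply hball
    rw [Metric.mem_ball, Real.dist_eq, abs_lt]
    constructor <;> linarith [hs.1, hs.2]
  have hK : IsCompact (Icc x1 x2 ×ˢ Icc (t - δ / 2) (t + δ / 2)) := isCompact_Icc.prod isCompact_Icc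
  obtain ⟨C, hC⟩ := hK.exists_bound_of_continuousOn (hF'.mono (prod_mono le_rfl hsub))
  have huIoc : Set.uIoc α β ⊆ Icc x1 x2 := by
    intro x hx
    have := Set.uIoc_subset_uIcc hx
    exact Set.uIcc_subset_Icc hα hβ this
  have huIcc : Set.uIcc α β ⊆ Icc x1 x2 := Set.uIcc_subset_Icc hα hβ
  have hslice : ∀ G : ℝ × ℝ → ℝ, ContinuousOn G (Icc x1 x2 ×ˢ Ioo t0 T) → ∀ s ∈ Ioo t0 T,
      ContinuousOn (fun x => G (x, s)) (Icc x1 x2) := by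
    intro G hG s hs
    exact hG.comp (f := fun x : ℝ => (x, s)) (by fun_prop) (fun x hx => ⟨hx, hs⟩)
  have hint : ∀ G : ℝ × ℝ → ℝ, ContinuousOn G (Icc x1 x2 ×ˢ Ioo t0 T) → ∀ s ∈ Ioo t0 T,
      IntervalIntegrable (fun x => G (x, s)) volume α β := fun G hG s hs =>
    ((hslice G hG s hs).mono huIcc).intervalIntegrable
  have hnhds : Metric.ball t (δ / 2) ∈ nhds t := Metric.ball_mem_nhds t (by positivity)
  have hbs : Metric.ball t (δ / 2) ⊆ Icc (t - δ / 2) (t + δ / 2) := by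
    intro s hs
    rw [Metric.mem_ball, Real.dist_eq, abs_lt] at hs
    constructor <;> linarith [hs.1, hs.2]
  refine (intervalIntegral.hasDerivAt_integral_of_dominated_loc_of_deriv_le (𝕜 := ℝ) (μ := volume)
    (F := fun s x => F (x, s)) (F' := fun s x => F' (x, s)) (bound := fun _ => C) hnhds ?_
    (hint F hF t ht) (hint F' hF' t ht).def'.aestronglyMeasurable ?_
    intervalIntegrable_const ?_).2
  · filter_upwards [hnhds] with s hs
    exact (hint F hF s (hsub (hbs hs))).def'.aestronglyMeasurable
  · refine Eventually.of_forall (fun x hx s hs => ?_)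
    exact hC (x, s) ⟨huIoc hx, hbs hs⟩
  · refine Eventually.of_forall (fun x hx s hs => ?_)
    exact hd x (huIoc hx) s (hsub (hbs hs))

theorem ftc {x1 x2 : ℝ} (h12 : x1 < x2) {F F' : ℝ → ℝ} (hF : ContinuousOn F (Icc x1 x2))
    (hF' : ContinuousOn F' (Icc x1 x2)) (hd : ∀ x ∈ Ioo x1 x2, HasDerivAt F (F' x) x) :
    ∫ x in x1..x2, F' x = F x2 - F x1 :=
  intervalIntegral.integral_eq_sub_of_hasDerivAt_of_le h12.le hF hd
    (hF'.intervalIntegrable_of_Icc h12.le)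

theorem cauchy_schwarz {x1 x2 : ℝ} (h12 : x1 ≤ x2) {u k r : ℝ → ℝ} (hu : ContinuousOn u (Icc x1 x2))
    (hk : ContinuousOn k (Icc x1 x2)) (hr : ContinuousOn r (Icc x1 x2)) (hr0 : ∀ x ∈ Icc x1 x2, 0 ≤ r x) :
    (∫ x in x1..x2, u x * k x * r x) ^ 2 ≤ (∫ x in x1..x2, u x ^ 2 * r x) * ∫ x in x1..x2, k x ^ 2 * r x := by
  have h : ∀ z : ℝ, 0 ≤ (∫ x in x1..x2, k x ^ 2 * r x) * (z * z)
      + (2 * ∫ x in x1..x2, u x * k x * r x) * z + ∫ x in x1..x2, u x ^ 2 * r x := by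
    intro z
    have i1 : IntervalIntegrable (fun x => k x ^ 2 * r x) MeasureTheory.volume x1 x2 :=
      ((hk.pow 2).mul hr).intervalIntegrable_of_Icc h12
    have i2 : IntervalIntegrable (fun x => u x * k x * r x) MeasureTheory.volume x1 x2 :=
      ((hu.mul hk).mul hr).intervalIntegrable_of_Icc h12
    have i3 : IntervalIntegrable (fun x => u x ^ 2 * r x) MeasureTheory.volume x1 x2 :=
      ((hu.pow 2).mul hr).intervalIntegrable_of_Icc h12
    have e : (∫ x in x1..x2, k x ^ 2 * r x) * (z * z)
      + (2 * ∫ x in x1..x2, u x * k x * r x) * z + ∫ x in x1..x2, u x ^ 2 * r x =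
        ∫ x in x1..x2, (u x + z * k x) ^ 2 * r x := by
      rw [← intervalIntegral.integral_mul_const, ← intervalIntegral.integral_const_mul,
        ← intervalIntegral.integral_mul_const,
        ← intervalIntegral.integral_add (i1.mul_const _) ((i2.const_mul _).mul_const _),
        ← intervalIntegral.integral_add ((i1.mul_const _).add ((i2.const_mul _).mul_const _)) i3]
      congr 1
      ext x
      ring
    rw [e]
    refine intervalIntegral.integral_nonneg h12 (fun x hx => mul_nonneg (sq_nonneg _) (hr0 x hx))
  have := discrim_le_zero h
  unfold discrim at this
  nlinarith

end ZN


namespace ZN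

/-- data for the frequency function -/
structure Fr (x1 x2 s T : ℝ) (w w1 w2 w3 w4 σ σ1 σ2 y e : ℝ × ℝ → ℝ) : Prop where
  h12 : x1 < x2
  cw : ContinuousOn w (Qs x1 x2 s T)
  cw1 : ContinuousOn w1 (Qs x1 x2 s T)
  cw2 : ContinuousOn w2 (Qs x1 x2 s T)
  cw3 : ContinuousOn w3 (Qs x1 x2 s T)
  cw4 : ContinuousOn w4 (Qs x1 x2 s T)
  cσ : ContinuousOn σ (Qs x1 x2 s T)
  cσ1 : ContinuousOn σ1 (Qs x1 x2 s T)
  cσ2 : ContinuousOn σ2 (Qs x1 x2 s T)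
  cy : ContinuousOn y (Qs x1 x2 s T)
  ce : ContinuousOn e (Qs x1 x2 s T)
  wx : ∀ x ∈ Ioo x1 x2, ∀ t ∈ Ioo s T, HasDerivAt (fun z => w (z, t)) (w1 (x, t)) x
  w1x : ∀ x ∈ Ioo x1 x2, ∀ t ∈ Ioo s T, HasDerivAt (fun z => w1 (z, t)) (w2 (x, t)) x
  w3x : ∀ x ∈ Ioo x1 x2, ∀ t ∈ Ioo s T, HasDerivAt (fun z => w3 (z, t)) (w4 (x, t)) x
  σx : ∀ x ∈ Ioo x1 x2, ∀ t ∈ Ioo s T, HasDerivAt (fun z => σ (z, t)) (σ1 (x, t)) x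
  yx : ∀ x ∈ Ioo x1 x2, ∀ t ∈ Ioo s T, HasDerivAt (fun z => y (z, t)) (σ (x, t)) x
  ex : ∀ x ∈ Ioo x1 x2, ∀ t ∈ Ioo s T, HasDerivAt (fun z => e (z, t)) (σ2 (x, t)) x
  wt : ∀ x ∈ Icc x1 x2, ∀ t ∈ Ioo s T, HasDerivAt (fun z => w (x, z)) (w3 (x, t)) t
  w1t : ∀ x ∈ Icc x1 x2, ∀ t ∈ Ioo s T, HasDerivAt (fun z => w1 (x, z)) (w4 (x, t)) t
  σt : ∀ x ∈ Icc x1 x2, ∀ t ∈ Ioo s T, HasDerivAt (fun z => σ (x, z)) (σ2 (x, t)) t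
  yt : ∀ x ∈ Icc x1 x2, ∀ t ∈ Ioo s T, HasDerivAt (fun z => y (x, z)) (e (x, t)) t
  σpos : ∀ q ∈ Qs x1 x2 s T, 0 < σ q
  bw1 : ∀ t ∈ Ioo s T, w (x1, t) = 0
  bw2 : ∀ t ∈ Ioo s T, w (x2, t) = 0
  bξ1 : ∀ t ∈ Ioo s T, e (x1, t) + y (x1, t) * (T - t)⁻¹ / 2 ≤ 0
  bξ2 : ∀ t ∈ Ioo s T, 0 ≤ e (x2, t) + y (x2, t) * (T - t)⁻¹ / 2

noncomputable def Gf (T : ℝ) (y : ℝ × ℝ → ℝ) (q : ℝ × ℝ) : ℝ :=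
  Real.exp (-(y q) ^ 2 / (4 * (T - q.2)) - Real.log (T - q.2) / 2)

noncomputable def Sf (T : ℝ) (w1 w3 σ y e : ℝ × ℝ → ℝ) (q : ℝ × ℝ) : ℝ :=
  w3 q - (e q + y q * (T - q.2)⁻¹ / 2) * (σ q)⁻¹ * w1 q

noncomputable def Lf (T : ℝ) (w1 w2 σ σ1 y : ℝ × ℝ → ℝ) (q : ℝ × ℝ) : ℝ :=
  w2 q * (σ q)⁻¹ ^ 2 - (y q * (T - q.2)⁻¹ / 2 * (σ q)⁻¹ + σ1 q * (σ q)⁻¹ ^ 3) * w1 q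

noncomputable def ff (w1 w2 w3 σ σ1 e : ℝ × ℝ → ℝ) (q : ℝ × ℝ) : ℝ :=
  w3 q - w2 q * (σ q)⁻¹ ^ 2 + (σ1 q * (σ q)⁻¹ ^ 3 - e q * (σ q)⁻¹) * w1 q

section
variable {x1 x2 s T x t : ℝ} {w w1 w2 w3 w4 σ σ1 σ2 y e : ℝ × ℝ → ℝ}

theorem Sf_eq (q : ℝ × ℝ) : Sf T w1 w3 σ y e q = Lf T w1 w2 σ σ1 y q + ff w1 w2 w3 σ σ1 e q := by
  unfold Sf Lf ff; ring

theorem slice_c {F : ℝ × ℝ → ℝ} (h : ContinuousOn F (Qs x1 x2 s T)) (ht : t ∈ Ioo s T) :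
    ContinuousOn (fun x => F (x, t)) (Icc x1 x2) :=
  h.comp (f := fun x : ℝ => (x, t)) (by fun_prop) (fun _ hx => ⟨hx, ht⟩)

theorem slice_int (h12 : x1 < x2) {F : ℝ × ℝ → ℝ} (h : ContinuousOn F (Qs x1 x2 s T)) (ht : t ∈ Ioo s T) :
    IntervalIntegrable (fun x => F (x, t)) MeasureTheory.volume x1 x2 :=
  (slice_c h ht).intervalIntegrable_of_Icc h12.le

theorem Fr.cr (h : Fr x1 x2 s T w w1 w2 w3 w4 σ σ1 σ2 y e) : ContinuousOn (fun q => (σ q)⁻¹) (Qs x1 x2 s T) :=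
  h.cσ.inv₀ (fun q hq => (h.σpos q hq).ne')

theorem c_tau : ContinuousOn (fun q : ℝ × ℝ => (T - q.2)⁻¹) (Qs x1 x2 s T) := by
  refine ContinuousOn.inv₀ (by fun_prop) (fun q hq => ?_)
  have : q.2 < T := hq.2.2
  intro h0; linarith

theorem Fr.cG (h : Fr x1 x2 s T w w1 w2 w3 w4 σ σ1 σ2 y e) : ContinuousOn (Gf T y) (Qs x1 x2 s T) := by
  have h1 : ContinuousOn (fun q : ℝ × ℝ => Real.log (T - q.2)) (Qs x1 x2 s T) := by
    refine ContinuousOn.log (by fun_prop) (fun q hq => ?_)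
    have : q.2 < T := hq.2.2
    intro h0; linarith
  have h2 := c_tau (x1 := x1) (x2 := x2) (s := s) (T := T)
  have hy := h.cy
  have : ContinuousOn (fun q : ℝ × ℝ => Real.exp (-(y q) ^ 2 * (T - q.2)⁻¹ / 4 - Real.log (T - q.2) / 2))
    (Qs x1 x2 s T) := by fun_prop
  refine this.congr (fun q hq => ?_)
  unfold Gf
  congr 2
  rw [div_eq_mul_inv, mul_inv]; ring

theorem Fr.Gx (h : Fr x1 x2 s T w w1 w2 w3 w4 σ σ1 σ2 y e) (hx : x ∈ Ioo x1 x2) (ht : t ∈ Ioo s T) :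
    HasDerivAt (fun z => Gf T y (z, t)) (Gf T y (x, t) * (-(y (x, t) * σ (x, t) * (T - t)⁻¹ / 2))) x := by
  have h1 := (((h.yx x hx t ht).pow 2).neg.div_const (4 * (T - t))).sub_const (Real.log (T - t) / 2)
  refine h1.exp.congr_deriv ?_
  unfold Gf
  simp only
  have htT : t < T := ht.2
  have : T - t ≠ 0 := by intro h0; linarith
  congr 1
  simp
  field_simp
  ring

theorem Fr.Gt (h : Fr x1 x2 s T w w1 w2 w3 w4 σ σ1 σ2 y e) (hx : x ∈ Icc x1 x2) (ht : t ∈ Ioo s T) :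
    HasDerivAt (fun z => Gf T y (x, z)) (Gf T y (x, t) * (-(y (x, t) * e (x, t) * (T - t)⁻¹ / 2)
      - y (x, t) ^ 2 * (T - t)⁻¹ ^ 2 / 4 + (T - t)⁻¹ / 2)) t := by
  have htT : t < T := ht.2
  have h0 : T - t ≠ 0 := by intro h0; linarith
  have hτd : HasDerivAt (fun t => T - t) (-1) t := by
    simpa using (hasDerivAt_id t).const_sub T
  have h1 := (((h.yt x hx t ht).pow 2).neg.div (hτd.const_mul 4) (by simpa using h0)).sub
    ((hτd.log h0).div_const 2)
  refine h1.exp.congr_deriv ?_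
  unfold Gf
  congr 1
  simp
  field_simp
  ring

theorem Fr.bw3 (h : Fr x1 x2 s T w w1 w2 w3 w4 σ σ1 σ2 y e) (ht : t ∈ Ioo s T) : w3 (x1, t) = 0 ∧ w3 (x2, t) = 0 := by
  constructor
  · have h1 := h.wt x1 (left_mem_Icc.2 h.h12.le) t ht
    have h2 : HasDerivAt (fun z => w (x1, z)) 0 t :=
      (hasDerivAt_const t (0:ℝ)).congr_of_eventuallyEq
        (Filter.eventually_of_mem (Ioo_mem_nhds ht.1 ht.2) (fun z hz => h.bw1 z hz))
    exact h1.unique h2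
  · have h1 := h.wt x2 (right_mem_Icc.2 h.h12.le) t ht
    have h2 : HasDerivAt (fun z => w (x2, z)) 0 t :=
      (hasDerivAt_const t (0:ℝ)).congr_of_eventuallyEq
        (Filter.eventually_of_mem (Ioo_mem_nhds ht.1 ht.2) (fun z hz => h.bw2 z hz))
    exact h1.unique h2

theorem Fr.cS (h : Fr x1 x2 s T w w1 w2 w3 w4 σ σ1 σ2 y e) : ContinuousOn (Sf T w1 w3 σ y e) (Qs x1 x2 s T) := by
  have := h.cr; have := c_tau (x1 := x1) (x2 := x2) (s := s) (T := T)
  have := h.cw1; have := h.cw3; have := h.cy; have := h.ce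
  unfold Sf; fun_prop

theorem Fr.cL (h : Fr x1 x2 s T w w1 w2 w3 w4 σ σ1 σ2 y e) : ContinuousOn (Lf T w1 w2 σ σ1 y) (Qs x1 x2 s T) := by
  have := h.cr; have := c_tau (x1 := x1) (x2 := x2) (s := s) (T := T)
  have := h.cw1; have := h.cw2; have := h.cy; have := h.cσ1
  unfold Lf; fun_prop

theorem Fr.cf (h : Fr x1 x2 s T w w1 w2 w3 w4 σ σ1 σ2 y e) : ContinuousOn (ff w1 w2 w3 σ σ1 e) (Qs x1 x2 s T) := by
  have := h.cr
  have := h.cw1; have := h.cw2; have := h.cw3; have := h.ce; have := h.cσ1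
  unfold ff; fun_prop

theorem Fr.dH (h : Fr x1 x2 s T w w1 w2 w3 w4 σ σ1 σ2 y e) (ht : t ∈ Ioo s T) :
    HasDerivAt (fun z => ∫ x in x1..x2, w (x, z) ^ 2 * (Gf T y (x, z) * σ (x, z)))
      (∫ x in x1..x2, 2 * (w (x, t) * Sf T w1 w3 σ y e (x, t) * (Gf T y (x, t) * σ (x, t)))) t := by
  have hr := h.cr; have hκ := c_tau (x1 := x1) (x2 := x2) (s := s) (T := T)
  have hw := h.cw; have hw1 := h.cw1; have hw3 := h.cw3; have hy := h.cy; have he := h.ce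
  have hG := h.cG; have hσ := h.cσ; have hσ2 := h.cσ2; have hS := h.cS
  set D1 : ℝ × ℝ → ℝ := fun q => 2 * w q * w3 q * (Gf T y q * σ q) + w q ^ 2 * (Gf T y q *
    (-(y q * e q * (T - q.2)⁻¹ / 2) - y q ^ 2 * (T - q.2)⁻¹ ^ 2 / 4 + (T - q.2)⁻¹ / 2) * σ q
      + Gf T y q * σ2 q) with hD1
  set X1 : ℝ × ℝ → ℝ := fun q => w q ^ 2 * (Gf T y q * (e q + y q * (T - q.2)⁻¹ / 2)) with hX1
  set Y1 : ℝ × ℝ → ℝ := fun q => 2 * w q * w1 q * (Gf T y q * (e q + y q * (T - q.2)⁻¹ / 2)) +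
    w q ^ 2 * (Gf T y q * (-(y q * σ q * (T - q.2)⁻¹ / 2)) * (e q + y q * (T - q.2)⁻¹ / 2) +
      Gf T y q * (σ2 q + σ q * (T - q.2)⁻¹ / 2)) with hY1
  have hl := leib (F := fun q => w q ^ 2 * (Gf T y q * σ q)) (F' := D1) (x1 := x1) (x2 := x2)
    (t0 := s) (T := T) (by fun_prop) (by fun_prop) (by
      intro x hx t ht
      refine (((h.wt x hx t ht).pow 2).mul ((h.Gt hx ht).mul (h.σt x hx t ht))).congr_deriv ?_
      simp only [hD1]
      simp) ht
    (left_mem_Icc.2 h.h12.le) (right_mem_Icc.2 h.h12.le)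
  have hf : ∫ x in x1..x2, Y1 (x, t) = X1 (x2, t) - X1 (x1, t) := by
    refine ftc h.h12 (F := fun x => X1 (x, t)) (F' := fun x => Y1 (x, t)) (slice_c (by fun_prop) ht) (slice_c (by fun_prop) ht) ?_
    intro x hx
    refine (((h.wx x hx t ht).pow 2).mul ((h.Gx hx ht).mul ((h.ex x hx t ht).add
      (((h.yx x hx t ht).mul_const (T - t)⁻¹).div_const 2)))).congr_deriv ?_
    simp only [hY1]
    simp
  have hz : X1 (x2, t) - X1 (x1, t) = 0 := by
    simp [hX1, h.bw1 t ht, h.bw2 t ht]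
  refine hl.congr_deriv ?_
  rw [hz] at hf
  rw [← add_zero (∫ x in x1..x2, 2 * _), ← hf, ← intervalIntegral.integral_add]
  · refine intervalIntegral.integral_congr (fun x hx => ?_)
    rw [uIcc_of_le h.h12.le] at hx
    have hp := (h.σpos (x, t) ⟨hx, ht⟩).ne'
    have htT : t < T := ht.2
    have h0 : T - t ≠ 0 := by intro h0; linarith
    simp only [hD1, hY1, Sf]
    field_simp
    ring
  · exact (slice_int h.h12 (F := fun q => 2 * (w q * Sf T w1 w3 σ y e q * (Gf T y q * σ q))) (by fun_prop) ht)
  · exact (slice_int h.h12 (F := Y1) (by fun_prop) ht)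

theorem Fr.I_eq (h : Fr x1 x2 s T w w1 w2 w3 w4 σ σ1 σ2 y e) (ht : t ∈ Ioo s T) :
    ∫ x in x1..x2, w1 (x, t) ^ 2 * (Gf T y (x, t) * (σ (x, t))⁻¹) =
      -∫ x in x1..x2, w (x, t) * Lf T w1 w2 σ σ1 y (x, t) * (Gf T y (x, t) * σ (x, t)) := by
  have hr := h.cr; have hκ := c_tau (x1 := x1) (x2 := x2) (s := s) (T := T)
  have hw := h.cw; have hw1 := h.cw1; have hw3 := h.cw3; have hy := h.cy; have he := h.ce
  have hG := h.cG; have hσ := h.cσ; have hσ1 := h.cσ1; have hL := h.cL; have hw2 := h.cw2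
  set X1 : ℝ × ℝ → ℝ := fun q => w q * (Gf T y q * (σ q)⁻¹ * w1 q) with hX1
  set Y1 : ℝ × ℝ → ℝ := fun q => w1 q * (Gf T y q * (σ q)⁻¹ * w1 q) + w q *
    ((Gf T y q * (-(y q * σ q * (T - q.2)⁻¹ / 2)) * (σ q)⁻¹ + Gf T y q * (-σ1 q * (σ q)⁻¹ ^ 2)) * w1 q
      + Gf T y q * (σ q)⁻¹ * w2 q) with hY1
  have hf : ∫ x in x1..x2, Y1 (x, t) = X1 (x2, t) - X1 (x1, t) := by
    refine ftc h.h12 (F := fun x => X1 (x, t)) (F' := fun x => Y1 (x, t)) (slice_c (by fun_prop) ht) (slice_c (by fun_prop) ht) ?_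
    intro x hx
    have hp := (h.σpos (x, t) ⟨Ioo_subset_Icc_self hx, ht⟩).ne'
    refine ((h.wx x hx t ht).mul (((h.Gx hx ht).mul ((h.σx x hx t ht).inv hp)).mul
      (h.w1x x hx t ht))).congr_deriv ?_
    simp only [hY1, Pi.inv_apply, Pi.mul_apply]
    field_simp
  have hz : X1 (x2, t) - X1 (x1, t) = 0 := by
    simp [hX1, h.bw1 t ht, h.bw2 t ht]
  rw [hz] at hf
  rw [eq_neg_iff_add_eq_zero, ← hf, ← intervalIntegral.integral_add]
  · refine intervalIntegral.integral_congr (fun x hx => ?_)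
    rw [uIcc_of_le h.h12.le] at hx
    have hp := (h.σpos (x, t) ⟨hx, ht⟩).ne'
    have htT : t < T := ht.2
    have h0 : T - t ≠ 0 := by intro h0; linarith
    simp only [hY1, Lf]
    field_simp
    ring
  · exact (slice_int h.h12 (F := fun q => w1 q ^ 2 * (Gf T y q * (σ q)⁻¹)) (by fun_prop) ht)
  · exact (slice_int h.h12 (F := fun q => w q * Lf T w1 w2 σ σ1 y q * (Gf T y q * σ q)) (by fun_prop) ht)

set_option maxHeartbeats 1000000 in
theorem Fr.dI (h : Fr x1 x2 s T w w1 w2 w3 w4 σ σ1 σ2 y e) (ht : t ∈ Ioo s T) :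
    ∃ B : ℝ, B ≤ 0 ∧ HasDerivAt (fun z => ∫ x in x1..x2, w1 (x, z) ^ 2 * (Gf T y (x, z) * (σ (x, z))⁻¹))
      ((∫ x in x1..x2, w1 (x, t) ^ 2 * (Gf T y (x, t) * (σ (x, t))⁻¹)) / (T - t)
        - 2 * (∫ x in x1..x2, Lf T w1 w2 σ σ1 y (x, t) * Sf T w1 w3 σ y e (x, t) *
          (Gf T y (x, t) * σ (x, t))) + B) t := by
  have hr := h.cr; have hκ := c_tau (x1 := x1) (x2 := x2) (s := s) (T := T)
  have hw := h.cw; have hw1 := h.cw1; have hw3 := h.cw3; have hy := h.cy; have he := h.ce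
  have hG := h.cG; have hσ := h.cσ; have hσ1 := h.cσ1; have hL := h.cL; have hw2 := h.cw2
  have hσ2 := h.cσ2; have hS := h.cS; have hw4 := h.cw4
  set D1 : ℝ × ℝ → ℝ := fun q => 2 * w1 q * w4 q * (Gf T y q * (σ q)⁻¹) + w1 q ^ 2 * (Gf T y q *
    (-(y q * e q * (T - q.2)⁻¹ / 2) - y q ^ 2 * (T - q.2)⁻¹ ^ 2 / 4 + (T - q.2)⁻¹ / 2) * (σ q)⁻¹
      + Gf T y q * (-σ2 q * (σ q)⁻¹ ^ 2)) with hD1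
  set X1 : ℝ × ℝ → ℝ := fun q => (Gf T y q * (σ q)⁻¹ * w1 q) *
    (2 * w3 q - (e q + y q * (T - q.2)⁻¹ / 2) * (σ q)⁻¹ * w1 q) with hX1
  set Y1 : ℝ × ℝ → ℝ := fun q =>
    ((Gf T y q * (-(y q * σ q * (T - q.2)⁻¹ / 2)) * (σ q)⁻¹ + Gf T y q * (-σ1 q * (σ q)⁻¹ ^ 2)) * w1 q
      + Gf T y q * (σ q)⁻¹ * w2 q) * (2 * w3 q - (e q + y q * (T - q.2)⁻¹ / 2) * (σ q)⁻¹ * w1 q) +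
    (Gf T y q * (σ q)⁻¹ * w1 q) * (2 * w4 q - (((σ2 q + σ q * (T - q.2)⁻¹ / 2) * (σ q)⁻¹ +
      (e q + y q * (T - q.2)⁻¹ / 2) * (-σ1 q * (σ q)⁻¹ ^ 2)) * w1 q +
        (e q + y q * (T - q.2)⁻¹ / 2) * (σ q)⁻¹ * w2 q)) with hY1
  have hl := leib (F := fun q => w1 q ^ 2 * (Gf T y q * (σ q)⁻¹)) (F' := D1) (x1 := x1) (x2 := x2)
    (t0 := s) (T := T) (by fun_prop) (by fun_prop) (by
      intro x hx t ht
      have hp := (h.σpos (x, t) ⟨hx, ht⟩).ne'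
      refine (((h.w1t x hx t ht).pow 2).mul ((h.Gt hx ht).mul ((h.σt x hx t ht).inv hp))).congr_deriv ?_
      simp only [hD1]
      simp
      field_simp
      try simp) ht
    (left_mem_Icc.2 h.h12.le) (right_mem_Icc.2 h.h12.le)
  have hf : ∫ x in x1..x2, Y1 (x, t) = X1 (x2, t) - X1 (x1, t) := by
    refine ftc h.h12 (F := fun x => X1 (x, t)) (F' := fun x => Y1 (x, t)) (slice_c (by fun_prop) ht) (slice_c (by fun_prop) ht) ?_
    intro x hx
    have hp := (h.σpos (x, t) ⟨Ioo_subset_Icc_self hx, ht⟩).ne'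
    refine ((((h.Gx hx ht).mul ((h.σx x hx t ht).inv hp)).mul
      (h.w1x x hx t ht)).mul (((h.w3x x hx t ht).const_mul 2).sub
        ((((h.ex x hx t ht).add
      (((h.yx x hx t ht).mul_const (T - t)⁻¹).div_const 2)).mul ((h.σx x hx t ht).inv hp)).mul
        (h.w1x x hx t ht)))).congr_deriv ?_
    simp only [hY1, Pi.inv_apply, div_eq_mul_inv, inv_pow]
    simp
  refine ⟨X1 (x2, t) - X1 (x1, t), ?_, ?_⟩
  · have e1 : X1 (x2, t) = -(Gf T y (x2, t) * (σ (x2, t))⁻¹ ^ 2 * w1 (x2, t) ^ 2 *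
      (e (x2, t) + y (x2, t) * (T - t)⁻¹ / 2)) := by
      simp only [hX1, (h.bw3 ht).2]; ring
    have e2 : X1 (x1, t) = -(Gf T y (x1, t) * (σ (x1, t))⁻¹ ^ 2 * w1 (x1, t) ^ 2 *
      (e (x1, t) + y (x1, t) * (T - t)⁻¹ / 2)) := by
      simp only [hX1, (h.bw3 ht).1]; ring
    have g2 : 0 ≤ Gf T y (x2, t) * (σ (x2, t))⁻¹ ^ 2 * w1 (x2, t) ^ 2 := by unfold Gf; positivity
    have g1 : 0 ≤ Gf T y (x1, t) * (σ (x1, t))⁻¹ ^ 2 * w1 (x1, t) ^ 2 := by unfold Gf; positivity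
    have f1 := mul_nonneg g2 (h.bξ2 t ht)
    have f2 := mul_nonpos_of_nonneg_of_nonpos g1 (h.bξ1 t ht)
    rw [e1, e2]
    linarith
  · refine hl.congr_deriv ?_
    rw [← hf, ← intervalIntegral.integral_div, ← intervalIntegral.integral_const_mul,
      ← intervalIntegral.integral_sub, ← intervalIntegral.integral_add]
    · refine intervalIntegral.integral_congr (fun x hx => ?_)
      rw [uIcc_of_le h.h12.le] at hx
      have hp := (h.σpos (x, t) ⟨hx, ht⟩).ne'
      have htT : t < T := ht.2
      have h0 : T - t ≠ 0 := by intro h0; linarith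
      simp only [hD1, hY1, Lf, Sf]
      field_simp
      ring
    · exact ((slice_int h.h12 (F := fun q => w1 q ^ 2 * (Gf T y q * (σ q)⁻¹)) (by fun_prop) ht)).div_const _ |>.sub
        (((slice_int h.h12 (F := fun q => Lf T w1 w2 σ σ1 y q * Sf T w1 w3 σ y e q * (Gf T y q * σ q)) (by fun_prop) ht)).const_mul _)
    · exact (slice_int h.h12 (F := Y1) (by fun_prop) ht)
    · exact ((slice_int h.h12 (F := fun q => w1 q ^ 2 * (Gf T y q * (σ q)⁻¹)) (by fun_prop) ht)).div_const _
    · exact ((slice_int h.h12 (F := fun q => Lf T w1 w2 σ σ1 y q * Sf T w1 w3 σ y e q * (Gf T y q * σ q)) (by fun_prop) ht)).const_mul _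

end

end ZN


namespace ZN

section
variable {x1 x2 s T s0 M Λ : ℝ} {w w1 w2 w3 w4 σ σ1 σ2 y e : ℝ × ℝ → ℝ}

set_option maxHeartbeats 1000000 in
theorem Fr.lower (h : Fr x1 x2 s T w w1 w2 w3 w4 σ σ1 σ2 y e) (hM : 0 ≤ M)
    (hf : ∀ q ∈ Qs x1 x2 s T, |ff w1 w2 w3 σ σ1 e q| ≤ M * (|w q| + |w1 q|))
    (hΛ : ∀ q ∈ Qs x1 x2 s T, σ q ≤ Λ) (hs0 : s0 ∈ Ioo s T) (h1 : T - s0 ≤ 1)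
    (hpos : 0 < ∫ x in x1..x2, w (x, s0) ^ 2 * (Gf T y (x, s0) * σ (x, s0))) :
    ∃ n : ℕ, ∃ c > 0, ∀ t ∈ Ico s0 T, c * (T - t) ^ n ≤
      ∫ x in x1..x2, w (x, t) ^ 2 * (Gf T y (x, t) * σ (x, t)) := by
  have hsub : ∀ t ∈ Ico s0 T, t ∈ Ioo s T := fun t ht => ⟨hs0.1.trans_le ht.1, ht.2⟩
  have hr := h.cr
  have hw := h.cw; have hw1 := h.cw1
  have hG := h.cG; have hσ := h.cσ; have hL := h.cL; have hS := h.cS; have hff := h.cf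
  have hG0 : ∀ q, 0 < Gf T y q := fun q => Real.exp_pos _
  have hB : ∀ t : ℝ, ∃ B : ℝ, t ∈ Ico s0 T → B ≤ 0 ∧ HasDerivAt
      (fun z => ∫ x in x1..x2, w1 (x, z) ^ 2 * (Gf T y (x, z) * (σ (x, z))⁻¹))
      ((∫ x in x1..x2, w1 (x, t) ^ 2 * (Gf T y (x, t) * (σ (x, t))⁻¹)) / (T - t)
        - 2 * (∫ x in x1..x2, Lf T w1 w2 σ σ1 y (x, t) * Sf T w1 w3 σ y e (x, t) *
          (Gf T y (x, t) * σ (x, t))) + B) t := by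
    intro t
    by_cases ht : t ∈ Ico s0 T
    · obtain ⟨B, h1, h2⟩ := h.dI (hsub t ht)
      exact ⟨B, fun _ => ⟨h1, h2⟩⟩
    · exact ⟨0, fun h => absurd h ht⟩
  choose B hB using hB
  refine ode_lower hs0.2 h1 (C := (2 * M ^ 2 + 2 * M) * (1 + Λ ^ 2)) (by positivity)
    (H := fun t => ∫ x in x1..x2, w (x, t) ^ 2 * (Gf T y (x, t) * σ (x, t)))
    (I := fun z => ∫ x in x1..x2, w1 (x, z) ^ 2 * (Gf T y (x, z) * (σ (x, z))⁻¹))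
    (fun t ht => h.dH (hsub t ht)) (fun t ht => (hB t ht).2) ?_ ?_ ?_ hpos
  · intro t ht
    refine intervalIntegral.integral_nonneg h.h12.le (fun x hx => ?_)
    have := hG0 (x, t); have := h.σpos (x, t) ⟨hx, hsub t ht⟩
    positivity
  · intro t ht
    refine intervalIntegral.integral_nonneg h.h12.le (fun x hx => ?_)
    have := hG0 (x, t); have := h.σpos (x, t) ⟨hx, hsub t ht⟩
    positivity
  intro t ht0
  have ht := hsub t ht0
  set f := ff w1 w2 w3 σ σ1 e with hfd
  set L := Lf T w1 w2 σ σ1 y with hLd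
  set G := Gf T y with hGd
  have iw : IntervalIntegrable (fun x => w (x, t) ^ 2 * (G (x, t) * σ (x, t))) MeasureTheory.volume x1 x2 :=
    slice_int h.h12 (F := fun q => w q ^ 2 * (G q * σ q)) (by fun_prop) ht
  have iw1 : IntervalIntegrable (fun x => w1 (x, t) ^ 2 * (G (x, t) * (σ (x, t))⁻¹)) MeasureTheory.volume x1 x2 :=
    slice_int h.h12 (F := fun q => w1 q ^ 2 * (G q * (σ q)⁻¹)) (by fun_prop) ht
  have ip : IntervalIntegrable (fun x => w (x, t) * (L (x, t) + f (x, t) / 2) * (G (x, t) * σ (x, t))) MeasureTheory.volume x1 x2 :=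
    slice_int h.h12 (F := fun q => w q * (L q + f q / 2) * (G q * σ q)) (by fun_prop) ht
  have iq : IntervalIntegrable (fun x => w (x, t) * (f (x, t) / 2) * (G (x, t) * σ (x, t))) MeasureTheory.volume x1 x2 :=
    slice_int h.h12 (F := fun q => w q * (f q / 2) * (G q * σ q)) (by fun_prop) ht
  have iK : IntervalIntegrable (fun x => (L (x, t) + f (x, t) / 2) ^ 2 * (G (x, t) * σ (x, t))) MeasureTheory.volume x1 x2 :=
    slice_int h.h12 (F := fun q => (L q + f q / 2) ^ 2 * (G q * σ q)) (by fun_prop) ht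
  have iF : IntervalIntegrable (fun x => f (x, t) ^ 2 * (G (x, t) * σ (x, t))) MeasureTheory.volume x1 x2 :=
    slice_int h.h12 (F := fun q => f q ^ 2 * (G q * σ q)) (by fun_prop) ht
  have pw : ∀ x ∈ Icc x1 x2, w1 (x, t) ^ 2 * (G (x, t) * σ (x, t)) ≤
      Λ ^ 2 * (w1 (x, t) ^ 2 * (G (x, t) * (σ (x, t))⁻¹)) := by
    intro x hx
    have a1 := hG0 (x, t); have a2 := h.σpos (x, t) ⟨hx, ht⟩
    have a3 := hΛ (x, t) ⟨hx, ht⟩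
    have : w1 (x, t) ^ 2 * (G (x, t) * σ (x, t)) = σ (x, t) ^ 2 * (w1 (x, t) ^ 2 * (G (x, t) * (σ (x, t))⁻¹)) := by
      field_simp
    rw [this]
    gcongr
  refine ⟨∫ x in x1..x2, (L (x, t) + f (x, t) / 2) ^ 2 * (G (x, t) * σ (x, t)),
    ∫ x in x1..x2, f (x, t) ^ 2 * (G (x, t) * σ (x, t)),
    ∫ x in x1..x2, w (x, t) * (L (x, t) + f (x, t) / 2) * (G (x, t) * σ (x, t)),
    ∫ x in x1..x2, w (x, t) * (f (x, t) / 2) * (G (x, t) * σ (x, t)), ?_, ?_, ?_, ?_, ?_, ?_, ?_⟩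
  · refine cauchy_schwarz h.h12.le (u := fun x => w (x, t)) (k := fun x => L (x, t) + f (x, t) / 2)
      (r := fun x => G (x, t) * σ (x, t)) (slice_c hw ht) (slice_c (F := fun q => L q + f q / 2) (by fun_prop) ht)
      (slice_c (F := fun q => G q * σ q) (by fun_prop) ht) ?_
    intro x hx
    have a1 := hG0 (x, t); have a2 := h.σpos (x, t) ⟨hx, ht⟩
    positivity
  · refine intervalIntegral.integral_nonneg h.h12.le (fun x hx => ?_)
    have := hG0 (x, t); have := h.σpos (x, t) ⟨hx, ht⟩
    positivity
  · rw [← intervalIntegral.integral_const_mul, ← intervalIntegral.integral_const_mul,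
      ← intervalIntegral.integral_add (ip.const_mul _) (iq.const_mul _)]
    congr 1; ext x
    rw [Sf_eq (w2 := w2) (σ1 := σ1)]
    ring
  · have := intervalIntegral.integral_sub ip iq
    have e2 : ∫ x in x1..x2, w (x, t) * L (x, t) * (G (x, t) * σ (x, t)) =
      ∫ x in x1..x2, (w (x, t) * (L (x, t) + f (x, t) / 2) * (G (x, t) * σ (x, t)) -
        w (x, t) * (f (x, t) / 2) * (G (x, t) * σ (x, t))) := by
      congr 1; ext x
      ring
    have e3 := h.I_eq ht
    rw [← hLd, ← hGd, e2, this] at e3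
    rw [e3]
    ring
  · have := (hB t ht0).1
    have e : ∫ x in x1..x2, L (x, t) * Sf T w1 w3 σ y e (x, t) * (G (x, t) * σ (x, t)) =
      (∫ x in x1..x2, (L (x, t) + f (x, t) / 2) ^ 2 * (G (x, t) * σ (x, t))) -
       (∫ x in x1..x2, f (x, t) ^ 2 * (G (x, t) * σ (x, t))) / 4 := by
      rw [← intervalIntegral.integral_div, ← intervalIntegral.integral_sub iK (iF.div_const 4)]
      congr 1; ext x
      rw [Sf_eq (w2 := w2) (σ1 := σ1)]
      ring
    rw [← e]
    linarith
  · rw [← intervalIntegral.integral_add iw iw1, ← intervalIntegral.integral_const_mul]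
    refine intervalIntegral.integral_mono_on h.h12.le iF ((iw.add iw1).const_mul _) (fun x hx => ?_)
    have a1 := hG0 (x, t); have a2 := h.σpos (x, t) ⟨hx, ht⟩
    have a3 := pw x hx
    have a4 := hf (x, t) ⟨hx, ht⟩
    have a5 : f (x, t) ^ 2 ≤ 2 * M ^ 2 * (w (x, t) ^ 2 + w1 (x, t) ^ 2) := by
      rw [← sq_abs]
      have : |f (x, t)| ^ 2 ≤ (M * (|w (x, t)| + |w1 (x, t)|)) ^ 2 := by gcongr
      refine this.trans ?_
      rw [← sq_abs (w _), ← sq_abs (w1 _)]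
      nlinarith [mul_nonneg (sq_nonneg M) (sq_nonneg (|w (x, t)| - |w1 (x, t)|))]
    have a6 : f (x, t) ^ 2 * (G (x, t) * σ (x, t)) ≤ 2 * M ^ 2 * (w (x, t) ^ 2 + w1 (x, t) ^ 2) * (G (x, t) * σ (x, t)) := by
      gcongr
    refine a6.trans ?_
    have a7 : 0 ≤ w (x, t) ^ 2 * (G (x, t) * σ (x, t)) := by positivity
    have a8 : 0 ≤ w1 (x, t) ^ 2 * (G (x, t) * (σ (x, t))⁻¹) := by positivity
    have a9 := mul_le_mul_of_nonneg_left a3 (by positivity : 0 ≤ 2 * M ^ 2)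
    have b1 : 0 ≤ 2 * M ^ 2 * (Λ ^ 2 * (w (x, t) ^ 2 * (G (x, t) * σ (x, t)))) := by positivity
    have b2 : 0 ≤ 2 * M ^ 2 * (w1 (x, t) ^ 2 * (G (x, t) * (σ (x, t))⁻¹)) := by positivity
    have b3 : 0 ≤ 2 * M * (1 + Λ ^ 2) * (w (x, t) ^ 2 * (G (x, t) * σ (x, t)) + w1 (x, t) ^ 2 * (G (x, t) * (σ (x, t))⁻¹)) := by positivity
    linarith
  · refine (intervalIntegral.abs_integral_le_integral_abs h.h12.le).trans ?_
    rw [← intervalIntegral.integral_add iw iw1, ← intervalIntegral.integral_const_mul]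
    refine intervalIntegral.integral_mono_on h.h12.le iq.abs ((iw.add iw1).const_mul _) (fun x hx => ?_)
    have a1 := hG0 (x, t); have a2 := h.σpos (x, t) ⟨hx, ht⟩
    have a3 := pw x hx
    have a4 := hf (x, t) ⟨hx, ht⟩
    have a5 : |w (x, t) * (f (x, t) / 2)| ≤ M * (w (x, t) ^ 2 + w1 (x, t) ^ 2) := by
      rw [abs_mul, abs_div, abs_two]
      have : |w (x, t)| * (|f (x, t)| / 2) ≤ |w (x, t)| * (M * (|w (x, t)| + |w1 (x, t)|) / 2) := by gcongr
      refine this.trans ?_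
      rw [← sq_abs (w _), ← sq_abs (w1 _)]
      nlinarith [mul_nonneg hM (sq_nonneg (|w (x, t)| - |w1 (x, t)|)), mul_nonneg hM (sq_nonneg (|w1 (x, t)|))]
    rw [abs_mul, abs_of_pos (mul_pos a1 a2)]
    have a6 : |w (x, t) * (f (x, t) / 2)| * (G (x, t) * σ (x, t)) ≤ M * (w (x, t) ^ 2 + w1 (x, t) ^ 2) * (G (x, t) * σ (x, t)) := by
      gcongr
    refine a6.trans ?_
    have a7 : 0 ≤ w (x, t) ^ 2 * (G (x, t) * σ (x, t)) := by positivity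
    have a8 : 0 ≤ w1 (x, t) ^ 2 * (G (x, t) * (σ (x, t))⁻¹) := by positivity
    have a9 := mul_le_mul_of_nonneg_left a3 hM
    have b1 : 0 ≤ M * (Λ ^ 2 * (w (x, t) ^ 2 * (G (x, t) * σ (x, t)))) := by positivity
    have b2 : 0 ≤ M * (w1 (x, t) ^ 2 * (G (x, t) * (σ (x, t))⁻¹)) := by positivity
    have b3 : 0 ≤ (2 * M ^ 2 + M) * (1 + Λ ^ 2) * (w (x, t) ^ 2 * (G (x, t) * σ (x, t)) + w1 (x, t) ^ 2 * (G (x, t) * (σ (x, t))⁻¹)) := by positivity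
    linarith

end

end ZN


namespace ZN

noncomputable def prim (x0 : ℝ) (g : ℝ × ℝ → ℝ) (q : ℝ × ℝ) : ℝ := ∫ z in x0..q.1, g (z, q.2)

section
variable {x1 x2 s T x0 x t : ℝ} {g g' : ℝ × ℝ → ℝ}

theorem prim_cont (h12 : x1 ≤ x2) (hs : s ≤ T) (hg : ContinuousOn g (Icc x1 x2 ×ˢ Icc s T)) (hx0 : x0 ∈ Icc x1 x2) :
    ContinuousOn (prim x0 g) (Icc x1 x2 ×ˢ Icc s T) := by
  have hc : Continuous (Function.uncurry (fun t z : ℝ => g ((projIcc x1 x2 h12 z : ℝ), (projIcc s T hs t : ℝ)))) := by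
    have : Continuous (fun q : ℝ × ℝ => (((projIcc x1 x2 h12 q.2 : ℝ), (projIcc s T hs q.1 : ℝ)) : ℝ × ℝ)) := by
      have h1 := continuous_projIcc (a := x1) (b := x2) (h := h12)
      have h2 := continuous_projIcc (a := s) (b := T) (h := hs)
      fun_prop
    exact hg.comp_continuous this (fun q => ⟨Subtype.coe_prop _, Subtype.coe_prop _⟩)
  have h := intervalIntegral.continuous_parametric_primitive_of_continuous (μ := MeasureTheory.volume) (a₀ := x0) hc
  have h2 : Continuous (fun q : ℝ × ℝ => ∫ z in x0..q.1, g ((projIcc x1 x2 h12 z : ℝ), (projIcc s T hs q.2 : ℝ))) :=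
    h.comp (continuous_snd.prodMk continuous_fst)
  refine h2.continuousOn.congr (fun q hq => ?_)
  refine intervalIntegral.integral_congr (fun z hz => ?_)
  have hz' := uIcc_subset_Icc hx0 hq.1 hz
  rw [projIcc_of_mem h12 hz', projIcc_of_mem hs hq.2]

theorem prim_x (hg : ContinuousOn g (Qs x1 x2 s T)) (hx0 : x0 ∈ Icc x1 x2) (hx : x ∈ Ioo x1 x2)
    (ht : t ∈ Ioo s T) : HasDerivAt (fun z => prim x0 g (z, t)) (g (x, t)) x := by
  have hc := slice_c hg ht
  have hx' : x ∈ Icc x1 x2 := Ioo_subset_Icc_self hx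
  have hn : Icc x1 x2 ∈ nhds x := Icc_mem_nhds hx.1 hx.2
  refine intervalIntegral.integral_hasDerivAt_right
    (hc.mono (uIcc_subset_Icc hx0 hx')).intervalIntegrable ?_ (hc.continuousAt hn)
  exact ContinuousOn.stronglyMeasurableAtFilter_nhdsWithin hc measurableSet_Icc x |> fun h => by
    rwa [nhdsWithin_eq_nhds.2 hn] at h

theorem prim_t (hg : ContinuousOn g (Qs x1 x2 s T)) (hg' : ContinuousOn g' (Qs x1 x2 s T))
    (hd : ∀ x ∈ Icc x1 x2, ∀ t ∈ Ioo s T, HasDerivAt (fun s => g (x, s)) (g' (x, t)) t)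
    (hx0 : x0 ∈ Icc x1 x2) (hx : x ∈ Icc x1 x2)
    (ht : t ∈ Ioo s T) : HasDerivAt (fun z => prim x0 g (x, z)) (prim x0 g' (x, t)) t :=
  leib hg hg' hd ht hx0 hx

theorem prim_abs {C : ℝ} (hg : ∀ z ∈ Icc x1 x2, |g (z, t)| ≤ C) (hx0 : x0 ∈ Icc x1 x2) (hx : x ∈ Icc x1 x2) :
    |prim x0 g (x, t)| ≤ C * |x - x0| := by
  have := intervalIntegral.norm_integral_le_of_norm_le_const (a := x0) (b := x) (f := fun z => g (z, t)) (C := C)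
    (fun z hz => hg z (uIcc_subset_Icc hx0 hx (uIoc_subset_uIcc hz)))
  exact this

theorem prim_lower {c : ℝ} (hc : ContinuousOn (fun z => g (z, t)) (Icc x1 x2)) (hg : ∀ z ∈ Icc x1 x2, c ≤ g (z, t))
    (hx0 : x0 ∈ Icc x1 x2) (hx : x ∈ Icc x1 x2) :
    (x0 ≤ x → c * (x - x0) ≤ prim x0 g (x, t)) ∧ (x ≤ x0 → prim x0 g (x, t) ≤ c * (x - x0)) := by
  have key : ∀ u ∈ Icc x1 x2, ∀ v ∈ Icc x1 x2, u ≤ v → c * (v - u) ≤ ∫ z in u..v, g (z, t) := by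
    intro u hu v hv huv
    have h1 : ∫ z in u..v, c = c * (v - u) := by simp [mul_comm]
    rw [← h1]
    refine intervalIntegral.integral_mono_on huv intervalIntegrable_const
      (hc.mono (uIcc_subset_Icc hu hv)).intervalIntegrable (fun z hz => hg z ?_)
    exact ⟨hu.1.trans hz.1, hz.2.trans hv.2⟩
  refine ⟨fun h => key _ hx0 _ hx h, fun h => ?_⟩
  have := key _ hx _ hx0 h
  unfold prim
  simp only
  rw [intervalIntegral.integral_symm]
  linarith

end

/-- flatness on a window -/
theorem flat_window {x1 x2 t0 t1 : ℝ} (h12 : x1 < x2) {p : ℝ × ℝ} (hp : p ∈ Qs x1 x2 t0 t1)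
    {m : ℕ} {f : ℝ × ℝ → ℝ} (sf : Sm (Qs x1 x2 t0 t1) f) (hf : Ord (Qs x1 x2 t0 t1) p m f) {s T : ℝ}
    (hs : t0 < s) (hT : T < t1) :
    ∃ C : ℝ, 0 ≤ C ∧ ∀ q ∈ Icc x1 x2 ×ˢ Icc s T, |f q| ≤ C * om p q ^ m := by
  obtain ⟨C, r, hC, hr, hb⟩ := hf.bound h12 hp sf
  have hsub : Icc x1 x2 ×ˢ Icc s T ⊆ Qs x1 x2 t0 t1 :=
    prod_mono le_rfl (fun t ht => ⟨hs.trans_le ht.1, ht.2.trans_lt hT⟩)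
  have hK : IsCompact (Icc x1 x2 ×ˢ Icc s T) := isCompact_Icc.prod isCompact_Icc
  obtain ⟨W, hW⟩ := hK.exists_bound_of_continuousOn (sf.continuousOn.mono hsub)
  set d := min r (√r) with hd
  have hd0 : 0 < d := lt_min hr (Real.sqrt_pos.2 hr)
  refine ⟨C + |W| / d ^ m, by positivity, fun q hq => ?_⟩
  have ho := om_nonneg p q
  by_cases hc : |q.1 - p.1| < r ∧ |q.2 - p.2| < r
  · have := hb q (hsub hq) hc.1 hc.2
    have h2 : 0 ≤ |W| / d ^ m * om p q ^ m := by positivity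
    linarith
  · have hdo : d ≤ om p q := by
      unfold om
      by_cases h1 : |q.1 - p.1| < r
      · have h2 : r ≤ |q.2 - p.2| := by
          by_contra h; exact hc ⟨h1, not_le.1 h⟩
        have := Real.sqrt_le_sqrt h2
        have := min_le_right r (√r)
        have := abs_nonneg (q.1 - p.1)
        linarith
      · have := min_le_left r (√r)
        have := Real.sqrt_nonneg |q.2 - p.2|
        linarith
    have h1 : |f q| ≤ |W| := (hW q hq).trans (le_abs_self W)
    have h2 : |W| ≤ |W| / d ^ m * om p q ^ m := by
      rw [div_mul_eq_mul_div, le_div_iff₀ (by positivity)]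
      gcongr
    have h3 : 0 ≤ C * om p q ^ m := by positivity
    linarith

/-- Gaussian bound -/
theorem gauss_bound {c0 τ d Y : ℝ} (hc : 0 < c0) (hτ : 0 < τ) (hd : 0 ≤ d) (hY : (c0 * d) ^ 2 ≤ Y ^ 2) (k : ℕ) :
    ((d + √τ) ^ k) ^ 2 * Real.exp (-Y ^ 2 / (4 * τ)) ≤ τ ^ k * Real.exp (4 * (k : ℝ) ^ 2 / c0 ^ 2) := by
  have hq := Real.sqrt_pos.2 hτ
  have hqs := Real.sq_sqrt hτ.le
  set S := d / √τ with hS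
  have hS0 : 0 ≤ S := by positivity
  have e1 : d + √τ = √τ * (1 + S) := by rw [hS]; field_simp; ring
  have e2 : ((d + √τ) ^ k) ^ 2 = τ ^ k * ((1 + S) ^ k) ^ 2 := by
    rw [e1, mul_pow, mul_pow, ← pow_mul, mul_comm k 2, pow_mul, hqs]
  have e3 : (1 + S) ^ k ≤ Real.exp (k * S) := by
    rw [Real.exp_nat_mul]
    gcongr
    linarith [Real.add_one_le_exp S]
  have e4 : -Y ^ 2 / (4 * τ) ≤ - (c0 * S) ^ 2 / 4 := by
    have : (c0 * S) ^ 2 = (c0 * d) ^ 2 / τ := by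
      rw [hS, ← mul_div_assoc, div_pow, hqs]
    rw [this, neg_div, neg_div, neg_le_neg_iff, div_div, mul_comm τ 4]
    gcongr
  rw [e2, mul_assoc]
  gcongr
  calc ((1 + S) ^ k) ^ 2 * Real.exp (-Y ^ 2 / (4 * τ)) ≤
      (Real.exp (k * S)) ^ 2 * Real.exp (- (c0 * S) ^ 2 / 4) := by gcongr
    _ = Real.exp (2 * (k * S) - (c0 * S) ^ 2 / 4) := by
      rw [← Real.exp_nat_mul, ← Real.exp_add]; congr 1; push_cast; ring
    _ ≤ _ := by
      apply Real.exp_le_exp.2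
      rw [le_div_iff₀ (by positivity)]
      nlinarith [sq_nonneg (c0 ^ 2 * S / 2 - 2 * k)]

end ZN


namespace ZN

section
variable {x1 x2 t0 t1 x0 T : ℝ} {w σ : ℝ × ℝ → ℝ}

theorem bound_window {f : ℝ × ℝ → ℝ} (sf : Sm (Qs x1 x2 t0 t1) f) {s T : ℝ}
    (hs : t0 < s) (hT : T < t1) : ∃ C : ℝ, 0 ≤ C ∧ ∀ q ∈ Icc x1 x2 ×ˢ Icc s T, |f q| ≤ C := by
  have hsub : Icc x1 x2 ×ˢ Icc s T ⊆ Qs x1 x2 t0 t1 :=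
    prod_mono le_rfl (fun t ht => ⟨hs.trans_le ht.1, ht.2.trans_lt hT⟩)
  have hK : IsCompact (Icc x1 x2 ×ˢ Icc s T) := isCompact_Icc.prod isCompact_Icc
  obtain ⟨W, hW⟩ := hK.exists_bound_of_continuousOn (sf.continuousOn.mono hsub)
  exact ⟨|W|, abs_nonneg _, fun q hq => (hW q hq).trans (le_abs_self W)⟩

theorem lower_window {f : ℝ × ℝ → ℝ} (h12 : x1 < x2) (sf : Sm (Qs x1 x2 t0 t1) f) {s T : ℝ}
    (hs : t0 < s) (hT : T < t1) (hsT : s ≤ T) (hpos : ∀ q ∈ Qs x1 x2 t0 t1, 0 < f q) :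
    ∃ c > 0, ∀ q ∈ Icc x1 x2 ×ˢ Icc s T, c ≤ f q := by
  have hsub : Icc x1 x2 ×ˢ Icc s T ⊆ Qs x1 x2 t0 t1 :=
    prod_mono le_rfl (fun t ht => ⟨hs.trans_le ht.1, ht.2.trans_lt hT⟩)
  have hK : IsCompact (Icc x1 x2 ×ˢ Icc s T) := isCompact_Icc.prod isCompact_Icc
  obtain ⟨q, hq, hm⟩ := hK.exists_isMinOn ⟨(x1, s), left_mem_Icc.2 h12.le, left_mem_Icc.2 hsT⟩
    (sf.continuousOn.mono hsub)
  exact ⟨f q, hpos q (hsub hq), fun z hz => hm hz⟩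

/-- build the frequency data -/
theorem build (h12 : x1 < x2) (hx0 : x0 ∈ Icc x1 x2) (hT : T ∈ Ioo t0 t1)
    (sw : Sm (Qs x1 x2 t0 t1) w) (sσ : Sm (Qs x1 x2 t0 t1) σ) (hσ : ∀ q ∈ Qs x1 x2 t0 t1, 0 < σ q)
    (hb1 : ∀ t ∈ Ioo t0 t1, w (x1, t) = 0) (hb2 : ∀ t ∈ Ioo t0 t1, w (x2, t) = 0)
    {s M : ℝ} (hs : t0 < s) (hsT : s < T) (hM : 0 ≤ M)
    (hin : ∀ q ∈ Qs x1 x2 s T, |dT (Qs x1 x2 t0 t1) w q - dX (Qs x1 x2 t0 t1) (dX (Qs x1 x2 t0 t1) w) q * (σ q)⁻¹ ^ 2|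
      ≤ M * (|w q| + |dX (Qs x1 x2 t0 t1) w q|)) :
    ∃ s' c0 Λ M' : ℝ, s < s' ∧ s' < T ∧ T - s' ≤ 1 ∧ 0 < c0 ∧ 0 ≤ M' ∧ 0 ≤ Λ ∧
      (∀ q ∈ Qs x1 x2 s' T, c0 ≤ σ q ∧ σ q ≤ Λ) ∧
      (∀ q ∈ Qs x1 x2 s' T, (c0 * |q.1 - x0|) ^ 2 ≤ prim x0 σ q ^ 2) ∧
      (∀ q ∈ Qs x1 x2 s' T, |ff (dX (Qs x1 x2 t0 t1) w) (dX (Qs x1 x2 t0 t1) (dX (Qs x1 x2 t0 t1) w))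
        (dT (Qs x1 x2 t0 t1) w) σ (dX (Qs x1 x2 t0 t1) σ) (prim x0 (dT (Qs x1 x2 t0 t1) σ)) q| ≤
          M' * (|w q| + |dX (Qs x1 x2 t0 t1) w q|)) ∧
      Fr x1 x2 s' T w (dX (Qs x1 x2 t0 t1) w) (dX (Qs x1 x2 t0 t1) (dX (Qs x1 x2 t0 t1) w))
        (dT (Qs x1 x2 t0 t1) w) (dX (Qs x1 x2 t0 t1) (dT (Qs x1 x2 t0 t1) w)) σ (dX (Qs x1 x2 t0 t1) σ)
        (dT (Qs x1 x2 t0 t1) σ) (prim x0 σ) (prim x0 (dT (Qs x1 x2 t0 t1) σ)) := by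
  set Q := Qs x1 x2 t0 t1 with hQ
  have gQ : Good Q := good_Qs h12
  have sσ1 : Sm Q (dX Q σ) := sσ.dd gQ
  have sσ2 : Sm Q (dT Q σ) := sσ.dd gQ
  obtain ⟨c0, hc0, hc⟩ := lower_window h12 sσ hs hT.2 hsT.le hσ
  obtain ⟨Λ, hΛ0, hΛ⟩ := bound_window sσ hs hT.2
  obtain ⟨Λ1, hΛ10, hΛ1⟩ := bound_window sσ1 hs hT.2
  obtain ⟨Λ2, hΛ20, hΛ2⟩ := bound_window sσ2 hs hT.2
  set η := c0 / (2 * Λ2 + 1) with hη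
  have hη0 : 0 < η := by positivity
  set m := min (min 1 η) (T - s) / 2 with hm
  have hm0 : 0 < m := by
    have : 0 < T - s := by linarith
    positivity
  have hm1 : m ≤ 1 := by
    have := min_le_left (min 1 η) (T - s); have := min_le_left 1 η; linarith
  have hm2 : m ≤ η := by
    have := min_le_left (min 1 η) (T - s); have := min_le_right 1 η; linarith
  have hm3 : m < T - s := by
    have := min_le_right (min 1 η) (T - s); linarith
  have hsub : Qs x1 x2 (T - m) T ⊆ Icc x1 x2 ×ˢ Icc s T :=
    prod_mono le_rfl (fun t ht => ⟨by linarith [ht.1], ht.2.le⟩)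
  have hsubI : Icc x1 x2 ×ˢ Icc s T ⊆ Q :=
    prod_mono le_rfl (fun t ht => ⟨hs.trans_le ht.1, ht.2.trans_lt hT.2⟩)
  have hsubQ := hsub.trans hsubI
  have htt : ∀ t ∈ Ioo (T - m) T, t ∈ Ioo t0 t1 := fun t ht =>
    ⟨by linarith [ht.1], by linarith [ht.2, hT.2]⟩
  have hlow : ∀ q ∈ Qs x1 x2 (T - m) T, (x0 ≤ q.1 → c0 * (q.1 - x0) ≤ prim x0 σ q) ∧
      (q.1 ≤ x0 → prim x0 σ q ≤ c0 * (q.1 - x0)) := by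
    intro q hq
    exact prim_lower (g := σ) (t := q.2) (slice_c sσ.continuousOn (htt q.2 hq.2))
      (fun z hz => hc (z, q.2) ⟨hz, (hsub hq).2⟩) hx0 hq.1
  have hup : ∀ q ∈ Qs x1 x2 (T - m) T, |prim x0 (dT Q σ) q| ≤ Λ2 * |q.1 - x0| := by
    intro q hq
    exact prim_abs (t := q.2) (fun z hz => hΛ2 (z, q.2) ⟨hz, (hsub hq).2⟩) hx0 hq.1
  have hτ : ∀ t ∈ Ioo (T - m) T, Λ2 ≤ c0 * (T - t)⁻¹ / 2 := by
    intro t ht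
    have h1 : 0 < T - t := by linarith [ht.2]
    have h2 : T - t ≤ η := by linarith [ht.1]
    rw [hη, le_div_iff₀ (by positivity)] at h2
    rw [← div_eq_mul_inv, div_div, le_div_iff₀ (by positivity)]
    nlinarith
  refine ⟨T - m, c0, Λ, M + (Λ1 * c0⁻¹ ^ 3 + Λ2 * (x2 - x1) * c0⁻¹), by linarith, by linarith, by linarith,
    hc0, ?_, hΛ0, ?_, ?_, ?_, ?_⟩
  · have : 0 < x2 - x1 := by linarith
    positivity
  · intro q hq
    exact ⟨hc q (hsub hq), (le_abs_self _).trans (hΛ q (hsub hq))⟩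
  · intro q hq
    rw [← sq_abs (prim x0 σ q)]
    gcongr
    rcases le_total x0 q.1 with h | h
    · have := (hlow q hq).1 h
      rw [abs_of_nonneg (by linarith : 0 ≤ q.1 - x0)]
      exact this.trans (le_abs_self _)
    · have := (hlow q hq).2 h
      rw [abs_of_nonpos (by linarith : q.1 - x0 ≤ 0)]
      have h3 := neg_abs_le (prim x0 σ q)
      linarith
  · intro q hq
    have hqs : q ∈ Qs x1 x2 s T := ⟨hq.1, by linarith [hq.2.1], hq.2.2⟩
    have b1 := hin q hqs
    have hc1 := hc q (hsub hq)
    have hc2 : (σ q)⁻¹ ≤ c0⁻¹ := inv_anti₀ hc0 hc1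
    have hσ0 : 0 < σ q := hc0.trans_le hc1
    have hd : |q.1 - x0| ≤ x2 - x1 := by
      rw [abs_le]; constructor <;> linarith [hq.1.1, hq.1.2, hx0.1, hx0.2]
    have b2 : |dX Q σ q * (σ q)⁻¹ ^ 3 - prim x0 (dT Q σ) q * (σ q)⁻¹| ≤
        Λ1 * c0⁻¹ ^ 3 + Λ2 * (x2 - x1) * c0⁻¹ := by
      refine (abs_sub _ _).trans ?_
      rw [abs_mul, abs_mul, abs_of_pos (by positivity : 0 < (σ q)⁻¹ ^ 3), abs_of_pos (by positivity : 0 < (σ q)⁻¹)]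
      have b3 := hΛ1 q (hsub hq)
      have b4 : |prim x0 (dT Q σ) q| ≤ Λ2 * (x2 - x1) := (hup q hq).trans (by gcongr)
      have : 0 < x2 - x1 := by linarith
      gcongr
    unfold ff
    refine (abs_add_le _ _).trans ?_
    rw [abs_mul]
    have b5 := mul_le_mul_of_nonneg_right b2 (abs_nonneg (dX Q w q))
    have b6 : 0 ≤ (Λ1 * c0⁻¹ ^ 3 + Λ2 * (x2 - x1) * c0⁻¹) * |w q| := by
      have : 0 < x2 - x1 := by linarith
      positivity
    linarith
  · have sw1 : Sm Q (dX Q w) := sw.dd gQ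
    have sw3 : Sm Q (dT Q w) := sw.dd gQ
    have cpy : ContinuousOn (prim x0 σ) (Qs x1 x2 (T - m) T) :=
      (prim_cont h12.le hsT.le (sσ.continuousOn.mono hsubI) hx0).mono hsub
    have cpe : ContinuousOn (prim x0 (dT Q σ)) (Qs x1 x2 (T - m) T) :=
      (prim_cont h12.le hsT.le (sσ2.continuousOn.mono hsubI) hx0).mono hsub
    refine ⟨h12, sw.continuousOn.mono hsubQ, sw1.continuousOn.mono hsubQ, (Sm.dd gQ sw1).continuousOn.mono hsubQ,
      sw3.continuousOn.mono hsubQ, (Sm.dd gQ sw3).continuousOn.mono hsubQ, sσ.continuousOn.mono hsubQ,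
      sσ1.continuousOn.mono hsubQ, sσ2.continuousOn.mono hsubQ, cpy, cpe,
      fun x hx t ht => slice_x_at sw hx (htt t ht), fun x hx t ht => slice_x_at sw1 hx (htt t ht),
      fun x hx t ht => slice_x_at sw3 hx (htt t ht), fun x hx t ht => slice_x_at sσ hx (htt t ht),
      fun x hx t ht => prim_x (sσ.continuousOn.mono hsubQ) hx0 hx ht,
      fun x hx t ht => prim_x (sσ2.continuousOn.mono hsubQ) hx0 hx ht,
      fun x hx t ht => slice_t sw hx (htt t ht), ?_, fun x hx t ht => slice_t sσ hx (htt t ht),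
      fun x hx t ht => prim_t (sσ.continuousOn.mono hsubQ) (sσ2.continuousOn.mono hsubQ)
        (fun x hx t ht => slice_t sσ hx (htt t ht)) hx0 hx ht,
      fun q hq => hσ q (hsubQ hq), fun t ht => hb1 t (htt t ht), fun t ht => hb2 t (htt t ht), ?_, ?_⟩
    · intro x hx t ht
      refine (slice_t sw1 hx (htt t ht)).congr_deriv ?_
      exact (dd_comm gQ sw ⟨hx, htt t ht⟩)
    · intro t ht
      have hq : (x1, t) ∈ Qs x1 x2 (T - m) T := ⟨left_mem_Icc.2 h12.le, ht⟩
      have h1 := (hlow _ hq).2 hx0.1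
      have h2 := (le_abs_self _).trans (hup _ hq)
      have h3 := hτ t ht
      have h4 : 0 < (T - t)⁻¹ := inv_pos.2 (by linarith [ht.2])
      simp only at h1 h2
      rw [abs_of_nonpos (by linarith [hx0.1] : x1 - x0 ≤ 0)] at h2
      have h5 := mul_le_mul_of_nonneg_right h1 h4.le
      have h6 := mul_le_mul_of_nonneg_right h3 (by linarith [hx0.1] : 0 ≤ x0 - x1)
      linarith
    · intro t ht
      have hq : (x2, t) ∈ Qs x1 x2 (T - m) T := ⟨right_mem_Icc.2 h12.le, ht⟩
      have h1 := (hlow _ hq).1 hx0.2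
      have h2 := neg_le_of_abs_le (hup _ hq)
      have h3 := hτ t ht
      have h4 : 0 < (T - t)⁻¹ := inv_pos.2 (by linarith [ht.2])
      simp only at h1 h2
      rw [abs_of_nonneg (by linarith [hx0.2] : 0 ≤ x2 - x0)] at h2
      have h5 := mul_le_mul_of_nonneg_right h1 h4.le
      have h6 := mul_le_mul_of_nonneg_right h3 (by linarith [hx0.2] : 0 ≤ x2 - x0)
      linarith

set_option maxHeartbeats 800000 in
theorem U1 (h12 : x1 < x2) (hx0 : x0 ∈ Icc x1 x2) (hT : T ∈ Ioo t0 t1)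
    (sw : Sm (Qs x1 x2 t0 t1) w) (sσ : Sm (Qs x1 x2 t0 t1) σ) (hσ : ∀ q ∈ Qs x1 x2 t0 t1, 0 < σ q)
    (hb1 : ∀ t ∈ Ioo t0 t1, w (x1, t) = 0) (hb2 : ∀ t ∈ Ioo t0 t1, w (x2, t) = 0)
    {s M : ℝ} (hs : t0 < s) (hsT : s < T) (hM : 0 ≤ M)
    (hin : ∀ q ∈ Qs x1 x2 s T, |dT (Qs x1 x2 t0 t1) w q - dX (Qs x1 x2 t0 t1) (dX (Qs x1 x2 t0 t1) w) q * (σ q)⁻¹ ^ 2|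
      ≤ M * (|w q| + |dX (Qs x1 x2 t0 t1) w q|)) (hflat : ∀ k, Ord (Qs x1 x2 t0 t1) (x0, T) k w) :
    ∃ s' : ℝ, t0 < s' ∧ s' < T ∧ ∀ t ∈ Ioo s' T, ∀ x ∈ Icc x1 x2, w (x, t) = 0 := by
  obtain ⟨s', c0, Λ, M', hs', hs'T, h1, hc0, hM', hΛ0, hσb, hprim, hff, hFr⟩ :=
    build h12 hx0 hT sw sσ hσ hb1 hb2 hs hsT hM hin
  refine ⟨s', by linarith, hs'T, fun s0 hs0 z hz => ?_⟩
  by_contra hne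
  set Q := Qs x1 x2 t0 t1 with hQ
  set y := prim x0 σ with hy
  have hG0 : ∀ q, 0 < Gf T y q := fun q => Real.exp_pos _
  have hcont : ∀ t ∈ Ioo s' T, ContinuousOn (fun x => w (x, t) ^ 2 * (Gf T y (x, t) * σ (x, t))) (Icc x1 x2) := by
    intro t ht
    have a1 := hFr.cw; have a2 := hFr.cG; have a3 := hFr.cσ
    exact slice_c (F := fun q => w q ^ 2 * (Gf T y q * σ q)) (by fun_prop) ht
  have hpos : 0 < ∫ x in x1..x2, w (x, s0) ^ 2 * (Gf T y (x, s0) * σ (x, s0)) := by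
    refine intervalIntegral.integral_pos h12 (hcont s0 hs0) ?_ ⟨z, hz, ?_⟩
    · intro x hx
      have := hG0 (x, s0); have := hFr.σpos (x, s0) ⟨Ioc_subset_Icc_self hx, hs0⟩
      positivity
    · have := hG0 (z, s0); have := hFr.σpos (z, s0) ⟨hz, hs0⟩
      positivity
  obtain ⟨n, c, hc, hlow⟩ := hFr.lower hM' hff (fun q hq => (hσb q hq).2) hs0 (by linarith [hs0.1]) hpos
  set k := n + 2 with hk
  obtain ⟨C, hC, hfl⟩ := flat_window h12 (p := (x0, T)) ⟨hx0, hT⟩ sw (hflat k) hs hT.2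
  set D := C ^ 2 * Real.exp (4 * (k : ℝ) ^ 2 / c0 ^ 2) * Λ with hD
  have hD0 : 0 ≤ D := by positivity
  have hup : ∀ t ∈ Ico s0 T, (∫ x in x1..x2, w (x, t) ^ 2 * (Gf T y (x, t) * σ (x, t))) ≤
      D * (T - t) ^ (n + 1) * (x2 - x1) := by
    intro t ht
    have ht' : t ∈ Ioo s' T := ⟨hs0.1.trans_le ht.1, ht.2⟩
    have e : D * (T - t) ^ (n + 1) * (x2 - x1) = ∫ x in x1..x2, D * (T - t) ^ (n + 1) := by
      simp [mul_comm]; ring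
    rw [e]
    refine intervalIntegral.integral_mono_on h12.le ((hcont t ht').intervalIntegrable_of_Icc h12.le)
      intervalIntegrable_const (fun x hx => ?_)
    have hτ : 0 < T - t := by linarith [ht.2]
    have hτ1 : T - t ≤ 1 := by linarith [ht'.1]
    have hq : (x, t) ∈ Qs x1 x2 s' T := ⟨hx, ht'⟩
    have f1 := hfl (x, t) ⟨hx, by linarith [ht'.1], ht'.2.le⟩
    have eo : om (x0, T) (x, t) = |x - x0| + √(T - t) := by
      unfold om
      simp only
      rw [abs_sub_comm t T, abs_of_pos hτ]
    rw [eo] at f1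
    have f2 := gauss_bound hc0 hτ (abs_nonneg (x - x0)) (hprim (x, t) hq) k
    have f3 : w (x, t) ^ 2 ≤ C ^ 2 * ((|x - x0| + √(T - t)) ^ k) ^ 2 := by
      rw [← sq_abs, ← mul_pow]
      gcongr
    have f4 : Gf T y (x, t) ≤ Real.exp (-(y (x, t)) ^ 2 / (4 * (T - t))) * (T - t)⁻¹ := by
      unfold Gf
      simp only
      rw [sub_eq_add_neg, Real.exp_add]
      gcongr
      rw [← Real.exp_log (inv_pos.2 hτ), Real.log_inv]
      apply Real.exp_le_exp.2
      have := Real.log_nonpos hτ.le hτ1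
      linarith
    have f5 := (hσb (x, t) hq).2
    have f6 := hFr.σpos (x, t) hq
    calc w (x, t) ^ 2 * (Gf T y (x, t) * σ (x, t))
        ≤ (C ^ 2 * ((|x - x0| + √(T - t)) ^ k) ^ 2) *
          ((Real.exp (-(y (x, t)) ^ 2 / (4 * (T - t))) * (T - t)⁻¹) * Λ) := by
          have := hG0 (x, t)
          gcongr
      _ = (C ^ 2 * Λ * (T - t)⁻¹) * (((|x - x0| + √(T - t)) ^ k) ^ 2 * Real.exp (-(y (x, t)) ^ 2 / (4 * (T - t)))) := by
          ring
      _ ≤ (C ^ 2 * Λ * (T - t)⁻¹) * ((T - t) ^ k * Real.exp (4 * (k : ℝ) ^ 2 / c0 ^ 2)) := by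
          gcongr
      _ = D * (T - t) ^ (n + 1) := by
          rw [hD, hk, pow_succ (T - t) (n + 1)]
          field_simp
  have hlim : ∀ t ∈ Ico s0 T, c ≤ D * (x2 - x1) * (T - t) := by
    intro t ht
    have hτ : 0 < T - t := by linarith [ht.2]
    have := (hlow t ht).trans (hup t ht)
    have e : D * (T - t) ^ (n + 1) * (x2 - x1) = (D * (x2 - x1) * (T - t)) * (T - t) ^ n := by ring
    rw [e] at this
    exact le_of_mul_le_mul_right this (by positivity)
  have hA : 0 ≤ D * (x2 - x1) := mul_nonneg hD0 (by linarith)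
  set A := D * (x2 - x1)
  set τ := min (T - s0) (c / (2 * (A + 1))) with hτ
  have hτ0 : 0 < τ := lt_min (by linarith [hs0.2]) (by positivity)
  have h2 := hlim (T - τ) ⟨by linarith [min_le_left (T - s0) (c / (2 * (A + 1)))], by linarith⟩
  have h3 : τ ≤ c / (2 * (A + 1)) := min_le_right _ _
  rw [le_div_iff₀ (by positivity)] at h3
  have e : T - (T - τ) = τ := by ring
  rw [e] at h2
  nlinarith

end

end ZN


namespace ZN

section
variable {x1 x2 t0 t1 x0 T : ℝ} {a b c v φ : ℝ × ℝ → ℝ}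

theorem V_in (h12 : x1 < x2) (sa : Sm (Qs x1 x2 t0 t1) a) (sb : Sm (Qs x1 x2 t0 t1) b)
    (sc : Sm (Qs x1 x2 t0 t1) c) (sv : Sm (Qs x1 x2 t0 t1) v) (sφ : Sm (Qs x1 x2 t0 t1) φ)
    (h : PDE (Qs x1 x2 t0 t1) a b c v)
    (hφ : ∀ q ∈ Qs x1 x2 t0 t1, φ q = 0 → dX (Qs x1 x2 t0 t1) (φ * v) q ≠ 0)
    {s : ℝ} (hs : t0 < s) (hsT : s ≤ T) (hT : T < t1) :
    ∃ M, 0 ≤ M ∧ ∀ q ∈ Icc x1 x2 ×ˢ Icc s T, |dT (Qs x1 x2 t0 t1) (φ * v) q -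
      dX (Qs x1 x2 t0 t1) (dX (Qs x1 x2 t0 t1) (φ * v)) q * a q| ≤
        M * (|(φ * v) q| + |dX (Qs x1 x2 t0 t1) (φ * v) q|) := by
  set Q := Qs x1 x2 t0 t1 with hQ
  have gQ : Good Q := good_Qs h12
  have hsub : Icc x1 x2 ×ˢ Icc s T ⊆ Q :=
    prod_mono le_rfl (fun t ht => ⟨hs.trans_le ht.1, ht.2.trans_lt hT⟩)
  have sv1 := sv.dX gQ
  have sφ1 := sφ.dX gQ
  have sw : Sm Q (φ * v) := sφ.times sv
  obtain ⟨A, A0, hA⟩ := bound_window sa hs hT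
  obtain ⟨B, B0, hB⟩ := bound_window sb hs hT
  obtain ⟨C, C0, hC⟩ := bound_window sc hs hT
  obtain ⟨V, V0, hV⟩ := bound_window sv hs hT
  obtain ⟨V1, V10, hV1⟩ := bound_window sv1 hs hT
  obtain ⟨P, P0, hP⟩ := bound_window sφ hs hT
  obtain ⟨P1, P10, hP1⟩ := bound_window sφ1 hs hT
  obtain ⟨P2, P20, hP2⟩ := bound_window (sφ1.dX gQ) hs hT
  obtain ⟨P3, P30, hP3⟩ := bound_window (sφ.dT gQ) hs hT
  obtain ⟨q0, hq0, hmin⟩ := (isCompact_Icc.prod isCompact_Icc).exists_isMinOn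
    (s := Icc x1 x2 ×ˢ Icc s T) (f := fun q => |φ q| + |dX Q (φ * v) q|)
    ⟨(x1, s), left_mem_Icc.2 h12.le, left_mem_Icc.2 hsT⟩
    ((sφ.continuousOn.mono hsub).abs.add ((sw.dX gQ).continuousOn.mono hsub).abs)
  have hm0 : 0 < |φ q0| + |dX Q (φ * v) q0| := by
    by_cases h0 : φ q0 = 0
    · have := abs_pos.2 (hφ q0 (hsub hq0) h0)
      positivity
    · have := abs_pos.2 h0
      positivity
  set ε := (|φ q0| + |dX Q (φ * v) q0|) / 2 with hε
  have hε0 : 0 < ε := by positivity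
  set N := P3 + P * (B + C) + A * P2 + 2 * A * P1 with hN
  set R := (1 / ε + P1 / ε ^ 2) + (V + V1) / ε with hR
  have hN0 : 0 ≤ N := by positivity
  have hR0 : 0 ≤ R := by positivity
  refine ⟨N * R, by positivity, fun q hq => ?_⟩
  have e1 : dX Q (φ * v) q = φ q * dX Q v q + dX Q φ q * v q := by
    rw [dX_mul gQ sφ sv (hsub hq)]; rfl
  have e2 : dX Q (dX Q (φ * v)) q = φ q * dX Q (dX Q v) q + 2 * (dX Q φ q * dX Q v q) + dX Q (dX Q φ) q * v q := by
    rw [dX_congr (dX_mul gQ sφ sv) (hsub hq), dX_add gQ (sφ.times sv1) (sφ1.times sv) (hsub hq),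
      Pi.add_apply, dX_mul gQ sφ sv1 (hsub hq), dX_mul gQ sφ1 sv (hsub hq)]
    simp only [Pi.add_apply, Pi.mul_apply]; ring
  have e3 : dT Q (φ * v) q = φ q * dT Q v q + dT Q φ q * v q := by
    rw [dT_mul gQ sφ sv (hsub hq)]; rfl
  have e4 : dT Q v q = a q * dX Q (dX Q v) q + b q * dX Q v q + c q * v q := h (hsub hq)
  have e5 : dT Q (φ * v) q - dX Q (dX Q (φ * v)) q * a q =
      dT Q φ q * v q + φ q * (b q * dX Q v q + c q * v q) - a q * dX Q (dX Q φ) q * v q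
        - 2 * a q * dX Q φ q * dX Q v q := by
    rw [e2, e3, e4]; ring
  have hA := hA q hq; have hB := hB q hq; have hC := hC q hq; have hV := hV q hq; have hV1 := hV1 q hq
  have hP := hP q hq; have hP1 := hP1 q hq; have hP2 := hP2 q hq; have hP3 := hP3 q hq
  have f1 : |dT Q (φ * v) q - dX Q (dX Q (φ * v)) q * a q| ≤ N * (|v q| + |dX Q v q|) := by
    rw [e5]
    have g1 : |dT Q φ q * v q| ≤ P3 * |v q| := by rw [abs_mul]; gcongr
    have g2 : |φ q * (b q * dX Q v q + c q * v q)| ≤ P * (B * |dX Q v q| + C * |v q|) := by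
      rw [abs_mul]
      gcongr
      refine (abs_add_le _ _).trans ?_
      rw [abs_mul, abs_mul]; gcongr
    have g3 : |a q * dX Q (dX Q φ) q * v q| ≤ A * P2 * |v q| := by rw [abs_mul, abs_mul]; gcongr
    have g4 : |2 * a q * dX Q φ q * dX Q v q| ≤ 2 * A * P1 * |dX Q v q| := by
      rw [abs_mul, abs_mul, abs_mul, abs_two]; gcongr
    have k1 := abs_sub (dT Q φ q * v q + φ q * (b q * dX Q v q + c q * v q) - a q * dX Q (dX Q φ) q * v q) (2 * a q * dX Q φ q * dX Q v q)
    have k2 := abs_sub (dT Q φ q * v q + φ q * (b q * dX Q v q + c q * v q)) (a q * dX Q (dX Q φ) q * v q)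
    have k3 := abs_add_le (dT Q φ q * v q) (φ q * (b q * dX Q v q + c q * v q))
    have m1 : 0 ≤ (P3 + P * C + A * P2) * |dX Q v q| := by positivity
    have m2 : 0 ≤ (P * B + 2 * A * P1) * |v q| := by positivity
    have : N * (|v q| + |dX Q v q|) = P3 * |v q| + P * (B * |dX Q v q| + C * |v q|) + A * P2 * |v q| + 2 * A * P1 * |dX Q v q| + (P3 + P * C + A * P2) * |dX Q v q| + (P * B + 2 * A * P1) * |v q| := by
      rw [hN]; ring
    linarith
  have f2 : |v q| + |dX Q v q| ≤ R * (|(φ * v) q| + |dX Q (φ * v) q|) := by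
    have hge : 2 * ε ≤ |φ q| + |dX Q (φ * v) q| := by
      have := hmin hq
      simp only [mem_ofPred_eq] at this
      linarith
    set W := |(φ * v) q| with hW
    set W1 := |dX Q (φ * v) q| with hW1
    have hW0 : 0 ≤ W := abs_nonneg _
    have hW10 : 0 ≤ W1 := abs_nonneg _
    by_cases hc : ε ≤ |φ q|
    · have k1 : ε * |v q| ≤ W := by
        rw [hW, Pi.mul_apply, abs_mul]; gcongr
      have k2 : |v q| ≤ W / ε := by rw [le_div_iff₀ hε0]; linarith
      have k3 : ε * |dX Q v q| ≤ W1 + P1 * (W / ε) := by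
        have : φ q * dX Q v q = dX Q (φ * v) q - dX Q φ q * v q := by rw [e1]; ring
        calc ε * |dX Q v q| ≤ |φ q| * |dX Q v q| := by gcongr
          _ = |dX Q (φ * v) q - dX Q φ q * v q| := by rw [← abs_mul, this]
          _ ≤ W1 + |dX Q φ q * v q| := abs_sub _ _
          _ ≤ W1 + P1 * (W / ε) := by rw [abs_mul]; gcongr
      have k4 : |dX Q v q| ≤ (W1 + P1 * (W / ε)) / ε := by rw [le_div_iff₀ hε0]; linarith
      have : R * (W + W1) = W / ε + (W1 + P1 * (W / ε)) / ε + (P1 / ε ^ 2 * W1 + (V + V1) / ε * (W + W1)) := by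
        rw [hR]; field_simp; ring
      have m : 0 ≤ P1 / ε ^ 2 * W1 + (V + V1) / ε * (W + W1) := by positivity
      linarith
    · have k1 : ε ≤ W1 := by linarith
      have k2 : V + V1 ≤ (V + V1) / ε * W1 := by
        rw [div_mul_eq_mul_div, le_div_iff₀ hε0]; gcongr
      have m : 0 ≤ (V + V1) / ε * W + (1 / ε + P1 / ε ^ 2) * (W + W1) := by positivity
      have : R * (W + W1) = (V + V1) / ε * W1 + ((V + V1) / ε * W + (1 / ε + P1 / ε ^ 2) * (W + W1)) := by
        rw [hR]; ring
      linarith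
  calc _ ≤ N * (|v q| + |dX Q v q|) := f1
    _ ≤ N * (R * (|(φ * v) q| + |dX Q (φ * v) q|)) := by gcongr
    _ = _ := by ring

theorem V1 (h12 : x1 < x2) (sa : Sm (Qs x1 x2 t0 t1) a) (sb : Sm (Qs x1 x2 t0 t1) b)
    (sc : Sm (Qs x1 x2 t0 t1) c) (sv : Sm (Qs x1 x2 t0 t1) v) (sφ : Sm (Qs x1 x2 t0 t1) φ)
    (h : PDE (Qs x1 x2 t0 t1) a b c v) (ha : ∀ q ∈ Qs x1 x2 t0 t1, 0 < a q)
    (hφ : ∀ q ∈ Qs x1 x2 t0 t1, φ q = 0 → dX (Qs x1 x2 t0 t1) (φ * v) q ≠ 0)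
    (hb1 : ∀ t ∈ Ioo t0 t1, (φ * v) (x1, t) = 0) (hb2 : ∀ t ∈ Ioo t0 t1, (φ * v) (x2, t) = 0)
    (hx0 : x0 ∈ Icc x1 x2) (hT : T ∈ Ioo t0 t1) (h0 : ∀ k, (dX (Qs x1 x2 t0 t1))^[k] v (x0, T) = 0) :
    ∃ s' : ℝ, t0 < s' ∧ s' < T ∧ ∀ t ∈ Ioo s' T, ∀ x ∈ Icc x1 x2, (φ * v) (x, t) = 0 := by
  have gQ : Good (Qs x1 x2 t0 t1) := good_Qs h12
  have hs : t0 < (t0 + T) / 2 := by linarith [hT.1]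
  have hsT : (t0 + T) / 2 < T := by linarith [hT.1]
  obtain ⟨M, hM, hin⟩ := V_in h12 sa sb sc sv sφ h hφ hs hsT.le hT.2
  have ssq : Sm (Qs x1 x2 t0 t1) (fun q => √(a q)) := ContDiffOn.sqrt sa (fun q hq => (ha q hq).ne')
  have hsq : ∀ q ∈ Qs x1 x2 t0 t1, 0 < √(a q) := fun q hq => Real.sqrt_pos.2 (ha q hq)
  refine U1 (σ := fun q => (√(a q))⁻¹) h12 hx0 hT (sφ.times sv) (ssq.inv (fun q hq => (hsq q hq).ne'))
    (fun q hq => inv_pos.2 (hsq q hq)) hb1 hb2 hs hsT hM ?_ ?_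
  · intro q hq
    have hq' : q ∈ Icc x1 x2 ×ˢ Icc ((t0 + T) / 2) T := ⟨hq.1, Ioo_subset_Icc_self hq.2⟩
    have hqQ : q ∈ Qs x1 x2 t0 t1 := ⟨hq.1, hs.trans hq.2.1, hq.2.2.trans hT.2⟩
    have := hin q hq'
    simp only [inv_inv]
    rwa [Real.sq_sqrt (ha q hqQ).le]
  · intro k
    exact Ord.mul gQ ⟨hx0, hT⟩ sφ sv (h.ord gQ ⟨hx0, hT⟩ sa sb sc sv k (fun i _ => h0 i))

theorem second_nonpos (h12 : x1 < x2) (sv : Sm (Qs x1 x2 t0 t1) v) {x t : ℝ} (hx : x ∈ Ioo x1 x2) (ht : t ∈ Ioo t0 t1)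
    (hm : IsLocalMax (fun z => v (z, t)) x) :
    dX (Qs x1 x2 t0 t1) v (x, t) = 0 ∧ dX (Qs x1 x2 t0 t1) (dX (Qs x1 x2 t0 t1) v) (x, t) ≤ 0 := by
  have gQ : Good (Qs x1 x2 t0 t1) := good_Qs h12
  have d1 := slice_x_at sv hx ht
  have d2 := slice_x_at (sv.dX gQ) hx ht
  have z1 := hm.hasDerivAt_eq_zero d1
  refine ⟨z1, ?_⟩
  by_contra hc
  have hev : deriv (fun z => v (z, t)) =ᶠ[nhds x] (fun z => dX (Qs x1 x2 t0 t1) v (z, t)) := by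
    filter_upwards [Ioo_mem_nhds hx.1 hx.2] with z hz
    exact (slice_x_at sv hz ht).deriv
  have hdd : deriv (deriv (fun z => v (z, t))) x = dX (Qs x1 x2 t0 t1) (dX (Qs x1 x2 t0 t1) v) (x, t) := by
    rw [hev.deriv_eq, d2.deriv]
  have hmin := isLocalMin_of_deriv_deriv_pos (f := fun z => v (z, t)) (x₀ := x) (by rw [hdd]; exact not_le.1 hc)
    (by rw [d1.deriv, z1]) d1.continuousAt
  have hconst : (fun z => v (z, t)) =ᶠ[nhds x] (fun _ => v (x, t)) := by
    filter_upwards [hm, hmin] with z h1 h2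
    exact le_antisymm h1 h2
  have : deriv (fun z => v (z, t)) =ᶠ[nhds x] deriv (fun _ => v (x, t)) := hconst.deriv
  have h3 := this.deriv_eq
  rw [hdd] at h3
  simp at h3
  exact hc h3.le

theorem max_princ (h12 : x1 < x2) (sv : Sm (Qs x1 x2 t0 t1) v) (sc : Sm (Qs x1 x2 t0 t1) c)
    (h : PDE (Qs x1 x2 t0 t1) a b c v) (ha : ∀ q ∈ Qs x1 x2 t0 t1, 0 < a q)
    (hb1 : ∀ t ∈ Ioo t0 t1, v (x1, t) = 0) (hb2 : ∀ t ∈ Ioo t0 t1, v (x2, t) = 0)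
    {s T : ℝ} (hs : t0 < s) (hsT : s ≤ T) (hT : T < t1) (h0 : ∀ x ∈ Icc x1 x2, v (x, s) = 0) :
    ∀ x ∈ Icc x1 x2, v (x, T) ≤ 0 := by
  set Q := Qs x1 x2 t0 t1 with hQ
  have hsub : Icc x1 x2 ×ˢ Icc s T ⊆ Q :=
    prod_mono le_rfl (fun t ht => ⟨hs.trans_le ht.1, ht.2.trans_lt hT⟩)
  obtain ⟨C, C0, hC⟩ := bound_window sc hs hT
  set K := C + 1 with hK
  have hcont : ContinuousOn (fun q : ℝ × ℝ => v q * Real.exp (-K * q.2)) (Icc x1 x2 ×ˢ Icc s T) :=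
    (sv.continuousOn.mono hsub).mul (by fun_prop)
  obtain ⟨q, hq, hmax⟩ := (isCompact_Icc.prod isCompact_Icc).exists_isMaxOn
    (s := Icc x1 x2 ×ˢ Icc s T) ⟨(x1, s), left_mem_Icc.2 h12.le, left_mem_Icc.2 hsT⟩ hcont
  have hmax' : ∀ z ∈ Icc x1 x2 ×ˢ Icc s T, v z * Real.exp (-K * z.2) ≤ v q * Real.exp (-K * q.2) :=
    fun z hz => hmax hz
  suffices hv : v q ≤ 0 by
    intro x hx
    have h1 := hmax' (x, T) ⟨hx, right_mem_Icc.2 hsT⟩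
    have h2 : v q * Real.exp (-K * q.2) ≤ 0 := mul_nonpos_of_nonpos_of_nonneg hv (Real.exp_pos _).le
    have h3 := Real.exp_pos (-K * T)
    by_contra hc
    have := mul_pos (not_le.1 hc) h3
    simp only at h1
    linarith
  by_contra hpos
  have hpos := not_le.1 hpos
  have hqQ := hsub hq
  obtain ⟨x, t⟩ := q
  have hx1 : x ≠ x1 := by rintro rfl; rw [hb1 t hqQ.2] at hpos; exact lt_irrefl _ hpos
  have hx2 : x ≠ x2 := by rintro rfl; rw [hb2 t hqQ.2] at hpos; exact lt_irrefl _ hpos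
  have hts : t ≠ s := by rintro rfl; rw [h0 x hq.1] at hpos; exact lt_irrefl _ hpos
  have hx : x ∈ Ioo x1 x2 := ⟨lt_of_le_of_ne hq.1.1 (Ne.symm hx1), lt_of_le_of_ne hq.1.2 hx2⟩
  have ht : s < t := lt_of_le_of_ne hq.2.1 (Ne.symm hts)
  have hlm : IsLocalMax (fun z => v (z, t)) x := by
    filter_upwards [Ioo_mem_nhds hx.1 hx.2] with z hz
    have := hmax' (z, t) ⟨Ioo_subset_Icc_self hz, hq.2⟩
    exact le_of_mul_le_mul_right this (Real.exp_pos _)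
  obtain ⟨z1, z2⟩ := second_nonpos h12 sv hx hqQ.2 hlm
  have hd : HasDerivAt (fun r => v (x, r) * Real.exp (-K * r))
      (dT Q v (x, t) * Real.exp (-K * t) + v (x, t) * (Real.exp (-K * t) * (-K))) t := by
    have h2 : HasDerivAt (fun t : ℝ => Real.exp (-K * t)) (Real.exp (-K * t) * (-K)) t := by
      simpa using ((hasDerivAt_id t).const_mul (-K)).exp
    exact (slice_t sv hq.1 hqQ.2).mul h2
  have hnn : 0 ≤ dT Q v (x, t) * Real.exp (-K * t) + v (x, t) * (Real.exp (-K * t) * (-K)) := by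
    have hw := (hd.hasDerivWithinAt (s := Iio t))
    rw [hasDerivWithinAt_iff_tendsto_slope' (by simp)] at hw
    refine ge_of_tendsto hw ?_
    filter_upwards [Ioo_mem_nhdsLT ht] with r hr
    rw [slope_def_field]
    have := hmax' (x, r) ⟨hq.1, hr.1.le, hr.2.le.trans hq.2.2⟩
    exact div_nonneg_of_nonpos (by simp only at this; linarith) (by linarith [hr.2])
  have hp : dT Q v (x, t) = a (x, t) * dX Q (dX Q v) (x, t) + b (x, t) * dX Q v (x, t) + c (x, t) * v (x, t) := h hqQ
  have hav := ha _ hqQ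
  have k1 : a (x, t) * dX Q (dX Q v) (x, t) ≤ 0 := mul_nonpos_of_nonneg_of_nonpos hav.le z2
  have k2 : c (x, t) * v (x, t) ≤ C * v (x, t) := by
    have := (le_abs_self _).trans (hC _ hq)
    gcongr
  have k3 : dT Q v (x, t) ≤ C * v (x, t) := by rw [hp, z1]; linarith
  have k4 : 0 ≤ (dT Q v (x, t) - K * v (x, t)) * Real.exp (-K * t) := by linarith
  have k5 := nonneg_of_mul_nonneg_left k4 (Real.exp_pos _)
  rw [hK] at k5
  linarith

theorem U2 (h12 : x1 < x2) (sv : Sm (Qs x1 x2 t0 t1) v) (sc : Sm (Qs x1 x2 t0 t1) c)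
    (h : PDE (Qs x1 x2 t0 t1) a b c v) (ha : ∀ q ∈ Qs x1 x2 t0 t1, 0 < a q)
    (hb1 : ∀ t ∈ Ioo t0 t1, v (x1, t) = 0) (hb2 : ∀ t ∈ Ioo t0 t1, v (x2, t) = 0)
    {s T : ℝ} (hs : t0 < s) (hsT : s ≤ T) (hT : T < t1) (h0 : ∀ x ∈ Icc x1 x2, v (x, s) = 0) :
    ∀ x ∈ Icc x1 x2, v (x, T) = 0 := by
  intro x hx
  have gQ : Good (Qs x1 x2 t0 t1) := good_Qs h12
  refine le_antisymm (max_princ h12 sv sc h ha hb1 hb2 hs hsT hT h0 x hx) ?_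
  have sw : Sm (Qs x1 x2 t0 t1) ((fun _ => -1) * v) := Sm.times contDiffOn_const sv
  have hw : PDE (Qs x1 x2 t0 t1) a b c ((fun _ => -1) * v) := by
    intro q hq
    have e := h hq
    rw [dT_cmul gQ (-1) sv hq]
    simp only [Pi.add_apply, Pi.mul_apply] at e ⊢
    rw [dX_congr (dX_cmul gQ (-1) sv) hq, dX_cmul gQ (-1) (sv.dX gQ) hq, dX_cmul gQ (-1) sv hq]
    simp only [Pi.mul_apply]
    rw [e]; ring
  have := max_princ h12 sw sc hw ha (fun t ht => by simp [hb1 t ht]) (fun t ht => by simp [hb2 t ht])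
    hs hsT hT (fun x hx => by simp [h0 x hx]) x hx
  simp at this
  linarith

end

end ZN


namespace ZN

section
variable {x1 x2 t0 t1 : ℝ} {a b c v φ : ℝ × ℝ → ℝ}

theorem slice_zero (h12 : x1 < x2) {t : ℝ} (ht : t ∈ Ioo t0 t1) (k : ℕ) : ∀ {v : ℝ × ℝ → ℝ}, 
    Sm (Qs x1 x2 t0 t1) v → (∀ x ∈ Icc x1 x2, v (x, t) = 0) →
    ∀ x ∈ Icc x1 x2, (dX (Qs x1 x2 t0 t1))^[k] v (x, t) = 0 := by
  induction k with
  | zero => intro v _ h; exact h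
  | succ k ih =>
    intro v sv h
    refine ih (sv.dX (good_Qs h12)) (fun x hx => ?_)
    exact dX_eq h12 sv hx ht ((hasDerivWithinAt_const x _ (0:ℝ)).congr h (h x hx))

theorem noflat (h12 : x1 < x2) (sa : Sm (Qs x1 x2 t0 t1) a) (sb : Sm (Qs x1 x2 t0 t1) b)
    (sc : Sm (Qs x1 x2 t0 t1) c) (sv : Sm (Qs x1 x2 t0 t1) v) (sφ : Sm (Qs x1 x2 t0 t1) φ)
    (h : PDE (Qs x1 x2 t0 t1) a b c v) (ha : ∀ q ∈ Qs x1 x2 t0 t1, 0 < a q)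
    (hφ : ∀ x ∈ Icc x1 x2, ∀ t ∈ Ioo t0 t1, φ (x, t) = 0 → v (x, t) ≠ 0 ∧
      ∃ d ≠ 0, HasDerivAt (fun z => φ (z, t)) d x)
    (hb1 : ∀ t ∈ Ioo t0 t1, (φ * v) (x1, t) = 0) (hb2 : ∀ t ∈ Ioo t0 t1, (φ * v) (x2, t) = 0)
    {xe : ℝ} (hxe : xe ∈ Icc x1 x2) (he : ∀ t ∈ Ioo t0 t1, φ (xe, t) = 0)
    {p : ℝ × ℝ} (hp : p ∈ Qs x1 x2 t0 t1) (h0 : ∀ k, (dX (Qs x1 x2 t0 t1))^[k] v p = 0) : False := by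
  have gQ : Good (Qs x1 x2 t0 t1) := good_Qs h12
  have hφ' : ∀ q ∈ Qs x1 x2 t0 t1, φ q = 0 → dX (Qs x1 x2 t0 t1) (φ * v) q ≠ 0 := by
    rintro ⟨x, t⟩ hq hz
    obtain ⟨h1, d, hd, h2⟩ := hφ x hq.1 t hq.2 hz
    rw [dX_mul gQ sφ sv hq]
    simp only [Pi.add_apply, Pi.mul_apply]
    rw [hz, dX_eq h12 sφ hq.1 hq.2 h2.hasDerivWithinAt]
    simpa using ⟨hd, h1⟩
  obtain ⟨s', h1, h2, h3⟩ := V1 h12 sa sb sc sv sφ h ha hφ' hb1 hb2 hp.1 hp.2 h0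
  have ht : (s' + p.2) / 2 ∈ Ioo t0 t1 := ⟨by linarith, by linarith [hp.2.2]⟩
  have := slice_zero h12 ht 1 (sφ.times sv) (h3 _ ⟨by linarith, by linarith⟩) xe hxe
  exact hφ' (xe, (s' + p.2) / 2) ⟨hxe, ht⟩ (he _ ht) this

theorem fin_order (h12 : x1 < x2) (sa : Sm (Qs x1 x2 t0 t1) a) (sb : Sm (Qs x1 x2 t0 t1) b)
    (sc : Sm (Qs x1 x2 t0 t1) c) (sv : Sm (Qs x1 x2 t0 t1) v)
    (h : PDE (Qs x1 x2 t0 t1) a b c v) (ha : ∀ q ∈ Qs x1 x2 t0 t1, 0 < a q)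
    (hbc1 : (∀ t ∈ Ioo t0 t1, v (x1, t) = 0) ∨ (∀ t ∈ Ioo t0 t1, v (x1, t) ≠ 0))
    (hbc2 : (∀ t ∈ Ioo t0 t1, v (x2, t) = 0) ∨ (∀ t ∈ Ioo t0 t1, v (x2, t) ≠ 0))
    (hnz : ¬ ∀ x ∈ Icc x1 x2, ∀ t ∈ Ioo t0 t1, v (x, t) = 0)
    {p : ℝ × ℝ} (hp : p ∈ Qs x1 x2 t0 t1) : ∃ k, (dX (Qs x1 x2 t0 t1))^[k] v p ≠ 0 := by
  by_contra hcon
  push Not at hcon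
  have m1 : x1 ∈ Icc x1 x2 := left_mem_Icc.2 h12.le
  have m2 : x2 ∈ Icc x1 x2 := right_mem_Icc.2 h12.le
  have hd1 : ∀ x : ℝ, HasDerivAt (fun z : ℝ => z - x1) 1 x := fun x => (hasDerivAt_id x).sub_const x1
  have hd2 : ∀ x : ℝ, HasDerivAt (fun z : ℝ => x2 - z) (-1) x := fun x => by
    simpa using (hasDerivAt_id x).const_sub x2
  rcases hbc1 with b1 | b1 <;> rcases hbc2 with b2 | b2
  · have gQ : Good (Qs x1 x2 t0 t1) := good_Qs h12
    have back : ∀ q ∈ Qs x1 x2 t0 t1, (∀ k, (dX (Qs x1 x2 t0 t1))^[k] v q = 0) →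
        ∃ s' : ℝ, t0 < s' ∧ s' < q.2 ∧ ∀ t ∈ Ioo s' q.2, ∀ x ∈ Icc x1 x2, v (x, t) = 0 := by
      intro q hq hk
      obtain ⟨s', h1, h2, h3⟩ := V1 (φ := fun _ => 1) h12 sa sb sc sv contDiffOn_const h ha (by simp)
        (fun t ht => by simp [b1 t ht]) (fun t ht => by simp [b2 t ht]) hq.1 hq.2 hk
      exact ⟨s', h1, h2, fun t ht x hx => by simpa using h3 t ht x hx⟩
    set E : Set ℝ := {t | t ∈ Ioo t0 t1 ∧ ∀ x ∈ Icc x1 x2, v (x, t) = 0} with hE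
    have hopen : IsOpen E := by
      rw [isOpen_iff_mem_nhds]
      rintro t ⟨ht, hz⟩
      obtain ⟨s', h1, h2, h3⟩ := back (x1, t) ⟨m1, ht⟩ (fun k => slice_zero h12 ht k sv hz x1 m1)
      simp only at h2 h3
      refine mem_of_superset (Ioo_mem_nhds h2 ht.2) (fun r hr => ?_)
      rcases lt_or_ge r t with hrt | hrt
      · exact ⟨⟨h1.trans hr.1, hr.2⟩, h3 r ⟨hr.1, hrt⟩⟩
      · exact ⟨⟨h1.trans hr.1, hr.2⟩, U2 h12 sv sc h ha b1 b2 ht.1 hrt hr.2 hz⟩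
    have hne : (Ioo t0 t1 ∩ E).Nonempty := by
      obtain ⟨s', h1, h2, h3⟩ := back p hp hcon
      have hm : (s' + p.2) / 2 ∈ Ioo t0 t1 := ⟨by linarith, by linarith [hp.2.2]⟩
      exact ⟨(s' + p.2) / 2, hm, hm, h3 _ ⟨by linarith, by linarith⟩⟩
    have hcl : closure E ∩ Ioo t0 t1 ⊆ E := by
      rintro t ⟨htc, ht⟩
      refine ⟨ht, fun x hx => ?_⟩
      have hct : ContinuousAt (fun s => v (x, s)) t := (slice_t sv hx ht).continuousAt
      have hfr : ∃ᶠ s in nhds t, s ∈ E := mem_closure_iff_frequently.1 htc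
      by_contra hv
      have hev : ∀ᶠ s in nhds t, v (x, s) ≠ 0 := hct.eventually_ne hv
      obtain ⟨s, hs1, hs2⟩ := (hfr.and_eventually hev).exists
      exact hs2 (hs1.2 x hx)
    have := isPreconnected_Ioo.subset_of_closure_inter_subset hopen hne hcl
    exact hnz (fun x hx t ht => (this ht).2 x hx)
  · refine noflat (φ := fun q => x2 - q.1) h12 sa sb sc sv (by unfold Sm; fun_prop) h ha ?_ ?_ ?_ m2
      (fun t _ => sub_self _) hp hcon
    · intro x hx t ht hz
      have : x = x2 := by simp only at hz; linarith
      subst this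
      exact ⟨b2 t ht, -1, by norm_num, hd2 x⟩
    · intro t ht; simp [b1 t ht]
    · intro t ht; simp
  · refine noflat (φ := fun q => q.1 - x1) h12 sa sb sc sv (by unfold Sm; fun_prop) h ha ?_ ?_ ?_ m1
      (fun t _ => sub_self _) hp hcon
    · intro x hx t ht hz
      have : x = x1 := by simp only at hz; linarith
      subst this
      exact ⟨b1 t ht, 1, by norm_num, hd1 x⟩
    · intro t ht; simp
    · intro t ht; simp [b2 t ht]
  · refine noflat (φ := fun q => (q.1 - x1) * (x2 - q.1)) h12 sa sb sc sv (by unfold Sm; fun_prop) h ha ?_ ?_ ?_ m1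
      (fun t _ => by simp) hp hcon
    · intro x hx t ht hz
      have hd := (hd1 x).mul (hd2 x)
      rcases mul_eq_zero.1 hz with hz | hz
      · have : x = x1 := by simp only at hz; linarith
        subst this
        exact ⟨b1 t ht, _, by simp; linarith, hd⟩
      · have : x = x2 := by simp only at hz; linarith
        subst this
        exact ⟨b2 t ht, _, by simp; linarith, hd⟩
    · intro t ht; simp
    · intro t ht; simp

end

end ZN


namespace ZN

theorem glob {t0 t1 : ℝ} {N : ℝ → ℕ}
    (hR : ∀ s ∈ Ioo t0 t1, ∀ᶠ t in nhdsWithin s (Ici s), N t ≤ N s)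
    (hL : ∀ s ∈ Ioo t0 t1, ∀ᶠ t in nhdsWithin s (Iio s), N s ≤ N t)
    {s T : ℝ} (hs : s ∈ Ioo t0 t1) (hT : T ∈ Ioo t0 t1) (hsT : s ≤ T) : N T ≤ N s := by
  set A := {t | t ∈ Icc s T ∧ ∀ r ∈ Icc s t, N r ≤ N s} with hA
  have sA : s ∈ A := ⟨⟨le_rfl, hsT⟩, fun r hr => by rw [le_antisymm hr.2 hr.1]⟩
  have bA : BddAbove A := ⟨T, fun t ht => ht.1.2⟩
  set m := sSup A with hm
  have sm : s ≤ m := le_csSup bA sA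
  have mT : m ≤ T := csSup_le ⟨s, sA⟩ (fun t ht => ht.1.2)
  have mI : m ∈ Ioo t0 t1 := ⟨hs.1.trans_le sm, mT.trans_lt hT.2⟩
  have h1 : ∀ r, s ≤ r → r < m → N r ≤ N s := by
    intro r h1 h2
    obtain ⟨t, ht, hrt⟩ := exists_lt_of_lt_csSup ⟨s, sA⟩ h2
    exact ht.2 r ⟨h1, hrt.le⟩
  have h2 : N m ≤ N s := by
    rcases sm.eq_or_lt with h | h
    · rw [← h]
    · obtain ⟨r, hr1, hr2⟩ := ((hL m mI).and (Ioo_mem_nhdsLT h)).exists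
      exact hr1.trans (h1 r hr2.1.le hr2.2)
  rcases mT.eq_or_lt with h | h
  · rwa [← h]
  · exfalso
    obtain ⟨u, hu, hu2⟩ := (mem_nhdsGE_iff_exists_Ico_subset' h).1 (hR m mI)
    have hu' : m < u := hu
    have : min ((m + u) / 2) T ∈ A := by
      refine ⟨⟨le_min (by linarith) hsT, min_le_right _ _⟩, fun r hr => ?_⟩
      rcases lt_or_ge r m with h3 | h3
      · exact h1 r hr.1 h3
      · have : N r ≤ N m := hu2 ⟨h3, by
          have := hr.2.trans (min_le_left _ _)
          linarith⟩
        exact this.trans h2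
    have := le_csSup bA this
    rw [← hm] at this
    have := lt_min (show m < (m + u) / 2 by linarith) h
    linarith

section
variable {x1 x2 t0 t1 : ℝ} {v : ℝ × ℝ → ℝ}

abbrev ZS (x1 x2 : ℝ) (v : ℝ × ℝ → ℝ) (t : ℝ) : Set ℝ := {x ∈ Icc x1 x2 | v (x, t) = 0}

theorem ZS_fin (hc : ContinuousOn v (Qs x1 x2 t0 t1))
    (hR : ∀ p ∈ Qs x1 x2 t0 t1, ∃ δ > 0, ∀ t ∈ Ioo t0 t1, p.2 ≤ t → t < p.2 + δ → ∀ x ∈ Icc x1 x2,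
      ∀ y ∈ Icc x1 x2, |x - p.1| < δ → |y - p.1| < δ → v (x, t) = 0 → v (y, t) = 0 → x = y)
    {t : ℝ} (ht : t ∈ Ioo t0 t1) : (ZS x1 x2 v t).Finite := by
  have hcs : ContinuousOn (fun x => v (x, t)) (Icc x1 x2) :=
    hc.comp (by fun_prop) (fun x hx => ⟨hx, ht⟩)
  have hcl : IsClosed (ZS x1 x2 v t) :=
    hcs.preimage_isClosed_of_isClosed isClosed_Icc (isClosed_singleton (x := (0:ℝ)))
  have hK : IsCompact (ZS x1 x2 v t) := isCompact_Icc.of_isClosed_subset hcl (fun x hx => hx.1)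
  by_contra hinf
  obtain ⟨p, hp, hacc⟩ := (show (ZS x1 x2 v t).Infinite from hinf).exists_accPt_of_subset_isCompact hK le_rfl
  obtain ⟨δ, hδ, h⟩ := hR (p, t) ⟨hp.1, ht⟩
  rw [accPt_iff_frequently] at hacc
  obtain ⟨y, ⟨hy1, hy2⟩, hy3⟩ := (hacc.and_eventually (Metric.ball_mem_nhds p hδ)).exists
  exact hy1 (h t ht le_rfl (by simp [hδ]) y hy2.1 p hp.1 hy3 (by simpa using hδ) hy2.2 hp.2)

theorem ZS_right (hc : ContinuousOn v (Qs x1 x2 t0 t1))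
    (hR : ∀ p ∈ Qs x1 x2 t0 t1, ∃ δ > 0, ∀ t ∈ Ioo t0 t1, p.2 ≤ t → t < p.2 + δ → ∀ x ∈ Icc x1 x2,
      ∀ y ∈ Icc x1 x2, |x - p.1| < δ → |y - p.1| < δ → v (x, t) = 0 → v (y, t) = 0 → x = y)
    {s : ℝ} (hs : s ∈ Ioo t0 t1) :
    ∀ᶠ t in nhdsWithin s (Ici s), (ZS x1 x2 v t).ncard ≤ (ZS x1 x2 v s).ncard := by
  have hfin := ZS_fin hc hR hs
  choose! δ hδ h using hR
  have hcov : ∀ᶠ t in nhds s, ∀ x ∈ Icc x1 x2, (x, t) ∈ Qs x1 x2 t0 t1 → v (x, t) = 0 →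
      ∃ z ∈ ZS x1 x2 v s, |x - z| < δ (z, s) := by
    refine isCompact_Icc.eventually_forall_of_forall_eventually (fun x hx => ?_)
    by_cases hv : v (x, s) = 0
    · have h1 : ∀ᶠ q : ℝ × ℝ in nhds (s, x), |q.2 - x| < δ (x, s) := by
        have : ContinuousAt (fun q : ℝ × ℝ => |q.2 - x|) (s, x) := by fun_prop
        exact this.eventually_lt_const (by simpa using hδ (x, s) ⟨hx, hs⟩)
      filter_upwards [h1] with q hq _ _
      exact ⟨x, ⟨hx, hv⟩, hq⟩
    · have h1 : ∀ᶠ q in nhdsWithin (x, s) (Qs x1 x2 t0 t1), v q ≠ 0 :=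
        (hc (x, s) ⟨hx, hs⟩).eventually_ne hv
      have h2 := eventually_nhdsWithin_iff.1 h1
      have h3 : Tendsto (fun q : ℝ × ℝ => (q.2, q.1)) (nhds (s, x)) (nhds (x, s)) :=
        (continuous_swap.tendsto (s, x))
      filter_upwards [h3.eventually h2] with q hq h4 h5
      exact (hq h4 h5).elim
  have hd : ∀ᶠ t in nhds s, ∀ z ∈ ZS x1 x2 v s, t < s + δ (z, s) := by
    refine (eventually_all_finite hfin).2 (fun z hz => ?_)
    exact eventually_lt_nhds (by linarith [hδ (z, s) ⟨hz.1, hs⟩])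
  filter_upwards [nhdsWithin_le_nhds hcov, nhdsWithin_le_nhds hd, nhdsWithin_le_nhds (Ioo_mem_nhds hs.1 hs.2),
    self_mem_nhdsWithin] with t h1 h2 h3 h4
  have h5 : ∀ x ∈ ZS x1 x2 v t, ∃ z ∈ ZS x1 x2 v s, |x - z| < δ (z, s) :=
    fun x hx => h1 x hx.1 ⟨hx.1, h3⟩ hx.2
  choose! f hf1 hf2 using h5
  refine Set.ncard_le_ncard_of_injOn f hf1 (fun x hx y hy hxy => ?_) hfin
  refine h (f x, s) ⟨(hf1 x hx).1, hs⟩ t h3 h4 (h2 _ (hf1 x hx)) x hx.1 y hy.1 (hf2 x hx) ?_ hx.2 hy.2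
  rw [hxy]; exact hf2 y hy

theorem ZS_left (hfin : ∀ t ∈ Ioo t0 t1, (ZS x1 x2 v t).Finite)
    {s : ℝ} (hs : s ∈ Ioo t0 t1)
    (hL : ∀ z ∈ ZS x1 x2 v s, ∀ ε > 0, ∀ᶠ t in nhdsWithin s (Iio s), ∃ x ∈ ZS x1 x2 v t, |x - z| < ε) :
    (∀ᶠ t in nhdsWithin s (Iio s), (ZS x1 x2 v s).ncard ≤ (ZS x1 x2 v t).ncard) ∧
    (∀ x0 ∈ ZS x1 x2 v s, (∀ ε > 0, ∀ᶠ t in nhdsWithin s (Iio s), ∃ x ∈ ZS x1 x2 v t, ∃ y ∈ ZS x1 x2 v t,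
      |x - x0| < ε ∧ |y - x0| < ε ∧ x ≠ y) →
      ∀ᶠ t in nhdsWithin s (Iio s), (ZS x1 x2 v s).ncard < (ZS x1 x2 v t).ncard) := by
  have hfs := hfin s hs
  have hsep : ∃ ε > 0, ∀ z ∈ ZS x1 x2 v s, ∀ w ∈ ZS x1 x2 v s, z ≠ w → 2 * ε < |z - w| := by
    have : ∀ᶠ ε in nhdsWithin (0:ℝ) (Ioi 0), ∀ z ∈ ZS x1 x2 v s, ∀ w ∈ ZS x1 x2 v s, z ≠ w → 2 * ε < |z - w| := by
      refine (eventually_all_finite hfs).2 (fun z hz => (eventually_all_finite hfs).2 (fun w hw => ?_))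
      by_cases hzw : z = w
      · exact Eventually.of_forall (fun ε h => (h hzw).elim)
      · have hpos : 0 < |z - w| := abs_pos.2 (sub_ne_zero.2 hzw)
        filter_upwards [Ioo_mem_nhdsGT (show (0:ℝ) < |z - w| / 2 by linarith)] with ε hε _
        linarith [hε.2]
    obtain ⟨ε, h1, h2⟩ := (this.and self_mem_nhdsWithin).exists
    exact ⟨ε, h2, h1⟩
  obtain ⟨ε, hε, hsep⟩ := hsep
  have key : ∀ z ∈ ZS x1 x2 v s, ∀ w ∈ ZS x1 x2 v s, ∀ x, |x - z| < ε → |x - w| < ε → z = w := by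
    intro z hz w hw x h1 h2
    by_contra hne
    have := hsep z hz w hw hne
    have h3 := abs_sub_le z x w
    rw [abs_sub_comm z x] at h3
    linarith
  have hall : ∀ᶠ t in nhdsWithin s (Iio s), ∀ z ∈ ZS x1 x2 v s, ∃ x ∈ ZS x1 x2 v t, |x - z| < ε :=
    (eventually_all_finite hfs).2 (fun z hz => hL z hz ε hε)
  have hI : ∀ᶠ t in nhdsWithin s (Iio s), t ∈ Ioo t0 t1 := nhdsWithin_le_nhds (Ioo_mem_nhds hs.1 hs.2)
  constructor
  · filter_upwards [hall, hI] with t h1 h2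
    choose! g hg1 hg2 using h1
    refine Set.ncard_le_ncard_of_injOn g hg1 (fun z hz w hw hzw => ?_) (hfin t h2)
    exact key z hz w hw (g z) (hg2 z hz) (by rw [hzw]; exact hg2 w hw)
  · intro x0 hx0 h2
    filter_upwards [hall, hI, h2 ε hε] with t h1 h2 h3
    choose! g hg1 hg2 using h1
    have hinj : InjOn g (ZS x1 x2 v s) := fun z hz w hw hzw =>
      key z hz w hw (g z) (hg2 z hz) (by rw [hzw]; exact hg2 w hw)
    obtain ⟨x, hx, y, hy, hxe, hye, hxy⟩ := h3
    have : ∃ w ∈ ZS x1 x2 v t, |w - x0| < ε ∧ w ≠ g x0 := by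
      by_cases h : x = g x0
      · exact ⟨y, hy, hye, fun h' => hxy (h.trans h'.symm)⟩
      · exact ⟨x, hx, hxe, h⟩
    obtain ⟨w, hw, hwe, hwg⟩ := this
    rw [← Set.ncard_image_of_injOn hinj]
    refine Set.ncard_lt_ncard ?_ (hfin t h2)
    refine ⟨image_subset_iff.2 hg1, fun hsub => ?_⟩
    obtain ⟨z, hz, rfl⟩ := hsub hw
    exact hwg (by rw [key z hz x0 hx0 (g z) (hg2 z hz) hwe])

end

theorem PDE_of {x1 x2 t0 t1 : ℝ} {a b c v : ℝ × ℝ → ℝ} (h12 : x1 < x2) (sa : Sm (Qs x1 x2 t0 t1) a) (sb : Sm (Qs x1 x2 t0 t1) b)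
    (sc : Sm (Qs x1 x2 t0 t1) c) (sv : Sm (Qs x1 x2 t0 t1) v)
    (hpde : ∀ x ∈ Ioo x1 x2, ∀ t ∈ Ioo t0 t1,
      deriv (fun s => v (x, s)) t =
        a (x, t) * deriv (deriv (fun y => v (y, t))) x + b (x, t) * deriv (fun y => v (y, t)) x
          + c (x, t) * v (x, t)) : PDE (Qs x1 x2 t0 t1) a b c v := by
  have gQ : Good (Qs x1 x2 t0 t1) := good_Qs h12
  have hi : EqOn (dT (Qs x1 x2 t0 t1) v) (a * dX (Qs x1 x2 t0 t1) (dX (Qs x1 x2 t0 t1) v)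
      + b * dX (Qs x1 x2 t0 t1) v + c * v) (Ioo x1 x2 ×ˢ Ioo t0 t1) := by
    rintro ⟨x, t⟩ ⟨hx, ht⟩
    simp only at hx ht
    have d1 := slice_x_at sv hx ht
    have d2 := slice_x_at (sv.dX gQ) hx ht
    have hev : deriv (fun z => v (z, t)) =ᶠ[nhds x] (fun z => dX (Qs x1 x2 t0 t1) v (z, t)) := by
      filter_upwards [Ioo_mem_nhds hx.1 hx.2] with z hz
      exact (slice_x_at sv hz ht).deriv
    have := hpde x hx t ht
    rw [hev.deriv_eq, d2.deriv, d1.deriv, (slice_t sv (Ioo_subset_Icc_self hx) ht).deriv] at this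
    simpa using this
  refine hi.of_subset_closure (sv.dT gQ).continuousOn ?_ (prod_mono Ioo_subset_Icc_self le_rfl) ?_
  · exact ((sa.continuousOn.mul ((sv.dX gQ).dX gQ).continuousOn).add
      (sb.continuousOn.mul (sv.dX gQ).continuousOn)).add (sc.continuousOn.mul sv.continuousOn)
  · rw [closure_prod_eq, closure_Ioo h12.ne]
    exact prod_mono le_rfl subset_closure

theorem assembly {x1 x2 t0 t1 : ℝ} {a b c v : ℝ × ℝ → ℝ} (h12 : x1 < x2) (sa : Sm (Qs x1 x2 t0 t1) a)
    (sb : Sm (Qs x1 x2 t0 t1) b) (sc : Sm (Qs x1 x2 t0 t1) c) (sv : Sm (Qs x1 x2 t0 t1) v)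
    (h : PDE (Qs x1 x2 t0 t1) a b c v) (ha : ∀ q ∈ Qs x1 x2 t0 t1, 0 < a q)
    (hbc1 : (∀ t ∈ Ioo t0 t1, v (x1, t) = 0) ∨ (∀ t ∈ Ioo t0 t1, v (x1, t) ≠ 0))
    (hbc2 : (∀ t ∈ Ioo t0 t1, v (x2, t) = 0) ∨ (∀ t ∈ Ioo t0 t1, v (x2, t) ≠ 0))
    (hnz : ¬ ∀ x ∈ Icc x1 x2, ∀ t ∈ Ioo t0 t1, v (x, t) = 0) :
    (∀ t ∈ Ioo t0 t1, (ZS x1 x2 v t).Finite) ∧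
    (∀ s ∈ Ioo t0 t1, ∀ t ∈ Ioo t0 t1, s ≤ t → (ZS x1 x2 v t).ncard ≤ (ZS x1 x2 v s).ncard) ∧
    (∀ x0 ∈ Ioo x1 x2, ∀ tstar ∈ Ioo t0 t1,
      v (x0, tstar) = 0 → deriv (fun y => v (y, tstar)) x0 = 0 →
      ∀ s t : ℝ, t0 < s → s < tstar → tstar < t → t < t1 →
        (ZS x1 x2 v t).ncard < (ZS x1 x2 v s).ncard) := by
  have hord : ∀ p ∈ Qs x1 x2 t0 t1, ∃ k, (∀ i < k, (dX (Qs x1 x2 t0 t1))^[i] v p = 0) ∧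
      (dX (Qs x1 x2 t0 t1))^[k] v p ≠ 0 := by
    classical
    intro p hp
    have hex := fin_order h12 sa sb sc sv h ha hbc1 hbc2 hnz hp
    exact ⟨Nat.find hex, fun i hi => not_not.1 (Nat.find_min hex hi), Nat.find_spec hex⟩
  have hR : ∀ p ∈ Qs x1 x2 t0 t1, ∃ δ > 0, ∀ t ∈ Ioo t0 t1, p.2 ≤ t → t < p.2 + δ → ∀ x ∈ Icc x1 x2,
      ∀ y ∈ Icc x1 x2, |x - p.1| < δ → |y - p.1| < δ → v (x, t) = 0 → v (y, t) = 0 → x = y := by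
    intro p hp
    obtain ⟨k, h0, hA⟩ := hord p hp
    exact right_lemma h12 hp sa sb sc sv h (ha p hp) k h0 hA
  have hfin : ∀ t ∈ Ioo t0 t1, (ZS x1 x2 v t).Finite := fun t ht => ZS_fin sv.continuousOn hR ht
  have hE : ∀ s ∈ Ioo t0 t1, ∀ z, (∀ t ∈ Ioo t0 t1, v (z, t) = 0) → z ∈ Icc x1 x2 → ∀ ε > 0,
      ∀ᶠ t in nhdsWithin s (Iio s), ∃ x ∈ ZS x1 x2 v t, |x - z| < ε := by
    intro s hs z hz hzI ε hε
    filter_upwards [nhdsWithin_le_nhds (Ioo_mem_nhds hs.1 hs.2)] with t ht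
    exact ⟨z, ⟨hzI, hz t ht⟩, by simpa using hε⟩
  have hL : ∀ s ∈ Ioo t0 t1, ∀ z ∈ ZS x1 x2 v s, ∀ ε > 0, ∀ᶠ t in nhdsWithin s (Iio s),
      ∃ x ∈ ZS x1 x2 v t, |x - z| < ε := by
    intro s hs z hz ε hε
    rcases hz.1.1.eq_or_lt with h1 | h1
    · subst h1
      exact hE s hs _ (hbc1.resolve_right (fun hh => hh s hs hz.2)) hz.1 ε hε
    rcases hz.1.2.eq_or_lt with h2 | h2
    · subst h2
      exact hE s hs _ (hbc2.resolve_right (fun hh => hh s hs hz.2)) hz.1 ε hε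
    have hp : (z, s) ∈ Qs x1 x2 t0 t1 := ⟨hz.1, hs⟩
    obtain ⟨k, h0, hA⟩ := hord _ hp
    have hk : k ≠ 0 := by rintro rfl; exact hA hz.2
    filter_upwards [left_lemma h12 hp ⟨h1, h2⟩ sa sb sc sv h (ha _ hp) k h0 hA hk hε] with t ht
    obtain ⟨x, hx, y, hy, e1, e2, e3, e4, e5⟩ := ht
    exact ⟨x, ⟨hx, e3⟩, e1⟩
  have hmono : ∀ s ∈ Ioo t0 t1, ∀ t ∈ Ioo t0 t1, s ≤ t →
      (ZS x1 x2 v t).ncard ≤ (ZS x1 x2 v s).ncard := fun s hs t ht hst =>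
    glob (N := fun t => (ZS x1 x2 v t).ncard) (fun s hs => ZS_right sv.continuousOn hR hs)
      (fun s hs => (ZS_left hfin hs (hL s hs)).1) hs ht hst
  refine ⟨hfin, hmono, ?_⟩
  intro x0 hx0 ts hts hv0 hd0 s t hs hsts htst ht
  have hx0' := Ioo_subset_Icc_self hx0
  have hp : (x0, ts) ∈ Qs x1 x2 t0 t1 := ⟨hx0', hts⟩
  obtain ⟨k, h0, hA⟩ := hord _ hp
  have hk : k ≠ 0 := by rintro rfl; exact hA hv0
  have hk1 : k ≠ 1 := by
    rintro rfl
    apply hA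
    rw [(slice_x_at sv hx0 hts).deriv] at hd0
    exact hd0
  have hst := (ZS_left hfin hts (hL ts hts)).2 x0 ⟨hx0', hv0⟩ (by
    intro ε hε
    filter_upwards [left_lemma h12 hp hx0 sa sb sc sv h (ha _ hp) k h0 hA hk hε] with t ht
    obtain ⟨x, hx, y, hy, e1, e2, e3, e4, e5⟩ := ht
    exact ⟨x, ⟨hx, e3⟩, y, ⟨hy, e4⟩, e1, e2, e5 hk1⟩)
  obtain ⟨r, hr1, hr2⟩ := (hst.and (Ioo_mem_nhdsLT hsts)).exists
  have i1 := hmono ts hts t ⟨hts.1.trans htst, ht⟩ htst.le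
  have i2 := hmono s ⟨hs, hsts.trans hts.2⟩ r ⟨hs.trans hr2.1, hr2.2.trans hts.2⟩ hr2.1.le
  omega

end ZN
theorem angenent_zero_number_lemma
    (x1 x2 t0 t1 : ℝ) (hx : x1 < x2) (ht : t0 < t1)
    (a b c v : ℝ → ℝ → ℝ) (lam : ℝ) (hlam : 0 < lam)
    (ha_smooth : ContDiffOn ℝ (⊤ : ℕ∞) (fun p : ℝ × ℝ => a p.1 p.2) (Icc x1 x2 ×ˢ Ioo t0 t1))
    (hb_smooth : ContDiffOn ℝ (⊤ : ℕ∞) (fun p : ℝ × ℝ => b p.1 p.2) (Icc x1 x2 ×ˢ Ioo t0 t1))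
    (hc_smooth : ContDiffOn ℝ (⊤ : ℕ∞) (fun p : ℝ × ℝ => c p.1 p.2) (Icc x1 x2 ×ˢ Ioo t0 t1))
    (hbdd : ∃ C : ℝ, ∀ x ∈ Icc x1 x2, ∀ t ∈ Ioo t0 t1, |a x t| ≤ C ∧ |b x t| ≤ C ∧ |c x t| ≤ C)
    (hell : ∀ x ∈ Icc x1 x2, ∀ t ∈ Ioo t0 t1, lam ≤ a x t)
    (hv_smooth : ContDiffOn ℝ (⊤ : ℕ∞) (fun p : ℝ × ℝ => v p.1 p.2) (Icc x1 x2 ×ˢ Ioo t0 t1))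
    (hpde : ∀ x ∈ Ioo x1 x2, ∀ t ∈ Ioo t0 t1,
      deriv (fun s => v x s) t =
        a x t * deriv (deriv (fun y => v y t)) x + b x t * deriv (fun y => v y t) x
          + c x t * v x t)
    (hbc1 : (∀ t ∈ Ioo t0 t1, v x1 t = 0) ∨ (∀ t ∈ Ioo t0 t1, v x1 t ≠ 0))
    (hbc2 : (∀ t ∈ Ioo t0 t1, v x2 t = 0) ∨ (∀ t ∈ Ioo t0 t1, v x2 t ≠ 0))
    (hnz : ¬ ∀ x ∈ Icc x1 x2, ∀ t ∈ Ioo t0 t1, v x t = 0) :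
    (∀ t ∈ Ioo t0 t1, {x ∈ Icc x1 x2 | v x t = 0}.Finite) ∧
    (∀ s ∈ Ioo t0 t1, ∀ t ∈ Ioo t0 t1, s ≤ t →
      {x ∈ Icc x1 x2 | v x t = 0}.ncard ≤ {x ∈ Icc x1 x2 | v x s = 0}.ncard) ∧
    (∀ x0 ∈ Ioo x1 x2, ∀ tstar ∈ Ioo t0 t1,
      v x0 tstar = 0 → deriv (fun y => v y tstar) x0 = 0 →
      ∀ s t : ℝ, t0 < s → s < tstar → tstar < t → t < t1 →
        {x ∈ Icc x1 x2 | v x t = 0}.ncard < {x ∈ Icc x1 x2 | v x s = 0}.ncard) := by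
  exact ZN.assembly (a := fun p => a p.1 p.2) (b := fun p => b p.1 p.2) (c := fun p => c p.1 p.2)
    (v := fun p => v p.1 p.2) hx ha_smooth hb_smooth hc_smooth hv_smooth
    (ZN.PDE_of hx ha_smooth hb_smooth hc_smooth hv_smooth hpde)
    (fun q hq => lt_of_lt_of_le hlam (hell q.1 hq.1 q.2 hq.2)) hbc1 hbc2 hnz
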